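/- Let b>1 and B<3 be fixed constants and let m:ℕ→ℕ satisfy bn ≤ m(n) ≤ Bn for all sufficiently large n. Let H_1,…,H_l be fixed connected planar graphs, with each H_i having vertex set {1,…,|H_i|}, and let t be a fixed positive integer. Then there exist constants ε>0 and N such that for all n ≥ N, the probability that, simultaneously for every i ≤ l, the graph P_{n,m(n)} has at least t components admitting an order-preserving isomorphism to H_i is at least ε. -/

import Mathlib

/-!
The proof compares all planar graphs with `n` vertices and `m` edges to the good ones through a
switching argument. From a planar graph `G` a bounded set `F` of vertices is freed, that is, `G` is
reduced to a planar graph `G0` in which `F` is isolated, losing `j` edges. On `F` the required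
components are then built, together with a connected blob using up exactly the remaining edges,
which is attached by one edge to an arbitrary vertex `y ∉ F` (`build`). The result `G'` is good
and has `m` edges again. Counting the triples `(G, F, y)` mapped to one `G'` gives the theorem.

*Reductions.* Deleting a few vertices of high degree from `G` leaves a planar graph of bounded
degree, which splits into connected pieces of bounded size with few edges between them
(`hyperfinite`; the pieces are obtained by repeated merging along heavy connections). A piece with
many vertices is contracted to one of its vertices. A small piece attached only to high-degree
vertices is deleted; by planarity, only few such pieces can have pairwise distinct attachment sets
(`twin_lemma`), so that almost all have an untouched twin with the same attachment set. In both
cases the place where the piece has to be restored can be described in `G0` by one vertex: the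
vertex of contraction, or a vertex of the twin. Almost all of `G` is covered by such pieces
(`exists_dec`).

*Density.* Since `m / n` is bounded away from `1` and `3`, linearly many pieces of one type lose
more than `1 + η` edges per freed vertex, and linearly many of one type lose less than `3 - η`.
Combining `r` pieces of these two types in a suitable ratio (`mix_types`) gives, for a bounded `r`,
at least a constant times `n ^ r` sets `F` with `1 + η ≤ j / |F| ≤ 3 - η` (`select`). For large
`|F|` this leaves room for the new components, because connected planar blobs with a dominating
vertex exist for every number of edges up to nearly three times the number of vertices
(`exists_blob`).

*Recovery.* Each `G` yields at least a constant times `n ^ (r + 1)` triples. Given `G'`, the hub of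
the blob is one of `n` vertices, `y` is one of its boundedly many neighbours, and `F` consists of
the rest of the closed neighbourhood of the hub and of the new components. New components are
built only for those `H i` of which `G` has boundedly many copies, so that there are boundedly many
choices for them too. Then `G0` is `G'` with `F` isolated, and the `r` places where the pieces have
to be restored are chosen in `n ^ r` ways; the change there is one of boundedly many. Thus at most
a constant times `n ^ (r + 1)` triples lead to the same `G'` (`count_r`).

Planarity enters only through the excluded minors: a planar graph stays planar under contraction of
connected sets (`quot_planar`) and under joining by a bridge (`glue_planar`), and has a vertex of
bounded degree (`planar_degenerate`).
-/

open SimpleGraph Filter Asymptotics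

/-- `H` is a minor of `G`: to each vertex of `H` we can assign a connected nonempty
branch set in `G`, pairwise disjoint, with an edge of `G` between the branch sets of
any two adjacent vertices of `H`. -/
def IsMinor {α β : Type*} (H : SimpleGraph α) (G : SimpleGraph β) : Prop :=
  ∃ f : α → Set β,
    (∀ a, (G.induce (f a)).Connected) ∧
    (∀ a b, a ≠ b → Disjoint (f a) (f b)) ∧
    (∀ a b, H.Adj a b → ∃ u ∈ f a, ∃ v ∈ f b, G.Adj u v)

/-- A graph is planar iff it has neither a `K₅`-minor nor a `K₃,₃`-minor
(Wagner's theorem). -/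
def IsPlanar {V : Type*} (G : SimpleGraph V) : Prop :=
  ¬ IsMinor (completeGraph (Fin 5)) G ∧
    ¬ IsMinor (completeBipartiteGraph (Fin 3) (Fin 3)) G

/-- The number of edges of a graph. -/
noncomputable def edgeCount {V : Type*} (G : SimpleGraph V) : ℕ :=
  G.edgeSet.ncard

/-- The degree of a vertex. -/
noncomputable def vertexDegree {V : Type*} (G : SimpleGraph V) (v : V) : ℕ :=
  (G.neighborSet v).ncard

/-- `𝒫(n,m)`: the set of labelled planar graphs on `{1,…,n}` with exactly `m` edges. -/
def planarSet (n m : ℕ) : Set (SimpleGraph (Fin n)) :=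
  {G | IsPlanar G ∧ edgeCount G = m}

/-- The probability that the uniform random planar graph `P_{n,m}` satisfies `P`. -/
noncomputable def planarProb (n m : ℕ) (P : SimpleGraph (Fin n) → Prop) : ℝ :=
  ({G ∈ planarSet n m | P G}.ncard : ℝ) / ((planarSet n m).ncard : ℝ)

/-- The number of pendant edges (edges incident to a vertex of degree 1). -/
noncomputable def pendantCount {V : Type*} (G : SimpleGraph V) : ℕ :=
  {e ∈ G.edgeSet | ∃ v ∈ e, vertexDegree G v = 1}.ncard

/-- The set of addable non-edges of `G`: non-edges whose addition keeps the graph planar. -/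
def addableSet {V : Type*} (G : SimpleGraph V) : Set (Sym2 V) :=
  {e | ¬ e.IsDiag ∧ e ∉ G.edgeSet ∧ IsPlanar (G ⊔ SimpleGraph.fromEdgeSet {e})}

/-- `add(n,m)`: the minimum number of addable non-edges over all graphs in `𝒫(n,m)`. -/
noncomputable def addMin (n m : ℕ) : ℕ :=
  sInf ((fun G => (addableSet G).ncard) '' planarSet n m)

/-- `W` carries an induced order-preserving copy of `H` in `G`: the increasing bijection
from `{1,…,h}` to `W` is an isomorphism between `H` and the induced subgraph `G[W]`. -/
def IsOrderCopy {h n : ℕ} (H : SimpleGraph (Fin h)) (G : SimpleGraph (Fin n))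
    (W : Finset (Fin n)) : Prop :=
  ∃ hW : W.card = h,
    ∀ i j : Fin h,
      H.Adj i j ↔ G.Adj ((W.orderIsoOfFin hW i : Fin n)) ((W.orderIsoOfFin hW j : Fin n))

/-- `W` is the vertex set of a connected component of `G`. -/
def IsComponent {V : Type*} (G : SimpleGraph V) (W : Finset V) : Prop :=
  (G.induce (W : Set V)).Connected ∧ ∀ v ∈ W, ∀ u, G.Adj v u → u ∈ W

/-- The number of components of `G` admitting an order-preserving isomorphism to `H`. -/
noncomputable def numOrderComponents {h n : ℕ} (H : SimpleGraph (Fin h))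
    (G : SimpleGraph (Fin n)) : ℕ :=
  {W : Finset (Fin n) | IsComponent G W ∧ IsOrderCopy H G W}.ncard

/-- The number of distinct cycles (as subgraphs, identified with their edge sets) of
length at most `k` in `S`. -/
noncomputable def cycleCountLe {V : Type*} (S : SimpleGraph V) (k : ℕ) : ℕ :=
  {E : Set (Sym2 V) | ∃ (v : V) (c : S.Walk v v),
    c.IsCycle ∧ c.length ≤ k ∧ {e | e ∈ c.edges} = E}.ncard

namespace PlanarSwitch

open scoped Classical

open Relation

/-! ### Connectivity of vertex sets and minors -/

theorem rtg_mono {V : Type*} {r p : V → V → Prop} {a b : V} (h : ReflTransGen r a b)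
    (hrp : ∀ a b, r a b → p a b) : ReflTransGen p a b :=
  h.lift id hrp

theorem rtg_symm {V : Type*} {r : V → V → Prop} (hr : ∀ a b, r a b → r b a) {a b : V}
    (h : ReflTransGen r a b) : ReflTransGen r b a := by
  induction h with
  | refl => exact ReflTransGen.refl
  | tail _ hbc ih => exact ReflTransGen.head (hr _ _ hbc) ih

/-- `S` induces a preconnected subgraph of `G` (possibly empty), phrased through chains of
edges staying inside `S`. -/
def Conn {V : Type*} (G : SimpleGraph V) (S : Set V) : Prop :=
  ∀ u ∈ S, ∀ w ∈ S, ReflTransGen (fun x y => G.Adj x y ∧ x ∈ S ∧ y ∈ S) u w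

theorem conn_iff {V : Type*} {G : SimpleGraph V} {S : Set V} :
    (G.induce S).Connected ↔ S.Nonempty ∧ Conn G S := by
  rw [connected_iff]
  constructor
  · rintro ⟨hp, ⟨⟨x, hx⟩⟩⟩
    refine ⟨⟨x, hx⟩, fun u hu w hw => ?_⟩
    have := (reachable_iff_reflTransGen _ _).1 (hp ⟨u, hu⟩ ⟨w, hw⟩)
    exact this.lift (fun z : S => (z : V)) (fun a b hab => ⟨hab, a.2, b.2⟩)
  · rintro ⟨⟨x, hx⟩, hc⟩
    refine ⟨?_, ⟨⟨x, hx⟩⟩⟩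
    rintro ⟨u, hu⟩ ⟨w, hw⟩
    rw [reachable_iff_reflTransGen]
    have h := hc u hu w hw
    clear hx
    induction h with
    | refl => exact ReflTransGen.refl
    | tail hab hbc ih => exact (ih hbc.2.1).tail (by exact hbc.1)

theorem Conn.exists_adj {V : Type*} {G : SimpleGraph V} {S : Set V} (h : Conn G S)
    {u w : V} (hu : u ∈ S) (hw : w ∈ S) (hne : u ≠ w) : ∃ z ∈ S, G.Adj u z := by
  rcases ReflTransGen.cases_head (h u hu w hw) with h | ⟨c, hc, -⟩
  · exact absurd h hne
  · exact ⟨c, hc.2.2, hc.1⟩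

theorem conn_singleton {V : Type*} (G : SimpleGraph V) (x : V) : Conn G {x} := by
  rintro u rfl w rfl; exact ReflTransGen.refl

theorem conn_empty {V : Type*} (G : SimpleGraph V) : Conn G ∅ := by
  rintro u ⟨⟩

theorem Conn.mono {V : Type*} {G G' : SimpleGraph V} {S : Set V} (h : Conn G S)
    (hle : ∀ u ∈ S, ∀ w ∈ S, G.Adj u w → G'.Adj u w) : Conn G' S := by
  intro u hu w hw
  exact rtg_mono (h u hu w hw) (fun a b hab => ⟨hle a hab.2.1 b hab.2.2 hab.1, hab.2⟩)

/-- A connected set that meets both sides of a cut contains an edge across the cut. -/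
theorem Conn.exists_cross {V : Type*} {G : SimpleGraph V} {S : Set V} (h : Conn G S)
    {A : Set V} {u w : V} (hu : u ∈ S) (hw : w ∈ S) (huA : u ∈ A) (hwA : w ∉ A) :
    ∃ x ∈ S, ∃ y ∈ S, x ∈ A ∧ y ∉ A ∧ G.Adj x y := by
  have := h u hu w hw
  induction this with
  | refl => exact absurd huA hwA
  | @tail b c hab hbc ih =>
    by_cases hb : b ∈ A
    · exact ⟨b, hbc.2.1, c, hbc.2.2, hb, hwA, hbc.1⟩
    · exact ih hbc.2.1 hb

/-- Pull-back of connected sets along a partial map `ρ` with connected fibres (`ρ` describes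
contractions and deletions). -/
theorem Conn.lift {V W : Type*} {G : SimpleGraph V} {G' : SimpleGraph W} (ρ : V → Option W)
    {S : Set W} (hS : Conn G' S)
    (hfib : ∀ a, Conn G {u | ρ u = some a})
    (hadj : ∀ a b, G'.Adj a b → ∃ u w, ρ u = some a ∧ ρ w = some b ∧ G.Adj u w) :
    Conn G {u | ∃ c ∈ S, ρ u = some c} := by
  rintro u ⟨a, ha, hua⟩ w ⟨c, hc, hwc⟩
  have h := hS a ha c hc
  have fib : ∀ c ∈ S, ∀ x y, ρ x = some c → ρ y = some c →
      ReflTransGen (fun x y => G.Adj x y ∧ x ∈ {u | ∃ c ∈ S, ρ u = some c} ∧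
        y ∈ {u | ∃ c ∈ S, ρ u = some c}) x y := by
    intro c hc x y hx hy
    exact rtg_mono (hfib c x hx y hy) (fun p q hpq => ⟨hpq.1, ⟨c, hc, hpq.2.1⟩, ⟨c, hc, hpq.2.2⟩⟩)
  induction h generalizing w with
  | refl => exact fib a ha _ _ hua hwc
  | @tail b c hab hbc ih =>
    obtain ⟨x, y, hx, hy, hxy⟩ := hadj b c hbc.1
    refine ((ih x hbc.2.1 hx).tail ⟨hxy, ⟨b, hbc.2.1, hx⟩, ⟨c, hbc.2.2, hy⟩⟩).trans ?_
    exact fib c hc _ _ hy hwc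

theorem isMinor_iff {α β : Type*} {H : SimpleGraph α} {G : SimpleGraph β} :
    IsMinor H G ↔ ∃ f : α → Set β, (∀ a, (f a).Nonempty) ∧ (∀ a, Conn G (f a)) ∧
      (∀ a b, a ≠ b → Disjoint (f a) (f b)) ∧
      (∀ a b, H.Adj a b → ∃ u ∈ f a, ∃ v ∈ f b, G.Adj u v) := by
  unfold IsMinor
  simp only [conn_iff, forall_and, and_assoc]

/-- Minors lift along partial maps with connected fibres. -/
theorem isMinor_lift {α V W : Type*} {M : SimpleGraph α} (hM : ∀ a, ∃ b, M.Adj a b)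
    {G : SimpleGraph V} {G' : SimpleGraph W} (ρ : V → Option W)
    (hfib : ∀ a, Conn G {u | ρ u = some a})
    (hadj : ∀ a b, G'.Adj a b → ∃ u w, ρ u = some a ∧ ρ w = some b ∧ G.Adj u w)
    (h : IsMinor M G') : IsMinor M G := by
  rw [isMinor_iff] at h ⊢
  obtain ⟨f, hne, hc, hd, he⟩ := h
  refine ⟨fun a => {u | ∃ c ∈ f a, ρ u = some c}, ?_, fun a => (hc a).lift ρ hfib hadj, ?_, ?_⟩
  · intro a
    obtain ⟨b, hb⟩ := hM a
    obtain ⟨x, hx, y, hy, hxy⟩ := he a b hb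
    obtain ⟨u, w, hu, -, -⟩ := hadj x y hxy
    exact ⟨u, x, hx, hu⟩
  · intro a b hab
    rw [Set.disjoint_left]
    rintro u ⟨c, hc, huc⟩ ⟨c', hc', huc'⟩
    rw [huc] at huc'
    cases huc'
    exact Set.disjoint_left.1 (hd a b hab) hc hc'
  · intro a b hab
    obtain ⟨x, hx, y, hy, hxy⟩ := he a b hab
    obtain ⟨u, w, hu, hw, huw⟩ := hadj x y hxy
    exact ⟨u, ⟨x, hx, hu⟩, w, ⟨y, hy, hw⟩, huw⟩

theorem K5_no_isolated : ∀ a : Fin 5, ∃ b, (completeGraph (Fin 5)).Adj a b := by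
  intro a
  simp only [completeGraph, top_adj]
  revert a; decide

theorem K33_no_isolated :
    ∀ a : Fin 3 ⊕ Fin 3, ∃ b, (completeBipartiteGraph (Fin 3) (Fin 3)).Adj a b := by
  simp only [completeBipartiteGraph_adj]
  decide

theorem planar_lift {V W : Type*}
    {G : SimpleGraph V} {G' : SimpleGraph W} (ρ : V → Option W)
    (hfib : ∀ a, Conn G {u | ρ u = some a})
    (hadj : ∀ a b, G'.Adj a b → ∃ u w, ρ u = some a ∧ ρ w = some b ∧ G.Adj u w)
    (h : IsPlanar G) : IsPlanar G' :=
  ⟨fun h' => h.1 (isMinor_lift K5_no_isolated ρ hfib hadj h'),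
   fun h' => h.2 (isMinor_lift K33_no_isolated ρ hfib hadj h')⟩

theorem planar_mono {V : Type*} {G G' : SimpleGraph V} (hle : G' ≤ G) (h : IsPlanar G) :
    IsPlanar G' := by
  refine planar_lift (fun u => some u) ?_ ?_ h
  · intro a
    have : {u : V | some u = some a} = {a} := by ext; simp
    rw [this]; exact conn_singleton _ _
  · intro a b hab
    exact ⟨a, b, rfl, rfl, hle hab⟩

/-- If `G` is planar, so is its image under an injection (with isolated vertices added). -/
theorem planar_map {V W : Type*} {G : SimpleGraph V} (e : V ↪ W) (h : IsPlanar G) :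
    IsPlanar (G.map e) := by
  refine planar_lift (fun u => some (e u)) ?_ ?_ h
  · intro a u hu w hw
    have : u = w := by
      simp only [Set.mem_ofPred_eq, Option.some.injEq] at hu hw
      exact e.injective (hu.trans hw.symm)
    subst this; exact ReflTransGen.refl
  · intro a b hab
    obtain ⟨u, w, huw, rfl, rfl⟩ := (map_adj _ _ _ _).1 hab
    exact ⟨u, w, rfl, rfl, huw⟩

/-- The graph obtained from `G` by contracting the fibres of the partial map `ρ` (the fibre of
`a` becomes the vertex `a`) and deleting all vertices where `ρ` is undefined.  Labels outside
the range of `ρ` stay as isolated vertices. -/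
def quot {V W : Type*} (G : SimpleGraph V) (ρ : V → Option W) : SimpleGraph W where
  Adj a b := a ≠ b ∧ ∃ u w, ρ u = some a ∧ ρ w = some b ∧ G.Adj u w
  symm := ⟨fun _ _ ⟨hne, u, w, hu, hw, h⟩ => ⟨hne.symm, w, u, hw, hu, h.symm⟩⟩
  loopless := ⟨fun _ h => h.1 rfl⟩

theorem quot_planar {V W : Type*} {G : SimpleGraph V} (ρ : V → Option W)
    (hfib : ∀ a, Conn G {u | ρ u = some a}) (h : IsPlanar G) : IsPlanar (quot G ρ) :=
  planar_lift ρ hfib (fun _ _ hab => hab.2) h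

/-- The union of connected sets is connected if each is joined by an edge to, or meets, a fixed
connected set. -/
theorem conn_union {V : Type*} {G : SimpleGraph V} {S T : Set V} (hS : Conn G S) (hT : Conn G T)
    {x y : V} (hx : x ∈ S) (hy : y ∈ T) (h : G.Adj x y) : Conn G (S ∪ T) := by
  have hS' : ∀ u ∈ S, ∀ w ∈ S,
      ReflTransGen (fun x y => G.Adj x y ∧ x ∈ S ∪ T ∧ y ∈ S ∪ T) u w := fun u hu w hw =>
    rtg_mono (hS u hu w hw) fun a b hab => ⟨hab.1, Or.inl hab.2.1, Or.inl hab.2.2⟩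
  have hT' : ∀ u ∈ T, ∀ w ∈ T,
      ReflTransGen (fun x y => G.Adj x y ∧ x ∈ S ∪ T ∧ y ∈ S ∪ T) u w := fun u hu w hw =>
    rtg_mono (hT u hu w hw) fun a b hab => ⟨hab.1, Or.inr hab.2.1, Or.inr hab.2.2⟩
  rintro u (hu | hu) w (hw | hw)
  · exact hS' u hu w hw
  · exact ((hS' u hu x hx).tail ⟨h, Or.inl hx, Or.inr hy⟩).trans (hT' y hy w hw)
  · exact ((hT' u hu y hy).tail ⟨h.symm, Or.inr hy, Or.inl hx⟩).trans (hS' x hx w hw)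
  · exact hT' u hu w hw

/-- A union of connected sets that all attach to one connected set is connected. -/
theorem conn_star {V ι : Type*} {G : SimpleGraph V} {S : Set V} (hS : Conn G S) (J : Set ι)
    (T : ι → Set V) (hT : ∀ i ∈ J, Conn G (T i))
    (hadj : ∀ i ∈ J, ∃ x ∈ S, ∃ y ∈ T i, G.Adj x y) : Conn G (S ∪ ⋃ i ∈ J, T i) := by
  rcases S.eq_empty_or_nonempty with rfl | ⟨s, hs⟩
  · have : ∀ i ∈ J, False := fun i hi => by obtain ⟨x, hx, -⟩ := hadj i hi; exact hx
    rintro u (hu | hu)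
    · exact hu.elim
    · simp only [Set.mem_iUnion] at hu
      obtain ⟨i, hi, -⟩ := hu
      exact (this i hi).elim
  have key : ∀ u ∈ (S ∪ ⋃ i ∈ J, T i), ReflTransGen (fun x y => G.Adj x y ∧
      x ∈ (S ∪ ⋃ i ∈ J, T i) ∧ y ∈ (S ∪ ⋃ i ∈ J, T i)) s u := by
    rintro u (hu | hu)
    · exact rtg_mono (hS s hs u hu) fun a b hab => ⟨hab.1, Or.inl hab.2.1, Or.inl hab.2.2⟩
    · simp only [Set.mem_iUnion] at hu
      obtain ⟨i, hi, hui⟩ := hu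
      obtain ⟨x, hx, y, hy, hxy⟩ := hadj i hi
      refine rtg_mono (conn_union hS (hT i hi) hx hy hxy s (Or.inl hs) u (Or.inr hui)) ?_
      have hsub : S ∪ T i ⊆ (S ∪ ⋃ i ∈ J, T i) :=
        Set.union_subset_union_right _ (Set.subset_biUnion_of_mem (u := fun i => T i) hi)
      exact fun a b hab => ⟨hab.1, hsub hab.2.1, hsub hab.2.2⟩
  intro u hu w hw
  refine ReflTransGen.trans ?_ (key w hw)
  have := key u hu
  refine rtg_symm ?_ this
  exact fun a b hab => ⟨hab.1.symm, hab.2.2, hab.2.1⟩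

/-! ### Gluing two planar graphs by a bridge -/

/-- The subgraph of `G` consisting of the edges inside `A`, on the same vertex set. -/
def restr {V : Type*} (G : SimpleGraph V) (A : Set V) : SimpleGraph V where
  Adj u v := G.Adj u v ∧ u ∈ A ∧ v ∈ A
  symm := ⟨fun _ _ h => ⟨h.1.symm, h.2.2, h.2.1⟩⟩
  loopless := ⟨fun _ h => h.1.ne rfl⟩

theorem restr_le {V : Type*} (G : SimpleGraph V) (A : Set V) : restr G A ≤ G :=
  fun _ _ h => h.1

/-- A model of `M` all of whose branch sets meet the side `A` of a bridge lives in `A`. -/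
theorem glue_side {α V : Type*} {M : SimpleGraph α} {G : SimpleGraph V} {A : Set V} {x y : V}
    (hcross : ∀ u ∈ A, ∀ v ∉ A, G.Adj u v → u = x ∧ v = y)
    (f : α → Set V) (hc : ∀ a, Conn G (f a)) (hd : ∀ a b, a ≠ b → Disjoint (f a) (f b))
    (he : ∀ a b, M.Adj a b → ∃ u ∈ f a, ∃ v ∈ f b, G.Adj u v)
    (hmeet : ∀ a, (f a ∩ A).Nonempty) : IsMinor M (restr G A) := by
  have hx : ∀ a, ∀ v ∈ f a, v ∉ A → x ∈ f a ∧ x ∈ A := by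
    intro a v hv hvA
    obtain ⟨u, hu, huA⟩ := hmeet a
    obtain ⟨p, hp, q, hq, hpA, hqA, hpq⟩ := (hc a).exists_cross hu hv huA hvA
    obtain ⟨rfl, rfl⟩ := hcross p hpA q hqA hpq
    exact ⟨hp, hpA⟩
  rw [isMinor_iff]
  refine ⟨fun a => f a ∩ A, hmeet, ?_, ?_, ?_⟩
  · rintro a u ⟨hu, huA⟩ w ⟨hw, hwA⟩
    have h := hc a u hu w hw
    -- retract the far side of the bridge onto its endpoint `x`
    let ψ : V → V := fun z => if z ∈ A then z else x
    have key : ReflTransGen (fun p q => (restr G A).Adj p q ∧ p ∈ f a ∩ A ∧ q ∈ f a ∩ A)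
        (ψ u) (ψ w) := by
      clear hwA hw
      induction h with
      | refl => exact ReflTransGen.refl
      | @tail p q _ hpq ih =>
        by_cases hp : p ∈ A <;> by_cases hq : q ∈ A
        · refine ih.tail ?_
          simp only [ψ, hp, hq, if_true]
          exact ⟨⟨hpq.1, hp, hq⟩, ⟨hpq.2.1, hp⟩, ⟨hpq.2.2, hq⟩⟩
        · have : ψ q = ψ p := by
            simp only [ψ, hp, hq, if_true, if_false]
            exact (hcross p hp q hq hpq.1).1.symm
          rwa [this]
        · have : ψ q = ψ p := by
            simp only [ψ, hp, hq, if_true, if_false]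
            exact (hcross q hq p hp hpq.1.symm).1
          rwa [this]
        · have : ψ q = ψ p := by simp only [ψ, hp, hq, if_false]
          rwa [this]
    simpa only [ψ, huA, hwA, if_true] using key
  · intro a b hab
    exact (hd a b hab).mono Set.inter_subset_left Set.inter_subset_left
  · intro a b hab
    obtain ⟨u, hu, v, hv, huv⟩ := he a b hab
    have hdis := Set.disjoint_left.1 (hd a b hab.ne)
    by_cases huA : u ∈ A <;> by_cases hvA : v ∈ A
    · exact ⟨u, ⟨hu, huA⟩, v, ⟨hv, hvA⟩, huv, huA, hvA⟩
    · obtain ⟨rfl, -⟩ := hcross u huA v hvA huv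
      exact absurd (hx b v hv hvA).1 (hdis hu)
    · obtain ⟨rfl, -⟩ := hcross v hvA u huA huv.symm
      exact absurd hv (hdis (hx a u hu huA).1)
    · exact absurd (hx b v hv hvA).1 (hdis (hx a u hu huA).1)

theorem glue_minor {α V : Type*} {M : SimpleGraph α}
    (hN1 : ∀ c, ∀ S : Set α, (∃ a, a ≠ c ∧ a ∈ S) → (∃ b, b ≠ c ∧ b ∉ S) →
      ∃ a b, a ≠ c ∧ b ≠ c ∧ a ∈ S ∧ b ∉ S ∧ M.Adj a b)
    (hN2 : ∀ S : Set α, (∃ a, a ∈ S) → (∃ b, b ∉ S) →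
      ∃ a b a' b', a ∈ S ∧ b ∉ S ∧ a' ∈ S ∧ b' ∉ S ∧ M.Adj a b ∧ M.Adj a' b' ∧
        (a ≠ a' ∨ b ≠ b'))
    {G : SimpleGraph V} {A : Set V} {x y : V}
    (hcross : ∀ u ∈ A, ∀ v ∉ A, G.Adj u v → u = x ∧ v = y)
    (h1 : ¬ IsMinor M (restr G A)) (h2 : ¬ IsMinor M (restr G Aᶜ)) : ¬ IsMinor M G := by
  intro h
  rw [isMinor_iff] at h
  obtain ⟨f, hne, hc, hd, he⟩ := h
  by_cases hA : ∀ a, (f a ∩ A).Nonempty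
  · exact h1 (glue_side hcross f hc hd he hA)
  by_cases hB : ∀ a, (f a ∩ Aᶜ).Nonempty
  · refine h2 (glue_side (x := y) (y := x) ?_ f hc hd he hB)
    intro u hu v hv huv
    exact (hcross v (by simpa using hv) u hu huv.symm).symm
  push Not at hA hB
  obtain ⟨a0, ha0⟩ := hA
  obtain ⟨b0, hb0⟩ := hB
  have hinA : ∀ a, f a ∩ Aᶜ = ∅ → ∀ u ∈ f a, u ∈ A := by
    intro a ha u hu
    by_contra hn
    exact Set.notMem_empty u (ha ▸ ⟨hu, hn⟩)
  have hoffA : ∀ a, f a ∩ A = ∅ → ∀ u ∈ f a, u ∉ A := by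
    intro a ha u hu hn
    exact Set.notMem_empty u (ha ▸ ⟨hu, hn⟩)
  have hedge : ∀ a b, f a ∩ Aᶜ = ∅ → f b ∩ A = ∅ → M.Adj a b → x ∈ f a ∧ y ∈ f b := by
    intro a b ha hb hab
    obtain ⟨u, hu, v, hv, huv⟩ := he a b hab
    obtain ⟨rfl, rfl⟩ := hcross u (hinA a ha u hu) v (hoffA b hb v hv) huv
    exact ⟨hu, hv⟩
  have huniq : ∀ a b z, z ∈ f a → z ∈ f b → a = b := by
    intro a b z hz hz'
    by_contra hab
    exact Set.disjoint_left.1 (hd a b hab) hz hz'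
  have hab0 : a0 ≠ b0 := by
    rintro rfl
    obtain ⟨u, hu⟩ := hne a0
    exact hoffA a0 ha0 u hu (hinA a0 hb0 u hu)
  by_cases hcr : ∃ c, (f c ∩ A).Nonempty ∧ (f c ∩ Aᶜ).Nonempty
  · obtain ⟨c, ⟨u, hu, huA⟩, ⟨v, hv, hvA⟩⟩ := hcr
    have hxc : ∀ c, (f c ∩ A).Nonempty → (f c ∩ Aᶜ).Nonempty → x ∈ f c := by
      rintro c ⟨u, hu, huA⟩ ⟨v, hv, hvA⟩
      obtain ⟨p, hp, q, hq, hpA, hqA, hpq⟩ := (hc c).exists_cross hu hv huA hvA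
      obtain ⟨rfl, rfl⟩ := hcross p hpA q hqA hpq
      exact hp
    have hxc0 := hxc c ⟨u, hu, huA⟩ ⟨v, hv, hvA⟩
    obtain ⟨a, b, hac, hbc, haS, hbS, hab⟩ := hN1 c {a | f a ∩ Aᶜ = ∅}
      ⟨b0, by rintro rfl; exact Set.notMem_empty v (hb0 ▸ ⟨hv, hvA⟩), hb0⟩
      ⟨a0, by rintro rfl; exact Set.notMem_empty u (ha0 ▸ ⟨hu, huA⟩), by
        intro h
        obtain ⟨u, hu⟩ := hne a0
        exact hoffA a0 ha0 u hu (hinA a0 h u hu)⟩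
    have hbA : f b ∩ A = ∅ := by
      by_contra hn
      exact hbc (huniq b c x (hxc b (Set.nonempty_iff_ne_empty.2 hn)
        (Set.nonempty_iff_ne_empty.2 hbS)) hxc0)
    exact hac (huniq a c x (hedge a b haS hbA hab).1 hxc0)
  · push Not at hcr
    obtain ⟨a, b, a', b', ha, hb, ha', hb', hab, hab', hne'⟩ := hN2 {a | f a ∩ Aᶜ = ∅}
      ⟨b0, hb0⟩ ⟨a0, by
        intro h
        obtain ⟨u, hu⟩ := hne a0
        exact hoffA a0 ha0 u hu (hinA a0 h u hu)⟩
    have hoff : ∀ b, b ∉ {a | f a ∩ Aᶜ = ∅} → f b ∩ A = ∅ := by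
      intro b hb
      by_contra hn
      exact hb (hcr b (Set.nonempty_iff_ne_empty.2 hn))
    have e1 := hedge a b ha (hoff b hb) hab
    have e2 := hedge a' b' ha' (hoff b' hb') hab'
    rcases hne' with h | h
    · exact h (huniq _ _ _ e1.1 e2.1)
    · exact h (huniq _ _ _ e1.2 e2.2)

theorem K5_N1 : ∀ c, ∀ S : Set (Fin 5), (∃ a, a ≠ c ∧ a ∈ S) → (∃ b, b ≠ c ∧ b ∉ S) →
      ∃ a b, a ≠ c ∧ b ≠ c ∧ a ∈ S ∧ b ∉ S ∧ (completeGraph (Fin 5)).Adj a b := by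
  rintro c S ⟨a, ha, haS⟩ ⟨b, hb, hbS⟩
  refine ⟨a, b, ha, hb, haS, hbS, ?_⟩
  rw [completeGraph, top_adj]
  rintro rfl; exact hbS haS

theorem K5_N2 : ∀ S : Set (Fin 5), (∃ a, a ∈ S) → (∃ b, b ∉ S) →
      ∃ a b a' b', a ∈ S ∧ b ∉ S ∧ a' ∈ S ∧ b' ∉ S ∧ (completeGraph (Fin 5)).Adj a b ∧
        (completeGraph (Fin 5)).Adj a' b' ∧ (a ≠ a' ∨ b ≠ b') := by
  rintro S ⟨a, haS⟩ ⟨b, hbS⟩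
  have hadj : ∀ a ∈ S, ∀ b ∉ S, (completeGraph (Fin 5)).Adj a b := by
    intro a ha b hb
    rw [completeGraph, top_adj]
    rintro rfl; exact hb ha
  obtain ⟨c, hca, hcb⟩ : ∃ c : Fin 5, c ≠ a ∧ c ≠ b := by
    clear haS hbS; revert a b; decide
  by_cases hc : c ∈ S
  · exact ⟨a, b, c, b, haS, hbS, hc, hbS, hadj _ haS _ hbS, hadj _ hc _ hbS, Or.inl hca.symm⟩
  · exact ⟨a, b, a, c, haS, hbS, haS, hc, hadj _ haS _ hbS, hadj _ haS _ hc, Or.inr hcb.symm⟩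

/-- Deleting one vertex leaves `K₃,₃` connected. -/
theorem K33_N1 : ∀ c, ∀ S : Set (Fin 3 ⊕ Fin 3), (∃ a, a ≠ c ∧ a ∈ S) → (∃ b, b ≠ c ∧ b ∉ S) →
      ∃ a b, a ≠ c ∧ b ≠ c ∧ a ∈ S ∧ b ∉ S ∧
        (completeBipartiteGraph (Fin 3) (Fin 3)).Adj a b := by
  rintro c S ⟨a, ha, haS⟩ ⟨b, hb, hbS⟩
  by_contra hcon
  push Not at hcon
  have hstep : ∀ p q : Fin 3 ⊕ Fin 3, p ≠ c → q ≠ c → p ∈ S →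
      (completeBipartiteGraph (Fin 3) (Fin 3)).Adj p q → q ∈ S := by
    intro p q hp hq hpS hpq
    by_contra hqS
    exact hcon p q hp hq hpS hqS hpq
  have : ∀ a b c : Fin 3 ⊕ Fin 3, a ≠ c → b ≠ c → a = b ∨
      ((a.isLeft && b.isRight) || (a.isRight && b.isLeft)) = true ∨ ∃ d, d ≠ c ∧
      ((a.isLeft && d.isRight) || (a.isRight && d.isLeft)) = true ∧
      ((d.isLeft && b.isRight) || (d.isRight && b.isLeft)) = true := by decide
  simp only [Bool.or_eq_true, Bool.and_eq_true, ← completeBipartiteGraph_adj] at this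
  rcases this a b c ha hb with rfl | h | ⟨d, hd, h1, h2⟩
  · exact hbS haS
  · exact hbS (hstep a b ha hb haS h)
  · exact hbS (hstep d b hd hb (hstep a d ha hd haS h1) h2)

theorem K33_N2 : ∀ S : Set (Fin 3 ⊕ Fin 3), (∃ a, a ∈ S) → (∃ b, b ∉ S) →
      ∃ a b a' b', a ∈ S ∧ b ∉ S ∧ a' ∈ S ∧ b' ∉ S ∧
        (completeBipartiteGraph (Fin 3) (Fin 3)).Adj a b ∧
        (completeBipartiteGraph (Fin 3) (Fin 3)).Adj a' b' ∧ (a ≠ a' ∨ b ≠ b') := by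
  rintro S ⟨p, hpS⟩ ⟨q, hqS⟩
  -- one crossing edge comes from connectivity, a second one after deleting an endpoint
  have hpq : p ≠ q := by rintro rfl; exact hqS hpS
  obtain ⟨c, hc1, hc2⟩ : ∃ c : Fin 3 ⊕ Fin 3, c ≠ p ∧ c ≠ q := by
    clear hpS hqS hpq; revert p q; decide
  obtain ⟨a, b, ha, hb, haS, hbS, hab⟩ := K33_N1 c S ⟨p, hc1.symm, hpS⟩ ⟨q, hc2.symm, hqS⟩
  by_cases h1 : ∃ p', p' ≠ a ∧ p' ∈ S
  · obtain ⟨a', b', ha', hb', haS', hbS', hab'⟩ := K33_N1 a S h1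
      ⟨b, by rintro rfl; exact hbS haS, hbS⟩
    exact ⟨a, b, a', b', haS, hbS, haS', hbS', hab, hab', Or.inl ha'.symm⟩
  · have hex : ∃ q', q' ≠ b ∧ q' ∉ S := by
      push Not at h1
      refine ⟨c, hb.symm, h1 c ha.symm⟩
    obtain ⟨a', b', ha', hb', haS', hbS', hab'⟩ := K33_N1 b S
      ⟨a, by rintro rfl; exact hbS haS, haS⟩ hex
    exact ⟨a, b, a', b', haS, hbS, haS', hbS', hab, hab', Or.inr hb'.symm⟩

/-- A graph is planar if it is obtained from two planar graphs on complementary vertex sets by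
adding at most one edge `xy` between them. -/
theorem glue_planar {V : Type*} {G : SimpleGraph V} {A : Set V} {x y : V}
    (hcross : ∀ u ∈ A, ∀ v ∉ A, G.Adj u v → u = x ∧ v = y)
    (h1 : IsPlanar (restr G A)) (h2 : IsPlanar (restr G Aᶜ)) : IsPlanar G :=
  ⟨glue_minor K5_N1 K5_N2 hcross h1.1 h2.1, glue_minor K33_N1 K33_N2 hcross h1.2 h2.2⟩

/-! ### Sparsity of planar graphs -/

/-- The neighbourhood of `u` as a finset. -/
noncomputable def nb {n : ℕ} (G : SimpleGraph (Fin n)) (u : Fin n) : Finset (Fin n) :=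
  {v | G.Adj u v}

theorem mem_nb {n : ℕ} {G : SimpleGraph (Fin n)} {u v : Fin n} : v ∈ nb G u ↔ G.Adj u v := by
  simp [nb]

/-- The number of darts (ordered adjacent pairs) of `G`, i.e. twice the number of edges. -/
noncomputable def dc {n : ℕ} (G : SimpleGraph (Fin n)) : ℕ := ∑ u, (nb G u).card

theorem dc_eq {n : ℕ} (G : SimpleGraph (Fin n)) : dc G = 2 * edgeCount G := by
  unfold edgeCount
  rw [Set.ncard_eq_toFinset_card']
  have h := G.sum_degrees_eq_twice_card_edges
  unfold SimpleGraph.edgeFinset at h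
  rw [← h]
  unfold dc
  refine Finset.sum_congr rfl fun u _ => ?_
  rw [← card_neighborFinset_eq_degree]
  congr 1
  ext v; simp [mem_nb]

/-- `G` has a complete minor on `r` branch sets, all contained in `A`. -/
def KM {n : ℕ} (G : SimpleGraph (Fin n)) (A : Finset (Fin n)) (r : ℕ) : Prop :=
  ∃ f : Fin r → Set (Fin n), (∀ a, (f a).Nonempty) ∧ (∀ a, ∀ u ∈ f a, u ∈ A) ∧
    (∀ a, Conn G (f a)) ∧
    (∀ a b, a ≠ b → Disjoint (f a) (f b)) ∧ ∀ a b, a ≠ b → ∃ u ∈ f a, ∃ v ∈ f b, G.Adj u v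

theorem nb_contract {n : ℕ} (G : SimpleGraph (Fin n)) (u v : Fin n) (huv : G.Adj u v) :
    dc G ≤ dc (quot G fun w => some (if w = u then v else w)) +
      2 * (nb G u ∩ nb G v).card + 2 := by
  set G' := quot G fun w => some (if w = u then v else w) with hG'
  have hne := huv.ne
  have hother : ∀ w, w ≠ u → w ≠ v → (nb G w).card ≤ (nb G' w).card +
      (if w ∈ nb G u ∩ nb G v then 1 else 0) := by
    intro w hwu hwv
    have hsub : (nb G w).erase u ⊆ nb G' w := by
      intro z hz
      rw [Finset.mem_erase, mem_nb] at hz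
      rw [mem_nb]
      exact ⟨hz.2.ne, w, z, by simp [hwu], by simp [hz.1], hz.2⟩
    by_cases hu : u ∈ nb G w
    · by_cases hv : v ∈ nb G w
      · rw [if_pos (by
          rw [Finset.mem_inter, mem_nb, mem_nb]; rw [mem_nb] at hu hv; exact ⟨hu.symm, hv.symm⟩)]
        have := Finset.card_le_card hsub
        rw [Finset.card_erase_of_mem hu] at this
        omega
      · have hv' : v ∈ nb G' w := by
          rw [mem_nb]
          rw [mem_nb] at hu
          exact ⟨hwv, w, u, by simp [hwu], by simp, hu⟩
        have h2 : insert v ((nb G w).erase u) ⊆ nb G' w :=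
          Finset.insert_subset hv' hsub
        have := Finset.card_le_card h2
        rw [Finset.card_insert_of_notMem (by simp [hv]), Finset.card_erase_of_mem hu] at this
        omega
    · rw [Finset.erase_eq_of_notMem hu] at hsub
      have := Finset.card_le_card hsub
      omega
  have hpair : (nb G u).card + (nb G v).card ≤
      (nb G' v).card + (nb G u ∩ nb G v).card + 2 := by
    have hsub : (nb G u).erase v ∪ (nb G v).erase u ⊆ nb G' v := by
      intro z hz
      rw [Finset.mem_union, Finset.mem_erase, Finset.mem_erase, mem_nb, mem_nb] at hz
      rw [mem_nb]
      rcases hz with hz | hz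
      · exact ⟨hz.1.symm, u, z, by simp, by simp [hz.2.ne.symm], hz.2⟩
      · exact ⟨hz.2.ne, v, z, by simp, by simp [hz.1], hz.2⟩
    have h1 := Finset.card_le_card hsub
    have h2 := Finset.card_union_add_card_inter ((nb G u).erase v) ((nb G v).erase u)
    have h3 : ((nb G u).erase v ∩ (nb G v).erase u).card ≤ (nb G u ∩ nb G v).card :=
      Finset.card_le_card (Finset.inter_subset_inter (Finset.erase_subset _ _)
        (Finset.erase_subset _ _))
    rw [Finset.card_erase_of_mem (mem_nb.2 huv), Finset.card_erase_of_mem (mem_nb.2 huv.symm)] at h2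
    omega
  have split : ∀ f : Fin n → ℕ, ∑ w, f w = f u + f v + ∑ w ∈ (Finset.univ.erase u).erase v, f w := by
    intro f
    rw [← Finset.add_sum_erase Finset.univ f (Finset.mem_univ u),
      ← Finset.add_sum_erase (Finset.univ.erase u) f (a := v) (by simp [hne.symm])]
    ring
  unfold dc
  rw [split, split (fun w => (nb G' w).card)]
  have hs : ∑ w ∈ (Finset.univ.erase u).erase v, (nb G w).card ≤
      ∑ w ∈ (Finset.univ.erase u).erase v, (nb G' w).card + (nb G u ∩ nb G v).card := by
    calc _ ≤ ∑ w ∈ (Finset.univ.erase u).erase v, ((nb G' w).card +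
      (if w ∈ nb G u ∩ nb G v then 1 else 0)) := by
          refine Finset.sum_le_sum fun w hw => ?_
          simp only [Finset.mem_erase] at hw
          exact hother w hw.2.1 hw.1
      _ ≤ _ := by
          rw [Finset.sum_add_distrib]
          gcongr
          rw [← Finset.sum_filter, Finset.sum_const, smul_eq_mul, mul_one]
          refine Finset.card_le_card ?_
          intro w hw
          exact (Finset.mem_filter.1 hw).2
  omega

theorem fib_contract {n : ℕ} (G : SimpleGraph (Fin n)) (u v : Fin n) (huv : G.Adj u v)
    (a : Fin n) : Conn G {w | (some (if w = u then v else w) : Option (Fin n)) = some a} := by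
  by_cases ha : a = v
  · subst ha
    have : {w | (some (if w = u then a else w) : Option (Fin n)) = some a} = {u} ∪ {a} := by
      ext w
      simp only [Option.some.injEq, Set.mem_ofPred_eq, Set.mem_union, Set.mem_singleton_iff]
      split_ifs with h <;> simp [h]
    rw [this]
    exact conn_union (conn_singleton _ _) (conn_singleton _ _) rfl rfl huv
  · intro x hx y hy
    have : x = y := by
      simp only [Option.some.injEq, Set.mem_ofPred_eq] at hx hy
      split_ifs at hx hy with h1 h2 h3
      · exact absurd hx.symm ha
      · exact absurd hx.symm ha
      · exact absurd hy.symm ha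
      · exact hx.trans hy.symm
    subst this
    exact ReflTransGen.refl

/-- Mader's argument: linearly many edges force a complete minor. -/
theorem mader {n : ℕ} (r : ℕ) : ∀ (k : ℕ) (G : SimpleGraph (Fin n)) (A : Finset (Fin n)),
    A.card = k → A.Nonempty → (∀ u v, G.Adj u v → u ∈ A) → 2 ^ r * A.card ≤ dc G →
    KM G A (r + 1) := by
  induction r with
  | zero =>
    rintro k G A - ⟨x, hx⟩ - -
    refine ⟨fun _ => {x}, fun _ => ⟨x, rfl⟩, ?_, fun _ => conn_singleton _ _, ?_, ?_⟩
    · rintro _ u rfl; exact hx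
    · intro a b hab; exact absurd (Fin.ext (by omega)) hab
    · intro a b hab; exact absurd (Fin.ext (by omega)) hab
  | succ r ihr =>
    intro k
    induction k with
    | zero =>
      intro G A hk hA
      rw [Finset.card_eq_zero] at hk
      exact absurd hA (by simp [hk])
    | succ k ihk =>
      intro G A hk hA hGA hdc
      by_cases hex : ∃ u v, G.Adj u v ∧ (nb G u ∩ nb G v).card + 1 ≤ 2 ^ r
      · obtain ⟨u, v, huv, hcom⟩ := hex
        have hcon := nb_contract G u v huv
        have hu : u ∈ A := hGA u v huv
        have hv : v ∈ A := hGA v u huv.symm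
        have hcard := Finset.card_erase_of_mem hu
        obtain ⟨f, hne, hfA, hfc, hfd, hfe⟩ := ihk
          (quot G fun w => some (if w = u then v else w)) (A.erase u) (by omega)
          ⟨v, by simp [huv.ne.symm, hv]⟩ (by
            rintro p q ⟨hpq, p', q', hp', hq', hadj⟩
            simp only [Option.some.injEq] at hp'
            split_ifs at hp' with h
            · subst hp'; simp [huv.ne.symm, hv]
            · subst hp'; simp [h, hGA p' q' hadj]) (by
            have : A.card = (A.erase u).card + 1 := by omega
            rw [this, mul_add, pow_succ] at hdc
            rw [pow_succ]
            omega)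
        refine ⟨fun a => {w | ∃ c ∈ f a, (some (if w = u then v else w) : Option (Fin n)) = some c},
          ?_, ?_, fun a => (hfc a).lift _ (fib_contract G u v huv) fun _ _ h => h.2, ?_, ?_⟩
        · intro a
          obtain ⟨x, hx⟩ := hne a
          have := hfA a x hx
          simp only [Finset.mem_erase] at this
          exact ⟨x, x, hx, by simp [this.1]⟩
        · rintro a w ⟨c, hc, hw⟩
          have := hfA a c hc
          simp only [Finset.mem_erase] at this
          simp only [Option.some.injEq] at hw
          split_ifs at hw with h
          · rw [h]; exact hu
          · rw [hw]; exact this.2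
        · intro a b hab
          rw [Set.disjoint_left]
          rintro w ⟨c, hc, hwc⟩ ⟨d, hd, hwd⟩
          rw [hwc] at hwd
          cases hwd
          exact Set.disjoint_left.1 (hfd a b hab) hc hd
        · intro a b hab
          obtain ⟨x, hx, y, hy, hxy⟩ := hfe a b hab
          obtain ⟨-, p, q, hp, hq, hpq⟩ := hxy
          exact ⟨p, ⟨x, hx, hp⟩, q, ⟨y, hy, hq⟩, hpq⟩
      · push Not at hex
        have hpos : 0 < dc G := lt_of_lt_of_le (by rw [hk]; positivity) hdc
        obtain ⟨v, -, hv⟩ := Finset.exists_ne_zero_of_sum_ne_zero hpos.ne'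
        have hNv : (nb G v).Nonempty := Finset.card_ne_zero.1 hv
        obtain ⟨f, hne, hfA, hfc, hfd, hfe⟩ := ihr (nb G v).card
          (restr G (nb G v)) (nb G v) rfl hNv (fun p q h => by simpa using h.2.1) (by
            rw [mul_comm, ← smul_eq_mul, ← Finset.sum_const]
            unfold dc
            refine le_trans ?_ (Finset.sum_le_sum_of_subset (Finset.subset_univ (nb G v)))
            refine Finset.sum_le_sum fun w hw => ?_
            have := hex v w (mem_nb.1 hw)
            have h2 : nb G v ∩ nb G w ⊆ nb (restr G (nb G v)) w := by
              intro z hz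
              rw [Finset.mem_inter, mem_nb (u := w)] at hz
              rw [mem_nb]
              exact ⟨hz.2, hw, hz.1⟩
            have := Finset.card_le_card h2
            omega)
        have hfv : ∀ a, v ∉ f a := by
          intro a ha
          exact (mem_nb.1 (hfA a v ha)).ne rfl
        refine ⟨Fin.cons {v} f, ?_, ?_, ?_, ?_, ?_⟩
        · intro a
          refine Fin.cases ?_ (fun i => ?_) a
          · simp
          · simpa using hne i
        · intro a
          refine Fin.cases ?_ (fun i => ?_) a
          · obtain ⟨z, hz⟩ := hNv
            simp only [Fin.cons_zero, Set.mem_singleton_iff, forall_eq]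
            exact hGA v z (mem_nb.1 hz)
          · intro u hu
            simp only [Fin.cons_succ] at hu
            exact hGA u v (mem_nb.1 (hfA i u hu)).symm
        · intro a
          refine Fin.cases ?_ (fun i => ?_) a
          · exact conn_singleton _ _
          · simpa using (hfc i).mono fun _ _ _ _ h => h.1
        · intro a b
          refine Fin.cases ?_ (fun i => ?_) a <;> refine Fin.cases ?_ (fun j => ?_) b
          · simp
          · intro _; simpa using hfv j
          · intro _; simpa using hfv i
          · intro hij
            simpa using hfd i j (by simpa using hij)
        · intro a b
          refine Fin.cases ?_ (fun i => ?_) a <;> refine Fin.cases ?_ (fun j => ?_) b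
          · simp
          · intro _
            obtain ⟨u, hu⟩ := hne j
            exact ⟨v, by simp, u, by simpa using hu, mem_nb.1 (hfA j u hu)⟩
          · intro _
            obtain ⟨u, hu⟩ := hne i
            exact ⟨u, by simpa using hu, v, by simp, (mem_nb.1 (hfA i u hu)).symm⟩
          · intro hij
            obtain ⟨x, hx, y, hy, hxy⟩ := hfe i j (by simpa using hij)
            exact ⟨x, by simpa using hx, y, by simpa using hy, hxy.1⟩

theorem planar_dc_le {n : ℕ} {G : SimpleGraph (Fin n)} (h : IsPlanar G) (A : Finset (Fin n))
    (hGA : ∀ u v, G.Adj u v → u ∈ A) : dc G ≤ 16 * A.card := by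
  by_contra hlt
  push Not at hlt
  have hA : A.Nonempty := by
    rw [Finset.nonempty_iff_ne_empty]
    rintro rfl
    have hpos : 0 < dc G := by omega
    obtain ⟨v, -, hv⟩ := Finset.exists_ne_zero_of_sum_ne_zero hpos.ne'
    obtain ⟨w, hw⟩ := Finset.card_ne_zero.1 hv
    simpa using hGA v w (mem_nb.1 hw)
  obtain ⟨f, hne, -, hfc, hfd, hfe⟩ := mader 4 A.card G A rfl hA hGA (by norm_num; omega)
  apply h.1
  rw [isMinor_iff]
  exact ⟨f, hne, hfc, hfd, fun a b hab => hfe a b hab.ne⟩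

/-- Every nonempty vertex set of a planar graph contains a vertex with at most 16 neighbours
inside the set. -/
theorem planar_degenerate {n : ℕ} {G : SimpleGraph (Fin n)} (h : IsPlanar G)
    (A : Finset (Fin n)) (hA : A.Nonempty) : ∃ v ∈ A, (nb G v ∩ A).card ≤ 16 := by
  by_contra hcon
  push Not at hcon
  have h1 := planar_dc_le (planar_mono (restr_le G (A : Set (Fin n))) h) A
    (fun u v huv => by simpa using huv.2.1)
  have h2 : ∑ v ∈ A, 17 ≤ dc (restr G (A : Set (Fin n))) := by
    unfold dc
    refine le_trans ?_ (Finset.sum_le_sum_of_subset (Finset.subset_univ A))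
    refine Finset.sum_le_sum fun w hw => ?_
    refine le_trans (hcon w hw) (Finset.card_le_card ?_)
    intro z hz
    rw [Finset.mem_inter, mem_nb] at hz
    rw [mem_nb]
    exact ⟨hz.1, by simpa using hw, by simpa using hz.2⟩
  rw [Finset.sum_const, smul_eq_mul] at h2
  have := hA.card_pos
  omega

/-! ### Planar graphs with a dominating vertex and a prescribed number of edges -/

/-- The join of an edge `{0, 1}` with a path on the remaining vertices; a (nearly) maximal planar
graph in which vertex `0` is adjacent to everything. -/
def full (σ : ℕ) : SimpleGraph (Fin σ) where
  Adj a b := a ≠ b ∧ (a.val ≤ 1 ∨ b.val ≤ 1 ∨ a.val + 1 = b.val ∨ b.val + 1 = a.val)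
  symm := ⟨fun _ _ h => ⟨h.1.symm, by tauto⟩⟩
  loopless := ⟨fun _ h => h.1 rfl⟩

theorem full_convex {σ : ℕ} {S : Set (Fin σ)} (hS : Conn (full σ) S) (hhub : ∀ u ∈ S, 1 < u.val)
    {x y z : Fin σ} (hx : x ∈ S) (hy : y ∈ S) (hxz : x < z) (hzy : z < y) : z ∈ S := by
  obtain ⟨p, hp, q, hq, hpz, hqz, hpq⟩ := hS.exists_cross (A := {v | v < z}) hx hy hxz
    (by simpa using hzy.le)
  have h1 := hhub p hp
  have h2 := hhub q hq
  obtain ⟨-, h⟩ := hpq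
  have hpz' : p.val < z.val := hpz
  have hqz' : z.val ≤ q.val := by simpa using hqz
  have : q = z := Fin.ext (by omega)
  rwa [← this]

/-- Among branch sets avoiding the two hubs, ordered along the path, only consecutive ones can
be joined by an edge. -/
theorem full_chain {α : Type*} [Fintype α] {σ : ℕ} (f : α → Set (Fin σ))
    (hne : ∀ a, (f a).Nonempty) (hc : ∀ a, Conn (full σ) (f a))
    (hd : ∀ a b, a ≠ b → Disjoint (f a) (f b)) (r : ℕ) (hr : r + 2 ≤ Fintype.card α) :
    ∃ g : Fin r → α, Function.Injective g ∧ ∀ i j : Fin r, i.val + 2 ≤ j.val →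
      ¬ ∃ u ∈ f (g i), ∃ v ∈ f (g j), (full σ).Adj u v := by
  let R : Finset α := {a | ∀ u ∈ f a, 1 < u.val}
  have huniq : ∀ a b z, z ∈ f a → z ∈ f b → a = b := by
    intro a b z hz hz'
    by_contra hab
    exact Set.disjoint_left.1 (hd a b hab) hz hz'
  have hR : r ≤ R.card := by
    have hk : ∀ k : ℕ, (Finset.univ.filter fun a => ∃ u ∈ f a, u.val = k).card ≤ 1 := by
      intro k
      rw [Finset.card_le_one]
      intro a ha b hb
      obtain ⟨u, hu, hu'⟩ := (Finset.mem_filter.1 ha).2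
      obtain ⟨v, hv, hv'⟩ := (Finset.mem_filter.1 hb).2
      have : u = v := Fin.ext (by omega)
      exact huniq a b u hu (this ▸ hv)
    have hsub : (Finset.univ : Finset α) ⊆ R ∪ ((Finset.univ.filter fun a => ∃ u ∈ f a, u.val = 0) ∪
        (Finset.univ.filter fun a => ∃ u ∈ f a, u.val = 1)) := by
      intro a _
      by_cases ha : a ∈ R
      · simp [ha]
      · simp only [R, Finset.mem_filter, Finset.mem_univ, true_and] at ha
        push Not at ha
        obtain ⟨u, hu, hu'⟩ := ha
        simp only [Finset.mem_union, Finset.mem_filter, Finset.mem_univ, true_and]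
        right
        rcases Nat.le_one_iff_eq_zero_or_eq_one.1 hu' with h | h
        · exact Or.inl ⟨u, hu, h⟩
        · exact Or.inr ⟨u, hu, h⟩
    have h1 := Finset.card_le_card hsub
    have h2 := Finset.card_union_le R ((Finset.univ.filter fun a => ∃ u ∈ f a, u.val = 0) ∪
        (Finset.univ.filter fun a => ∃ u ∈ f a, u.val = 1))
    have h3 := Finset.card_union_le (Finset.univ.filter fun a => ∃ u ∈ f a, u.val = 0)
        (Finset.univ.filter fun a => ∃ u ∈ f a, u.val = 1)
    have h4 := hk 0
    have h5 := hk 1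
    rw [Finset.card_univ] at h1
    omega
  choose p hp using hne
  have pinj : Function.Injective p := fun a b hab => huniq a b (p a) (hp a) (hab ▸ hp b)
  obtain ⟨R', hR'R, hR'⟩ := Finset.exists_subset_card_eq hR
  have hP : (R'.image p).card = r := by rw [Finset.card_image_of_injective _ pinj, hR']
  let e := (R'.image p).orderEmbOfFin hP
  have he : ∀ i, ∃ a ∈ R', p a = e i := fun i =>
    Finset.mem_image.1 (Finset.orderEmbOfFin_mem _ hP i)
  choose g hg hge using he
  have hgR : ∀ i, ∀ u ∈ f (g i), 1 < u.val := fun i =>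
    (Finset.mem_filter.1 (hR'R (hg i))).2
  have hlt : ∀ i j, i < j → p (g i) < p (g j) := by
    intro i j hij
    rw [hge, hge]; exact e.strictMono hij
  -- disjoint order-convex sets are ordered like their representatives
  have hord : ∀ i j, i < j → ∀ u ∈ f (g i), ∀ w ∈ f (g j), u < w := by
    intro i j hij u hu w hw
    have hpp := hlt i j hij
    have hne' : g i ≠ g j := fun h => by rw [h] at hpp; exact lt_irrefl _ hpp
    have hdis := Set.disjoint_left.1 (hd _ _ hne')
    by_contra hcon
    push Not at hcon
    have hwu : w < u := lt_of_le_of_ne hcon (by rintro rfl; exact hdis hu hw)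
    rcases lt_trichotomy w (p (g i)) with h | h | h
    · exact hdis (hp (g i)) (full_convex (hc _) (hgR j) hw (hp (g j)) h hpp)
    · exact hdis (hp (g i)) (h ▸ hw)
    · exact hdis (full_convex (hc _) (hgR i) (hp (g i)) hu h hwu) hw
  refine ⟨g, ?_, ?_⟩
  · intro i j hij
    rcases lt_trichotomy i j with h | h | h
    · exact absurd (hlt i j h) (by rw [hij]; exact lt_irrefl _)
    · exact h
    · exact absurd (hlt j i h) (by rw [hij]; exact lt_irrefl _)
  · rintro i j hij ⟨u, hu, v, hv, huv⟩
    let k : Fin r := ⟨i.val + 1, by omega⟩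
    have h1 := hord i k (by simp [k, Fin.lt_def]) u hu _ (hp (g k))
    have h2 := hord k j (by simp only [k, Fin.lt_def]; omega) _ (hp (g k)) v hv
    have h3 := hgR i u hu
    have h4 := hgR j v hv
    obtain ⟨-, h⟩ := huv
    rw [Fin.lt_def] at h1 h2
    omega

theorem full_planar (σ : ℕ) : IsPlanar (full σ) := by
  constructor
  · intro h
    rw [isMinor_iff] at h
    obtain ⟨f, hne, hc, hd, he⟩ := h
    obtain ⟨g, hg, hg'⟩ := full_chain f hne hc hd 3 (by simp)
    refine hg' 0 2 (by simp) (he _ _ ?_)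
    rw [completeGraph, top_adj]
    exact fun h => absurd (hg h) (by decide)
  · intro h
    rw [isMinor_iff] at h
    obtain ⟨f, hne, hc, hd, he⟩ := h
    obtain ⟨g, hg, hg'⟩ := full_chain f hne hc hd 4 (by simp)
    have hside : ∀ i j : Fin 4, i.val + 2 ≤ j.val → (g i).isLeft = (g j).isLeft := by
      intro i j hij
      by_contra hcon
      refine hg' i j hij (he _ _ ?_)
      rw [completeBipartiteGraph_adj]
      cases h1 : g i <;> cases h2 : g j <;> simp_all
    have h02 := hside 0 2 (by simp)
    have h03 := hside 0 3 (by simp)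
    have h13 := hside 1 3 (by simp)
    have hall : ∀ i, (g i).isLeft = (g 0).isLeft := by
      intro i
      fin_cases i
      · rfl
      · exact h13.trans h03.symm
      · exact h02.symm
      · exact h03.symm
    -- four vertices on one side of `K₃,₃`: project to `Fin 3`
    have hinj : Function.Injective (fun i => Sum.elim id id (g i) : Fin 4 → Fin 3) := by
      intro i j hij
      apply hg
      have h1 := hall i
      have h2 := hall j
      simp only at hij
      cases h3 : g i <;> cases h4 : g j <;> rw [h3, h4] at hij <;> rw [h3] at h1 <;>
        rw [h4] at h2 <;> rw [← h2] at h1 <;> simp at h1 hij <;> rw [hij]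
    have := Fintype.card_le_of_injective _ hinj
    simp at this

theorem full_edges (σ : ℕ) (hσ : 4 ≤ σ) : 3 * σ ≤ edgeCount (full σ) + 9 := by
  have h := dc_eq (full σ)
  have h0 : ∀ i : Fin σ, i.val ≤ 1 → (nb (full σ) i).card = σ - 1 := by
    intro i hi
    have : nb (full σ) i = Finset.univ.erase i := by
      ext v
      simp only [mem_nb, full, Finset.mem_erase, Finset.mem_univ, and_true]
      constructor
      · exact fun h => h.1.symm
      · exact fun h => ⟨h.symm, Or.inl hi⟩
    rw [this, Finset.card_erase_of_mem (Finset.mem_univ _)]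
    simp
  have h1 : ∀ i : Fin σ, 3 ≤ i.val → i.val + 1 < σ → 4 ≤ (nb (full σ) i).card := by
    intro i hi hi'
    have hsub : ({⟨0, by omega⟩, ⟨1, by omega⟩, ⟨i.val - 1, by omega⟩, ⟨i.val + 1, hi'⟩} :
        Finset (Fin σ)) ⊆ nb (full σ) i := by
      intro v hv
      simp only [Finset.mem_insert, Finset.mem_singleton] at hv
      rw [mem_nb]
      rcases hv with rfl | rfl | rfl | rfl <;>
        refine ⟨fun h' => absurd (congrArg Fin.val h') (by dsimp only; omega), by dsimp only; omega⟩
    refine le_trans (le_of_eq ?_) (Finset.card_le_card hsub)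
    rw [Finset.card_insert_of_notMem, Finset.card_insert_of_notMem, Finset.card_pair]
    all_goals simp only [ne_eq, Finset.mem_insert, Finset.mem_singleton, Fin.ext_iff]; omega
  have h2 : 2 * (σ - 1) + 4 * (σ - 4) ≤ dc (full σ) := by
    let A : Finset (Fin σ) := {⟨0, by omega⟩, ⟨1, by omega⟩}
    let B : Finset (Fin σ) := {i | 3 ≤ i.val ∧ i.val + 1 < σ}
    have hAB : Disjoint A B := by
      rw [Finset.disjoint_left]
      intro i hi hi'
      simp only [A, B, Finset.mem_insert, Finset.mem_singleton, Finset.mem_filter,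
        Finset.mem_univ, true_and] at hi hi'
      rcases hi with rfl | rfl <;> simp at hi'
    have hB : σ - 4 ≤ B.card := by
      let e : Fin (σ - 4) → Fin σ := fun i => ⟨i.val + 3, by omega⟩
      have he : Function.Injective e := fun i j hij => by
        simp only [e, Fin.mk.injEq] at hij; exact Fin.ext (by omega)
      have : (Finset.univ.image e) ⊆ B := by
        intro i hi
        obtain ⟨k, -, rfl⟩ := Finset.mem_image.1 hi
        simp only [B, e, Finset.mem_filter, Finset.mem_univ, true_and]
        omega
      have := Finset.card_le_card this
      rwa [Finset.card_image_of_injective _ he, Finset.card_univ, Fintype.card_fin] at this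
    unfold dc
    refine le_trans ?_ (Finset.sum_le_sum_of_subset (Finset.subset_univ (A ∪ B)))
    rw [Finset.sum_union hAB]
    refine Nat.add_le_add ?_ ?_
    · rw [Finset.sum_pair (by simp [Fin.ext_iff]), h0 _ (by simp), h0 _ (by simp)]
      omega
    · calc 4 * (σ - 4) ≤ ∑ i ∈ B, 4 := by rw [Finset.sum_const, smul_eq_mul]; omega
        _ ≤ _ := Finset.sum_le_sum fun i hi => by
          simp only [B, Finset.mem_filter, Finset.mem_univ, true_and] at hi
          exact h1 i hi.1 hi.2
  omega

/-- The number of edges of a star. -/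
theorem star_edges (σ : ℕ) (hσ : 0 < σ) (S : SimpleGraph (Fin σ))
    (hS : ∀ a b, S.Adj a b ↔ a ≠ b ∧ (a.val = 0 ∨ b.val = 0)) : edgeCount S = σ - 1 := by
  have h := dc_eq S
  have h0 : (nb S ⟨0, hσ⟩).card = σ - 1 := by
    have : nb S ⟨0, hσ⟩ = Finset.univ.erase ⟨0, hσ⟩ := by
      ext v; simp [mem_nb, hS, eq_comm]
    rw [this, Finset.card_erase_of_mem (Finset.mem_univ _)]; simp
  have h1 : ∀ i ∈ Finset.univ.erase (⟨0, hσ⟩ : Fin σ), (nb S i).card = 1 := by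
    intro i hi
    simp only [Finset.mem_erase, Finset.mem_univ, and_true, ne_eq, Fin.ext_iff] at hi
    have : nb S i = {⟨0, hσ⟩} := by
      ext v; simp only [mem_nb, hS, Finset.mem_singleton, ne_eq, Fin.ext_iff]; omega
    rw [this]; simp
  unfold dc at h
  rw [← Finset.add_sum_erase _ _ (Finset.mem_univ (⟨0, hσ⟩ : Fin σ)), h0,
    Finset.sum_congr rfl h1, Finset.sum_const, smul_eq_mul, mul_one,
    Finset.card_erase_of_mem (Finset.mem_univ _), Finset.card_univ, Fintype.card_fin] at h
  omega

/-- Planar graphs with a dominating vertex exist for every number of edges between that of a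
star and (almost) that of a triangulation. -/
theorem exists_blob (σ μ : ℕ) (hσ : 4 ≤ σ) (h1 : σ - 1 ≤ μ) (h2 : μ + 9 ≤ 3 * σ) :
    ∃ G : SimpleGraph (Fin σ), IsPlanar G ∧ edgeCount G = μ ∧
      ∀ v : Fin σ, v.val ≠ 0 → G.Adj ⟨0, by omega⟩ v := by
  let S : SimpleGraph (Fin σ) :=
    { Adj := fun a b => a ≠ b ∧ (a.val = 0 ∨ b.val = 0)
      symm := ⟨fun _ _ h => ⟨h.1.symm, h.2.symm⟩⟩
      loopless := ⟨fun _ h => h.1 rfl⟩ }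
  have hSF : S ≤ full σ := by
    rintro a b ⟨hab, h⟩
    exact ⟨hab, by omega⟩
  have hS : edgeCount S = σ - 1 := star_edges σ (by omega) S (fun _ _ => Iff.rfl)
  have hF := full_edges σ hσ
  have hsub : S.edgeSet.toFinset ⊆ (full σ).edgeSet.toFinset := by
    rw [Set.toFinset_subset_toFinset]
    exact edgeSet_mono hSF
  unfold edgeCount at hS hF
  rw [Set.ncard_eq_toFinset_card'] at hS hF
  obtain ⟨E, hE1, hE2, hE⟩ := Finset.exists_subsuperset_card_eq hsub (n := μ) (by omega) (by omega)
  have hEe : (fromEdgeSet (E : Set (Sym2 (Fin σ)))).edgeSet = E := by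
    rw [edgeSet_fromEdgeSet, sdiff_eq_left, Set.disjoint_left]
    intro e he hd
    have : e ∈ (full σ).edgeSet := by simpa using hE2 he
    exact (full σ).not_isDiag_of_mem_edgeSet this hd
  refine ⟨fromEdgeSet E, planar_mono ?_ (full_planar σ), ?_, ?_⟩
  · rw [← edgeSet_subset_edgeSet, hEe]
    intro e he
    simpa using hE2 he
  · unfold edgeCount
    rw [hEe, Set.ncard_coe_finset, hE]
  · intro v hv
    rw [fromEdgeSet_adj]
    have hne : (⟨0, by omega⟩ : Fin σ) ≠ v := by
      intro h; rw [← h] at hv; exact hv rfl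
    refine ⟨hE1 ?_, hne⟩
    rw [Set.mem_toFinset, mem_edgeSet]
    exact ⟨hne, Or.inl rfl⟩

open Finset

/-! ### Hyperfiniteness of planar graphs of bounded degree -/

/-- Every weighting has a cut carrying at least half of the total weight. -/
theorem exists_cut {α : Type*} [DecidableEq α] (m : α → α → ℕ) (A : Finset α) :
    ∃ χ : α → Bool, ∑ a ∈ A, ∑ b ∈ A, (if a ≠ b then m a b else 0) ≤
      2 * ∑ a ∈ A, ∑ b ∈ A, (if χ a ≠ χ b then m a b else 0) := by
  induction A using Finset.induction_on with
  | empty => exact ⟨fun _ => true, by simp⟩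
  | insert v A hv ih =>
    obtain ⟨χ, hχ⟩ := ih
    -- weight between `v` and the two sides of the cut
    let T : Bool → ℕ := fun c => ∑ a ∈ A, (if χ a ≠ c then m v a + m a v else 0)
    have hT : T true + T false = ∑ a ∈ A, (m v a + m a v) := by
      simp only [T, ← Finset.sum_add_distrib]
      refine Finset.sum_congr rfl fun a _ => ?_
      cases χ a <;> simp
    obtain ⟨c, hc⟩ : ∃ c, ∑ a ∈ A, (m v a + m a v) ≤ 2 * T c := by
      rcases le_total (T true) (T false) with h | h
      · exact ⟨false, by omega⟩
      · exact ⟨true, by omega⟩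
    refine ⟨Function.update χ v c, ?_⟩
    have hne : ∀ a ∈ A, a ≠ v := fun a ha h => hv (h ▸ ha)
    have e1 : ∑ a ∈ insert v A, ∑ b ∈ insert v A, (if a ≠ b then m a b else 0) =
        ∑ a ∈ A, (m v a + m a v) + ∑ a ∈ A, ∑ b ∈ A, (if a ≠ b then m a b else 0) := by
      rw [Finset.sum_insert hv, Finset.sum_insert hv]
      have : ∀ a ∈ A, ∑ b ∈ insert v A, (if a ≠ b then m a b else 0) =
          m a v + ∑ b ∈ A, (if a ≠ b then m a b else 0) := by
        intro a ha
        rw [Finset.sum_insert hv, if_pos (hne a ha)]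
      rw [Finset.sum_congr rfl this, Finset.sum_add_distrib, Finset.sum_add_distrib]
      have : ∑ b ∈ A, (if v ≠ b then m v b else 0) = ∑ b ∈ A, m v b :=
        Finset.sum_congr rfl fun b hb => if_pos (hne b hb).symm
      rw [this]; simp; ring
    have e2 : ∑ a ∈ insert v A, ∑ b ∈ insert v A,
          (if Function.update χ v c a ≠ Function.update χ v c b then m a b else 0) =
        T c + ∑ a ∈ A, ∑ b ∈ A, (if χ a ≠ χ b then m a b else 0) := by
      have hup : ∀ a ∈ A, Function.update χ v c a = χ a := fun a ha =>
        Function.update_of_ne (hne a ha) _ _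
      rw [Finset.sum_insert hv, Finset.sum_insert hv]
      have h3 : ∀ a ∈ A, ∑ b ∈ insert v A,
          (if Function.update χ v c a ≠ Function.update χ v c b then m a b else 0) =
          (if χ a ≠ c then m a v else 0) + ∑ b ∈ A, (if χ a ≠ χ b then m a b else 0) := by
        intro a ha
        rw [Finset.sum_insert hv, hup a ha, Function.update_self]
        congr 1
        exact Finset.sum_congr rfl fun b hb => by rw [hup b hb]
      rw [Finset.sum_congr rfl h3, Finset.sum_add_distrib]
      have h4 : ∑ b ∈ A, (if Function.update χ v c v ≠ Function.update χ v c b then m v b else 0) =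
          ∑ b ∈ A, (if χ b ≠ c then m v b else 0) :=
        Finset.sum_congr rfl fun b hb => by
          rw [hup b hb, Function.update_self]; simp only [ne_comm]
      rw [h4]
      simp only [T, ne_eq, not_true_eq_false, if_false, zero_add]
      rw [← add_assoc, ← Finset.sum_add_distrib]
      congr 1
      refine Finset.sum_congr rfl fun a _ => ?_
      split_ifs <;> simp
    rw [e1, e2]
    omega

/-- The number of darts of `L` joining different pieces of the partition `pc`. -/
noncomputable def cr {n : ℕ} (L : SimpleGraph (Fin n)) (pc : Fin n → Fin n) : ℕ :=
  #{p : Fin n × Fin n | L.Adj p.1 p.2 ∧ pc p.1 ≠ pc p.2}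

/-- The number of darts of `L` from piece `a` to piece `b`. -/
noncomputable def wt {n : ℕ} (L : SimpleGraph (Fin n)) (pc : Fin n → Fin n) (a b : Fin n) : ℕ :=
  #{p : Fin n × Fin n | L.Adj p.1 p.2 ∧ pc p.1 = a ∧ pc p.2 = b}

theorem wt_symm {n : ℕ} (L : SimpleGraph (Fin n)) (pc : Fin n → Fin n) (a b : Fin n) :
    wt L pc a b = wt L pc b a := by
  refine Finset.card_bij (fun p _ => p.swap) ?_ ?_ ?_
  · rintro ⟨u, v⟩ h
    simp only [mem_filter, mem_univ, true_and, Prod.swap_prod_mk] at h ⊢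
    exact ⟨h.1.symm, h.2.2, h.2.1⟩
  · rintro p _ q _ h
    exact Prod.swap_injective h
  · rintro ⟨u, v⟩ h
    simp only [mem_filter, mem_univ, true_and] at h
    refine ⟨(v, u), ?_, rfl⟩
    simp only [mem_filter, mem_univ, true_and]
    exact ⟨h.1.symm, h.2.2, h.2.1⟩

theorem cr_eq {n : ℕ} (L : SimpleGraph (Fin n)) (pc : Fin n → Fin n) :
    cr L pc = ∑ a, ∑ b, if a ≠ b then wt L pc a b else 0 := by
  unfold cr
  rw [Finset.card_eq_sum_card_fiberwise (f := fun p => (pc p.1, pc p.2)) (t := univ)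
    (fun _ _ => by simp), Fintype.sum_prod_type]
  refine Finset.sum_congr rfl fun a _ => Finset.sum_congr rfl fun b _ => ?_
  rw [Finset.filter_filter]
  split_ifs with hab
  · unfold wt
    congr 1
    ext p
    simp only [mem_filter, mem_univ, true_and, Prod.mk.injEq]
    constructor
    · rintro ⟨⟨h1, -⟩, h2⟩; exact ⟨h1, h2⟩
    · rintro ⟨h1, h2, h3⟩; exact ⟨⟨h1, by rw [h2, h3]; exact hab⟩, h2, h3⟩
  · rw [Finset.card_eq_zero, Finset.filter_eq_empty_iff]
    rintro p -
    simp only [Prod.mk.injEq]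
    rintro ⟨⟨-, h⟩, h2, h3⟩
    rw [h2, h3] at h; exact hab h

/-- In a planar graph the total weight between pieces is at most `32` times the sum over pieces
of the largest weight to another piece. -/
theorem sum_wt_le {n : ℕ} {L : SimpleGraph (Fin n)} (hL : IsPlanar L) (pc : Fin n → Fin n)
    (hfib : ∀ a, Conn L {u | pc u = a}) (M : Fin n → ℕ)
    (hM : ∀ a b, a ≠ b → wt L pc a b ≤ M a) (k : ℕ) : ∀ A : Finset (Fin n), A.card = k →
    ∑ a ∈ A, ∑ b ∈ A, (if a ≠ b then wt L pc a b else 0) ≤ 32 * ∑ a ∈ A, M a := by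
  have hQ : IsPlanar (quot L fun u => some (pc u)) :=
    quot_planar _ (fun a => by simpa using hfib a) hL
  induction k with
  | zero => intro A hA; rw [Finset.card_eq_zero] at hA; simp [hA]
  | succ k ih =>
    intro A hA
    obtain ⟨v, hv, hdeg⟩ := planar_degenerate hQ A (Finset.card_pos.1 (by omega))
    have hcard : (A.erase v).card = k := by rw [Finset.card_erase_of_mem hv]; omega
    have h1 := ih _ hcard
    have hB : v ∉ A.erase v := by simp
    have hAe : A = insert v (A.erase v) := (Finset.insert_erase hv).symm
    have hne : ∀ a ∈ A.erase v, a ≠ v := fun a ha => (Finset.mem_erase.1 ha).1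
    have hrow : ∑ b ∈ A.erase v, wt L pc v b ≤ 16 * M v := by
      calc ∑ b ∈ A.erase v, wt L pc v b ≤ ∑ b ∈ nb (quot L fun u => some (pc u)) v ∩ A, M v := by
            rw [← Finset.sum_filter_add_sum_filter_not (A.erase v) (fun b => wt L pc v b ≠ 0)]
            have hz : ∑ b ∈ (A.erase v).filter (fun b => ¬ wt L pc v b ≠ 0), wt L pc v b = 0 :=
              Finset.sum_eq_zero fun b hb => by simpa using (Finset.mem_filter.1 hb).2
            rw [hz, add_zero]
            refine le_trans (Finset.sum_le_sum (g := fun _ => M v) fun b hb => ?_)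
              (Finset.sum_le_sum_of_subset ?_)
            · have := hne b (Finset.mem_filter.1 hb).1
              exact hM v b this.symm
            · intro b hb
              obtain ⟨hb1, hb2⟩ := Finset.mem_filter.1 hb
              rw [Finset.mem_inter, mem_nb]
              refine ⟨⟨(hne b hb1).symm, ?_⟩, (Finset.mem_erase.1 hb1).2⟩
              obtain ⟨⟨p, q⟩, hpq⟩ := Finset.card_ne_zero.1 hb2
              simp only [mem_filter, mem_univ, true_and] at hpq
              exact ⟨p, q, congrArg some hpq.2.1, congrArg some hpq.2.2, hpq.1⟩
        _ ≤ 16 * M v := by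
            rw [Finset.sum_const, smul_eq_mul]
            exact Nat.mul_le_mul_right _ hdeg
    rw [hAe]
    rw [Finset.sum_insert hB, Finset.sum_insert hB, Finset.sum_insert hB]
    have h3 : ∀ a ∈ A.erase v, ∑ b ∈ insert v (A.erase v), (if a ≠ b then wt L pc a b else 0) =
        wt L pc v a + ∑ b ∈ A.erase v, (if a ≠ b then wt L pc a b else 0) := by
      intro a ha
      rw [Finset.sum_insert hB, if_pos (hne a ha), wt_symm]
    rw [Finset.sum_congr rfl h3, Finset.sum_add_distrib]
    have h4 : ∑ b ∈ A.erase v, (if v ≠ b then wt L pc v b else 0) = ∑ b ∈ A.erase v, wt L pc v b :=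
      Finset.sum_congr rfl fun b hb => if_pos (hne b hb).symm
    rw [h4]
    simp only [ne_eq, not_true_eq_false, if_false, zero_add]
    simp only [ne_eq] at h1
    omega

/-- Merging pieces along heavy connections removes a constant proportion of the crossing darts. -/
theorem hyperfinite_step {n : ℕ} {L : SimpleGraph (Fin n)} (hL : IsPlanar L) {D K : ℕ}
    (hD : ∀ v, (nb L v).card ≤ D) (pc : Fin n → Fin n)
    (hfib : ∀ a, Conn L {u | pc u = a}) (hK : ∀ a, #{u | pc u = a} ≤ K) :
    ∃ pc' : Fin n → Fin n, (∀ a, Conn L {u | pc' u = a}) ∧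
      (∀ a, #{u | pc' u = a} ≤ K + K * (D * K)) ∧ 128 * cr L pc' ≤ 127 * cr L pc := by
  have hφ : ∀ a : Fin n, ∃ b, ∀ c, a ≠ c → wt L pc a c ≤ (if a ≠ b then wt L pc a b else 0) := by
    intro a
    obtain ⟨b, -, hb⟩ := Finset.exists_max_image univ (fun b => if a ≠ b then wt L pc a b else 0)
      ⟨a, mem_univ a⟩
    refine ⟨b, fun c hc => ?_⟩
    have := hb c (mem_univ c)
    rwa [if_pos hc] at this
  choose φ hφ using hφ
  let M : Fin n → ℕ := fun a => if a ≠ φ a then wt L pc a (φ a) else 0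
  have hsum := sum_wt_le hL pc hfib M (fun a b hab => hφ a b hab) _ univ rfl
  rw [← cr_eq] at hsum
  obtain ⟨χ, hχ⟩ := exists_cut (fun a b => if b = φ a then M a else 0) (univ : Finset (Fin n))
  have hχ1 : ∑ a, M a ≤ 2 * ∑ a, (if χ a ≠ χ (φ a) then M a else 0) := by
    refine le_trans (le_of_eq ?_) (hχ.trans (le_of_eq ?_))
    · refine Finset.sum_congr rfl fun a _ => ?_
      by_cases ha : a = φ a
      · have hM0 : M a = 0 := by simp only [M]; rw [if_neg (by simpa using ha)]
        simp [hM0]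
      · rw [Finset.sum_eq_single (φ a)]
        · simp [ha]
        · intro b _ hb; simp [hb]
        · simp
    · congr 1
      refine Finset.sum_congr rfl fun a _ => ?_
      rw [Finset.sum_eq_single (φ a)]
      · simp
      · intro b _ hb; simp [hb]
      · simp
  -- orient the cut so that leaves lie on side `!c`
  obtain ⟨c, hc⟩ : ∃ c : Bool, ∑ a, M a ≤ 4 * ∑ a, (if χ a ≠ c ∧ χ (φ a) = c then M a else 0) := by
    have : ∑ a, (if χ a ≠ χ (φ a) then M a else 0) =
        ∑ a, (if χ a ≠ true ∧ χ (φ a) = true then M a else 0) +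
        ∑ a, (if χ a ≠ false ∧ χ (φ a) = false then M a else 0) := by
      rw [← Finset.sum_add_distrib]
      refine Finset.sum_congr rfl fun a _ => ?_
      cases χ a <;> cases χ (φ a) <;> simp
    rcases le_total (∑ a, (if χ a ≠ true ∧ χ (φ a) = true then M a else 0))
      (∑ a, (if χ a ≠ false ∧ χ (φ a) = false then M a else 0)) with h | h
    · exact ⟨false, by omega⟩
    · exact ⟨true, by omega⟩
  let mv : Fin n → Prop := fun a => χ a ≠ c ∧ χ (φ a) = c ∧ M a ≠ 0
  let σ : Fin n → Fin n := fun a => if mv a then φ a else a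
  have hMedge : ∀ a, M a ≠ 0 → ∃ u v, L.Adj u v ∧ pc u = a ∧ pc v = φ a := by
    intro a ha
    simp only [M] at ha
    split_ifs at ha with h
    · obtain ⟨⟨p, q⟩, hpq⟩ := Finset.card_ne_zero.1 ha
      simp only [mem_filter, mem_univ, true_and] at hpq
      exact ⟨p, q, hpq⟩
    · exact absurd rfl ha
  have hσfix : ∀ b, ¬ mv b → {u | σ (pc u) = b} =
      {u | pc u = b} ∪ ⋃ a ∈ {a | mv a ∧ φ a = b}, {u | pc u = a} := by
    intro b hb
    ext u
    simp only [Set.mem_union, Set.mem_iUnion, Set.mem_ofPred_eq, σ, exists_prop]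
    constructor
    · intro h
      split_ifs at h with hm
      · exact Or.inr ⟨pc u, ⟨hm, h⟩, rfl⟩
      · exact Or.inl h
    · rintro (h | ⟨a, ⟨hm, h⟩, rfl⟩)
      · rw [h, if_neg hb]
      · rw [if_pos hm, h]
  have hσmv : ∀ b, mv b → ∀ u, σ (pc u) ≠ b := by
    intro b hb u h
    simp only [σ] at h
    split_ifs at h with hm
    · apply hb.1
      rw [← h]; exact hm.2.1
    · rw [h] at hm; exact hm hb
  refine ⟨fun u => σ (pc u), ?_, ?_, ?_⟩
  · intro b
    by_cases hb : mv b
    · have : {u | σ (pc u) = b} = ∅ := Set.eq_empty_of_forall_notMem fun u hu => hσmv b hb u hu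
      rw [this]; exact conn_empty _
    · rw [hσfix b hb]
      refine conn_star (hfib b) _ _ (fun a _ => hfib a) ?_
      rintro a ⟨ha, rfl⟩
      obtain ⟨u, v, huv, hu, hv⟩ := hMedge a ha.2.2
      exact ⟨v, hv, u, hu, huv.symm⟩
  · intro b
    have hsub : (univ.filter fun u => σ (pc u) = b) ⊆ (univ.filter fun u => pc u = b) ∪
        (univ.filter fun u => pc u = b).biUnion fun v => (nb L v).biUnion fun z =>
          univ.filter fun u => pc u = pc z := by
      intro u hu
      simp only [mem_filter, mem_univ, true_and, σ] at hu
      simp only [mem_union, mem_filter, mem_univ, true_and, mem_biUnion]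
      split_ifs at hu with hm
      · right
        obtain ⟨p, q, hpq, hp, hq⟩ := hMedge _ hm.2.2
        exact ⟨q, by rw [hq, hu], p, mem_nb.2 hpq.symm, hp.symm⟩
      · exact Or.inl hu
    refine (Finset.card_le_card hsub).trans ((Finset.card_union_le _ _).trans ?_)
    refine Nat.add_le_add (hK b) ?_
    refine (Finset.card_biUnion_le_card_mul _ _ (D * K) fun v _ => ?_).trans
      (Nat.mul_le_mul_right _ (hK b))
    refine (Finset.card_biUnion_le_card_mul _ _ K fun z _ => hK _).trans
      (Nat.mul_le_mul_right _ (hD v))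
  · have hdrop : cr L (fun u => σ (pc u)) + ∑ a, (if χ a ≠ c ∧ χ (φ a) = c then M a else 0) ≤
        cr L pc := by
      have hS : ∑ a, (if χ a ≠ c ∧ χ (φ a) = c then M a else 0) =
          #{p : Fin n × Fin n | L.Adj p.1 p.2 ∧ mv (pc p.1) ∧ pc p.2 = φ (pc p.1)} := by
        rw [Finset.card_eq_sum_card_fiberwise (f := fun p => pc p.1) (t := univ)
          (fun _ _ => by simp)]
        refine Finset.sum_congr rfl fun a _ => ?_
        rw [Finset.filter_filter]
        by_cases hm : mv a
        · rw [if_pos ⟨hm.1, hm.2.1⟩]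
          have hMa : M a = wt L pc a (φ a) := by
            have := hm.2.2
            simp only [M] at this ⊢
            split_ifs at this ⊢ with h
            · rfl
            · exact absurd rfl this
          rw [hMa]
          unfold wt
          congr 1
          ext p
          simp only [mem_filter, mem_univ, true_and]
          constructor
          · rintro ⟨h1, h2, h3⟩; rw [h2]; exact ⟨⟨h1, hm, h3⟩, rfl⟩
          · rintro ⟨⟨h1, h2, h3⟩, h4⟩; rw [h4] at h3; exact ⟨h1, h4, h3⟩
        · have h0 : (if χ a ≠ c ∧ χ (φ a) = c then M a else 0) = 0 := by
            by_cases h : χ a ≠ c ∧ χ (φ a) = c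
            · rw [if_pos h]
              by_contra h'
              exact hm ⟨h.1, h.2, h'⟩
            · rw [if_neg h]
          rw [h0, eq_comm, Finset.card_eq_zero, Finset.filter_eq_empty_iff]
          rintro p - ⟨⟨-, h2, -⟩, h4⟩
          rw [h4] at h2; exact hm h2
      rw [hS]
      unfold cr
      rw [← Finset.card_union_of_disjoint]
      · refine Finset.card_le_card ?_
        intro p hp
        simp only [mem_union, mem_filter, mem_univ, true_and] at hp ⊢
        rcases hp with ⟨h1, h2⟩ | ⟨h1, h2, h3⟩
        · exact ⟨h1, fun h => h2 (by rw [h])⟩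
        · refine ⟨h1, fun h => ?_⟩
          rw [h3] at h
          apply h2.1
          rw [h]; exact h2.2.1
      · rw [Finset.disjoint_left]
        rintro p hp hp'
        simp only [mem_filter, mem_univ, true_and] at hp hp'
        apply hp.2
        obtain ⟨-, h2, h3⟩ := hp'
        have hn : ¬ mv (φ (pc p.1)) := fun h => h.1 h2.2.1
        simp only [σ]
        rw [if_pos h2, h3, if_neg hn]
    omega

/-- Planar graphs of bounded degree are hyperfinite: deleting a small proportion of the edges
leaves pieces of bounded size. -/
theorem hyperfinite (D R : ℕ) : ∃ K : ℕ, ∀ (n : ℕ) (L : SimpleGraph (Fin n)), IsPlanar L →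
    (∀ v, (nb L v).card ≤ D) → ∃ pc : Fin n → Fin n, (∀ a, Conn L {u | pc u = a}) ∧
      (∀ a, #{u | pc u = a} ≤ K) ∧ 128 ^ R * cr L pc ≤ 127 ^ R * dc L := by
  induction R with
  | zero =>
    refine ⟨1, fun n L _ _ => ⟨id, ?_, ?_, ?_⟩⟩
    · intro a
      simpa using conn_singleton L a
    · intro a
      simp [Finset.filter_eq']
    · rw [pow_zero, pow_zero, one_mul, one_mul]
      unfold dc cr
      rw [← Finset.card_sigma]
      refine Finset.card_le_card_of_injOn (fun p => ⟨p.1, p.2⟩) ?_ ?_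
      · intro p hp
        simp only [coe_filter, mem_univ, true_and, Set.mem_ofPred_eq] at hp
        simpa [mem_nb] using hp.1
      · rintro ⟨a, b⟩ - ⟨a', b'⟩ - h
        simpa using h
  | succ R ih =>
    obtain ⟨K, hK⟩ := ih
    refine ⟨K + K * (D * K), fun n L hL hD => ?_⟩
    obtain ⟨pc, h1, h2, h3⟩ := hK n L hL hD
    obtain ⟨pc', h1', h2', h3'⟩ := hyperfinite_step hL hD pc h1 h2
    refine ⟨pc', h1', h2', ?_⟩
    calc 128 ^ (R + 1) * cr L pc' = 128 ^ R * (128 * cr L pc') := by ring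
      _ ≤ 128 ^ R * (127 * cr L pc) := Nat.mul_le_mul_left _ h3'
      _ = 127 * (128 ^ R * cr L pc) := by ring
      _ ≤ 127 * (127 ^ R * dc L) := Nat.mul_le_mul_left _ h3
      _ = _ := by ring

/-! ### Few pieces have pairwise distinct neighbourhoods -/

theorem nb_mono {n : ℕ} {G G' : SimpleGraph (Fin n)} (h : G ≤ G') (u : Fin n) :
    nb G u ⊆ nb G' u := fun _ hv => mem_nb.2 (h (mem_nb.1 hv))

theorem dc_mono {n : ℕ} {G G' : SimpleGraph (Fin n)} (h : G ≤ G') : dc G ≤ dc G' :=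
  Finset.sum_le_sum fun u _ => Finset.card_le_card (nb_mono h u)

theorem dc_lt {n : ℕ} {G G' : SimpleGraph (Fin n)} (h : G ≤ G') {x y : Fin n}
    (h1 : G'.Adj x y) (h2 : ¬ G.Adj x y) : dc G < dc G' := by
  refine Finset.sum_lt_sum (fun u _ => Finset.card_le_card (nb_mono h u)) ⟨x, mem_univ x, ?_⟩
  refine Finset.card_lt_card ⟨nb_mono h x, fun hsub => h2 ?_⟩
  exact mem_nb.1 (hsub (mem_nb.2 h1))

/-- A planar graph has only linearly many cliques. -/
theorem card_cliques_le {n : ℕ} {G : SimpleGraph (Fin n)} (hG : IsPlanar G) (k : ℕ) :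
    ∀ X : Finset (Fin n), X.card = k →
    #{S ∈ X.powerset | ∀ x ∈ S, ∀ y ∈ S, x ≠ y → G.Adj x y} ≤ 2 ^ 16 * X.card + 1 := by
  induction k with
  | zero =>
    intro X hX
    rw [Finset.card_eq_zero] at hX
    subst hX
    exact (Finset.card_filter_le _ _).trans (by simp)
  | succ k ih =>
    intro X hX
    obtain ⟨v, hv, hdeg⟩ := planar_degenerate hG X (Finset.card_pos.1 (by omega))
    have hcard : (X.erase v).card = k := by rw [Finset.card_erase_of_mem hv]; omega
    have h1 := ih _ hcard
    have hsub : (X.powerset.filter fun S => ∀ x ∈ S, ∀ y ∈ S, x ≠ y → G.Adj x y) ⊆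
        ((X.erase v).powerset.filter fun S => ∀ x ∈ S, ∀ y ∈ S, x ≠ y → G.Adj x y) ∪
        (nb G v ∩ X).powerset.image (insert v) := by
      intro S hS
      simp only [mem_filter, mem_powerset] at hS
      simp only [mem_union, mem_filter, mem_powerset, mem_image]
      by_cases hvS : v ∈ S
      · right
        refine ⟨S.erase v, ?_, Finset.insert_erase hvS⟩
        intro y hy
        rw [Finset.mem_erase] at hy
        rw [Finset.mem_inter, mem_nb]
        exact ⟨hS.2 v hvS y hy.2 hy.1.symm, hS.1 hy.2⟩
      · left
        refine ⟨fun y hy => Finset.mem_erase.2 ⟨?_, hS.1 hy⟩, hS.2⟩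
        rintro rfl; exact hvS hy
    have h2 := (Finset.card_le_card hsub).trans (Finset.card_union_le _ _)
    have h3 : ((nb G v ∩ X).powerset.image (insert v)).card ≤ 2 ^ 16 := by
      refine Finset.card_image_le.trans ?_
      rw [Finset.card_powerset]
      exact Nat.pow_le_pow_right (by norm_num) hdeg
    rw [hcard] at h1
    rw [hX]
    omega

/-- The neighbourhood in `X` of the piece with label `a`. -/
noncomputable def pnb {n : ℕ} (G : SimpleGraph (Fin n)) (pc : Fin n → Fin n) (X : Finset (Fin n))
    (a : Fin n) : Finset (Fin n) :=
  {x ∈ X | ∃ u, pc u = a ∧ G.Adj u x}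

/-- Pieces with pairwise distinct neighbourhoods in `X` are few: contracting as many of them as
possible into `X`, each so as to create a new edge inside `X`, leaves pieces whose neighbourhoods are
cliques of a planar graph on `X`. -/
theorem twin_lemma {n : ℕ} {G : SimpleGraph (Fin n)} (hG : IsPlanar G) (pc : Fin n → Fin n)
    (X 𝓛 : Finset (Fin n)) (hfib : ∀ a ∈ 𝓛, Conn G {u | pc u = a})
    (hX : ∀ u, pc u ∈ 𝓛 → u ∉ X) (hinj : Set.InjOn (pnb G pc X) 𝓛) :
    𝓛.card ≤ (2 ^ 16 + 16) * X.card + 1 := by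
  -- the pieces with label in `S` are contracted into `X` along `τ`, all others are deleted
  let ρ : Finset (Fin n) → (Fin n → Fin n) → Fin n → Option (Fin n) := fun S τ u =>
    if u ∈ X then some u else if pc u ∈ S then some (τ (pc u)) else none
  let valid : Finset (Finset (Fin n) × (Fin n → Fin n)) :=
    {p | p.1 ⊆ 𝓛 ∧ (∀ a ∈ p.1, p.2 a ∈ pnb G pc X a) ∧ p.1.card ≤ dc (quot G (ρ p.1 p.2))}
  obtain ⟨⟨S, τ⟩, hmem, hmax⟩ := Finset.exists_max_image valid (fun p => p.1.card)
    ⟨(∅, id), by simp [valid]⟩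
  simp only [valid, mem_filter, mem_univ, true_and] at hmem hmax
  obtain ⟨hS𝓛, hτ, hcard⟩ := hmem
  have hQ : IsPlanar (quot G (ρ S τ)) := by
    refine quot_planar _ (fun x => ?_) hG
    by_cases hx : x ∈ X
    · have : {u | ρ S τ u = some x} = {x} ∪ ⋃ a ∈ {a | a ∈ S ∧ τ a = x}, {u | pc u = a} := by
        ext u
        simp only [Set.mem_union, Set.mem_iUnion, Set.mem_ofPred_eq, exists_prop,
          Set.mem_singleton_iff, ρ]
        constructor
        · intro h
          split_ifs at h with h1 h2
          · exact Or.inl (by simpa using h)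
          · exact Or.inr ⟨pc u, ⟨h2, by simpa using h⟩, rfl⟩
        · rintro (rfl | ⟨a, ⟨h1, h2⟩, rfl⟩)
          · rw [if_pos hx]
          · rw [if_neg (hX u (hS𝓛 h1)), if_pos h1, h2]
      rw [this]
      refine conn_star (conn_singleton _ _) _ _ (fun a ha => hfib a (hS𝓛 ha.1)) ?_
      rintro a ⟨ha, rfl⟩
      obtain ⟨-, u, hu, hux⟩ := Finset.mem_filter.1 (hτ a ha)
      exact ⟨τ a, rfl, u, hu, hux.symm⟩
    · have : {u | ρ S τ u = some x} = ∅ := by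
        refine Set.eq_empty_of_forall_notMem fun u hu => ?_
        simp only [ρ, Set.mem_ofPred_eq] at hu
        split_ifs at hu with h1 h2
        · rw [Option.some.injEq] at hu; exact hx (hu ▸ h1)
        · rw [Option.some.injEq] at hu
          exact hx (hu ▸ (Finset.mem_filter.1 (hτ _ h2)).1)
      rw [this]; exact conn_empty _
  have hQX : ∀ x y, (quot G (ρ S τ)).Adj x y → x ∈ X := by
    rintro x y ⟨-, u, w, hu, -, -⟩
    simp only [ρ] at hu
    split_ifs at hu with h1 h2
    · rw [Option.some.injEq] at hu; exact hu ▸ h1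
    · rw [Option.some.injEq] at hu
      exact hu ▸ (Finset.mem_filter.1 (hτ _ h2)).1
  have hS : S.card ≤ 16 * X.card := hcard.trans (planar_dc_le hQ X hQX)
  have hclique : ∀ a ∈ 𝓛 \ S, ∀ x ∈ pnb G pc X a, ∀ y ∈ pnb G pc X a, x ≠ y →
      (quot G (ρ S τ)).Adj x y := by
    intro a ha x hx y hy hxy
    by_contra hn
    rw [Finset.mem_sdiff] at ha
    have hρ : ∀ u b, ρ S τ u = some b → ρ (insert a S) (Function.update τ a x) u = some b := by
      intro u b h
      simp only [ρ] at h ⊢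
      split_ifs at h with h1 h2
      · rw [if_pos h1, h]
      · have : pc u ≠ a := fun h => ha.2 (h ▸ h2)
        rw [if_neg h1, if_pos (Finset.mem_insert_of_mem h2), Function.update_of_ne this, h]
    have hle : quot G (ρ S τ) ≤ quot G (ρ (insert a S) (Function.update τ a x)) := by
      rintro p q ⟨hpq, u, w, hu, hw, huw⟩
      exact ⟨hpq, u, w, hρ u p hu, hρ w q hw, huw⟩
    have hnew : (quot G (ρ (insert a S) (Function.update τ a x))).Adj x y := by
      obtain ⟨hyX, u, hu, huy⟩ := Finset.mem_filter.1 hy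
      refine ⟨hxy, u, y, ?_, ?_, huy⟩
      · simp only [ρ]
        rw [if_neg (hX u (hu ▸ ha.1)), if_pos (by rw [hu]; exact mem_insert_self _ _), hu,
          Function.update_self]
      · simp only [ρ]
        rw [if_pos hyX]
    have hlt := dc_lt hle hnew hn
    have hci := Finset.card_insert_of_notMem ha.2
    have := hmax (insert a S, Function.update τ a x) ⟨Finset.insert_subset ha.1 hS𝓛, ?_, by
      dsimp only; omega⟩
    · dsimp only at this; omega
    · intro b hb
      dsimp only at hb ⊢
      by_cases hba : b = a
      · subst hba; rw [Function.update_self]; exact hx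
      · rw [Function.update_of_ne hba]
        exact hτ b (Finset.mem_of_mem_insert_of_ne hb hba)
  have hrest : (𝓛 \ S).card ≤ 2 ^ 16 * X.card + 1 := by
    refine le_trans ?_ (card_cliques_le hQ _ X rfl)
    refine Finset.card_le_card_of_injOn (pnb G pc X) ?_ ?_
    · intro a ha
      rw [Finset.mem_coe, Finset.mem_filter, Finset.mem_powerset]
      exact ⟨Finset.filter_subset _ _, hclique a ha⟩
    · exact hinj.mono (by simp)
  have := Finset.card_sdiff_add_card_eq_card hS𝓛
  omega

/-! ### Local reductions: contracting or deleting pieces -/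

theorem dc_eq_card {n : ℕ} (G : SimpleGraph (Fin n)) :
    dc G = #{p : Fin n × Fin n | G.Adj p.1 p.2} := by
  unfold dc
  rw [← Finset.card_sigma]
  refine Finset.card_bij (fun p _ => (p.1, p.2)) ?_ ?_ ?_
  · rintro ⟨a, b⟩ h
    simpa [mem_nb] using h
  · rintro ⟨a, b⟩ - ⟨a', b'⟩ - h
    simpa using h
  · rintro ⟨a, b⟩ h
    exact ⟨⟨a, b⟩, by simpa [mem_nb] using h, rfl⟩

/-- The number of darts touching the piece `a`. -/
noncomputable def tot {n : ℕ} (G : SimpleGraph (Fin n)) (pc : Fin n → Fin n) (a : Fin n) : ℕ :=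
  #{p : Fin n × Fin n | G.Adj p.1 p.2 ∧ (pc p.1 = a ∨ pc p.2 = a)}

/-- The vertices outside the piece `a` having a neighbour in it. -/
noncomputable def onb {n : ℕ} (G : SimpleGraph (Fin n)) (pc : Fin n → Fin n) (a : Fin n) :
    Finset (Fin n) :=
  {w | pc w ≠ a ∧ ∃ u, pc u = a ∧ G.Adj u w}

/-- The number of labels freed by reducing the piece `a`: all its vertices, except the target
`tg a` of the contraction if there is one. -/
noncomputable def sz {n : ℕ} (pc : Fin n → Fin n) (tg : Fin n → Option (Fin n)) (a : Fin n) : ℕ :=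
  #{u | pc u = a ∧ tg a ≠ some u}

/-- The number of darts lost by reducing the piece `a`. -/
noncomputable def lam {n : ℕ} (G : SimpleGraph (Fin n)) (pc : Fin n → Fin n)
    (tg : Fin n → Option (Fin n)) (a : Fin n) : ℤ :=
  tot G pc a - if tg a = none then 0 else 2 * ((onb G pc a).card : ℤ)

/-- `Gd` is a set of (labels of) reducible pieces of `G`: connected pieces of at most `K` vertices
of degree at most `D`.  A piece `a` is reduced by contracting it to the vertex `tg a` or, if
`tg a = none`, by deleting it; in the latter case some bounded connected set `S`, not touching
any reducible piece, dominates the neighbourhood of the piece. -/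
structure IsDec {n : ℕ} (G : SimpleGraph (Fin n)) (pc : Fin n → Fin n) (Gd : Finset (Fin n))
    (tg : Fin n → Option (Fin n)) (K D : ℕ) : Prop where
  conn : ∀ a ∈ Gd, Conn G {u | pc u = a}
  size : ∀ a ∈ Gd, #{u | pc u = a} ≤ K
  deg : ∀ u, pc u ∈ Gd → (nb G u).card ≤ D
  tg_mem : ∀ a ∈ Gd, ∀ v, tg a = some v → pc v = a
  s_pos : ∀ a ∈ Gd, ∃ u, pc u = a ∧ tg a ≠ some u
  twin : ∀ a ∈ Gd, tg a = none → ∃ S : Finset (Fin n), S.Nonempty ∧ Conn G (S : Set (Fin n)) ∧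
    S.card ≤ K ∧ (∀ u ∈ S, (nb G u).card ≤ D) ∧ (∀ u ∈ S, pc u ∉ Gd) ∧
    (∀ u ∈ S, ∀ w, G.Adj u w → pc w ∉ Gd) ∧
    ∀ u w, pc u = a → G.Adj u w → pc w ≠ a → ∃ u' ∈ S, G.Adj u' w

/-- The partial map reducing simultaneously the pieces with label in `T`. -/
noncomputable def rho {n : ℕ} (pc : Fin n → Fin n) (tg : Fin n → Option (Fin n))
    (T : Finset (Fin n)) (u : Fin n) : Option (Fin n) :=
  if pc u ∈ T then tg (pc u) else some u

/-- The labels freed by reducing the pieces in `T`. -/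
noncomputable def freed {n : ℕ} (pc : Fin n → Fin n) (tg : Fin n → Option (Fin n))
    (T : Finset (Fin n)) : Finset (Fin n) :=
  {u | pc u ∈ T ∧ tg (pc u) ≠ some u}

section Switch

variable {n : ℕ} {G : SimpleGraph (Fin n)} {pc : Fin n → Fin n} {Gd : Finset (Fin n)}
  {tg : Fin n → Option (Fin n)} {K D : ℕ} {T : Finset (Fin n)}

theorem rho_out (hdec : IsDec G pc Gd tg K D) (hT : T ⊆ Gd) {x u : Fin n} (hu : pc u ∉ T)
    (h : rho pc tg T x = some u) : x = u := by
  unfold rho at h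
  split_ifs at h with hx
  · rw [hdec.tg_mem _ (hT hx) _ h] at hu; exact absurd hx hu
  · simpa using h

theorem rho_in (hdec : IsDec G pc Gd tg K D) (hT : T ⊆ Gd) {x u : Fin n} (hu : pc u ∈ T)
    (h : rho pc tg T x = some u) : pc x = pc u ∧ tg (pc u) = some u := by
  unfold rho at h
  split_ifs at h with hx
  · have := hdec.tg_mem _ (hT hx) _ h
    exact ⟨this.symm, by rw [this]; exact h⟩
  · rw [Option.some.injEq] at h; rw [h] at hx; exact absurd hu hx

theorem switch_adj_out (hdec : IsDec G pc Gd tg K D) (hT : T ⊆ Gd) {u w : Fin n}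
    (hu : pc u ∉ T) (hw : pc w ∉ T) : (quot G (rho pc tg T)).Adj u w ↔ G.Adj u w := by
  constructor
  · rintro ⟨-, x, y, hx, hy, h⟩
    rwa [rho_out hdec hT hu hx, rho_out hdec hT hw hy] at h
  · intro h
    exact ⟨h.ne, u, w, by simp [rho, hu], by simp [rho, hw], h⟩

theorem switch_adj_in (hdec : IsDec G pc Gd tg K D) (hT : T ⊆ Gd)
    (hind : ∀ u w, G.Adj u w → pc u ∈ T → pc w ∈ T → pc u = pc w) {v w : Fin n}
    (hv : pc v ∈ T) : (quot G (rho pc tg T)).Adj v w ↔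
      tg (pc v) = some v ∧ pc w ∉ T ∧ ∃ u, pc u = pc v ∧ G.Adj u w := by
  constructor
  · rintro ⟨hne, x, y, hx, hy, h⟩
    obtain ⟨h1, h2⟩ := rho_in hdec hT hv hx
    by_cases hyT : pc y ∈ T
    · have h3 := hind x y h (by rw [h1]; exact hv) hyT
      have : rho pc tg T y = rho pc tg T x := by
        unfold rho; rw [h3, if_pos hyT, if_pos hyT]
      rw [this, hx, Option.some.injEq] at hy
      exact absurd hy hne
    · have : y = w := by simpa [rho, hyT] using hy
      subst this
      exact ⟨h2, hyT, x, h1, h⟩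
  · rintro ⟨h1, h2, u, hu, huw⟩
    refine ⟨?_, u, w, ?_, ?_, huw⟩
    · rintro rfl; exact h2 hv
    · unfold rho; rw [hu, if_pos hv, h1]
    · simp [rho, h2]

theorem switch_planar (hdec : IsDec G pc Gd tg K D) (hT : T ⊆ Gd) (hG : IsPlanar G) :
    IsPlanar (quot G (rho pc tg T)) := by
  refine quot_planar _ (fun a => ?_) hG
  by_cases ha : pc a ∈ T
  · by_cases hta : tg (pc a) = some a
    · have : {u | rho pc tg T u = some a} = {u | pc u = pc a} := by
        ext u
        constructor
        · intro h; exact (rho_in hdec hT ha h).1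
        · intro h
          simp only [Set.mem_ofPred_eq] at h ⊢
          unfold rho; rw [h, if_pos ha, hta]
      rw [this]; exact hdec.conn _ (hT ha)
    · have : {u | rho pc tg T u = some a} = ∅ :=
        Set.eq_empty_of_forall_notMem fun u hu => hta (rho_in hdec hT ha hu).2
      rw [this]; exact conn_empty _
  · have : {u | rho pc tg T u = some a} = {a} := by
      ext u
      constructor
      · intro h; exact rho_out hdec hT ha h
      · rintro rfl; simp [rho, ha]
    rw [this]; exact conn_singleton _ _

theorem switch_isolated (hdec : IsDec G pc Gd tg K D) (hT : T ⊆ Gd) :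
    ∀ u ∈ freed pc tg T, ∀ w, ¬ (quot G (rho pc tg T)).Adj u w := by
  rintro u hu w ⟨-, x, y, hx, -, -⟩
  simp only [freed, mem_filter, mem_univ, true_and] at hu
  exact hu.2 (rho_in hdec hT hu.1 hx).2

theorem freed_card (T : Finset (Fin n)) : (freed pc tg T).card = ∑ a ∈ T, sz pc tg a := by
  unfold freed sz
  rw [Finset.card_eq_sum_card_fiberwise (f := pc) (t := T)
    (fun u hu => by simp at hu; exact hu.1)]
  refine Finset.sum_congr rfl fun a ha => ?_
  rw [Finset.filter_filter]
  congr 1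
  ext u
  simp only [mem_filter, mem_univ, true_and]
  constructor
  · rintro ⟨⟨-, h⟩, rfl⟩; exact ⟨rfl, h⟩
  · rintro ⟨rfl, h⟩; exact ⟨⟨ha, h⟩, rfl⟩

/-- Darts are split according to the piece in `T` they touch, if no two pieces in `T` are
joined by an edge. -/
theorem dc_split (H : SimpleGraph (Fin n)) (pc : Fin n → Fin n) (T : Finset (Fin n))
    (hind : ∀ u w, H.Adj u w → pc u ∈ T → pc w ∈ T → pc u = pc w) :
    dc H = #{p : Fin n × Fin n | H.Adj p.1 p.2 ∧ pc p.1 ∉ T ∧ pc p.2 ∉ T} +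
      ∑ a ∈ T, tot H pc a := by
  rw [dc_eq_card]
  unfold tot
  rw [← Finset.card_biUnion]
  · rw [← Finset.card_union_of_disjoint]
    · congr 1
      ext p
      simp only [mem_union, mem_biUnion, mem_filter, mem_univ, true_and]
      constructor
      · intro h
        by_cases h1 : pc p.1 ∈ T
        · exact Or.inr ⟨_, h1, h, Or.inl rfl⟩
        by_cases h2 : pc p.2 ∈ T
        · exact Or.inr ⟨_, h2, h, Or.inr rfl⟩
        exact Or.inl ⟨h, h1, h2⟩
      · rintro (h | ⟨a, -, h, -⟩)
        · exact h.1
        · exact h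
    · rw [Finset.disjoint_left]
      intro p hp hp'
      simp only [mem_biUnion, mem_filter, mem_univ, true_and] at hp hp'
      obtain ⟨a, ha, -, rfl | rfl⟩ := hp'
      · exact hp.2.1 ha
      · exact hp.2.2 ha
  · intro a ha b hb hab
    rw [Function.onFun, Finset.disjoint_left]
    intro p hp hp'
    simp only [mem_filter, mem_univ, true_and] at hp hp'
    obtain ⟨h, h1⟩ := hp
    obtain ⟨-, h2⟩ := hp'
    rcases h1 with rfl | rfl <;> rcases h2 with rfl | rfl
    · exact hab rfl
    · exact hab (hind _ _ h ha hb)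
    · exact hab (hind _ _ h hb ha).symm
    · exact hab rfl

theorem switch_tot (hdec : IsDec G pc Gd tg K D) (hT : T ⊆ Gd)
    (hind : ∀ u w, G.Adj u w → pc u ∈ T → pc w ∈ T → pc u = pc w) {a : Fin n} (ha : a ∈ T) :
    (tot (quot G (rho pc tg T)) pc a : ℤ) =
      if tg a = none then 0 else 2 * ((onb G pc a).card : ℤ) := by
  set G0 := quot G (rho pc tg T) with hG0
  cases hta : tg a with
  | none =>
    rw [if_pos rfl]
    unfold tot
    rw [Nat.cast_eq_zero, Finset.card_eq_zero, Finset.filter_eq_empty_iff]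
    rintro p - ⟨h, h1 | h1⟩
    · rw [hG0, switch_adj_in hdec hT hind (by rw [h1]; exact ha), h1, hta] at h
      exact absurd h.1 (by simp)
    · have h := h.symm
      rw [hG0, switch_adj_in hdec hT hind (by rw [h1]; exact ha), h1, hta] at h
      exact absurd h.1 (by simp)
  | some v =>
    rw [if_neg (by simp)]
    have hv : pc v = a := hdec.tg_mem a (hT ha) v hta
    have hadj : ∀ w, G0.Adj v w ↔ w ∈ onb G pc a := by
      intro w
      rw [hG0, switch_adj_in hdec hT hind (by rw [hv]; exact ha)]
      simp only [onb, mem_filter, mem_univ, true_and]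
      rw [hv]
      constructor
      · rintro ⟨-, h2, h3⟩
        exact ⟨fun h => h2 (h ▸ ha), h3⟩
      · rintro ⟨h1, u, hu, huw⟩
        refine ⟨hta, fun h => h1 ?_, u, hu, huw⟩
        rw [← hind u w huw (by rw [hu]; exact ha) h, hu]
    have hne : ∀ u w, G0.Adj u w → pc u = a → u = v := by
      intro u w h hu
      rw [hG0, switch_adj_in hdec hT hind (by rw [hu]; exact ha), hu, hta] at h
      simpa using h.1.symm
    have hvn : v ∉ onb G pc a := by
      simp [onb, hv]
    have : (univ.filter fun p : Fin n × Fin n => G0.Adj p.1 p.2 ∧ (pc p.1 = a ∨ pc p.2 = a)) =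
        (onb G pc a).image (fun w => (v, w)) ∪ (onb G pc a).image (fun w => (w, v)) := by
      ext ⟨p, q⟩
      simp only [mem_filter, mem_univ, true_and, mem_union, mem_image, Prod.mk.injEq]
      constructor
      · rintro ⟨h, h1 | h1⟩
        · have := hne p q h h1
          subst this
          exact Or.inl ⟨q, (hadj q).1 h, rfl, rfl⟩
        · have := hne q p h.symm h1
          subst this
          exact Or.inr ⟨p, (hadj p).1 h.symm, rfl, rfl⟩
      · rintro (⟨w, hw, rfl, rfl⟩ | ⟨w, hw, rfl, rfl⟩)
        · exact ⟨(hadj w).2 hw, Or.inl hv⟩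
        · exact ⟨((hadj w).2 hw).symm, Or.inr hv⟩
    unfold tot
    rw [this, Finset.card_union_of_disjoint, Finset.card_image_of_injective,
      Finset.card_image_of_injective]
    · push_cast; ring
    · intro x y h; simpa using h
    · intro x y h; simpa using h
    · rw [Finset.disjoint_left]
      rintro ⟨p, q⟩ hp hp'
      simp only [mem_image, Prod.mk.injEq] at hp hp'
      obtain ⟨w, hw, rfl, rfl⟩ := hp
      obtain ⟨w', hw', rfl, rfl⟩ := hp'
      exact hvn hw

/-- The exact number of darts lost by reducing pairwise non-adjacent pieces. -/
theorem switch_dc (hdec : IsDec G pc Gd tg K D) (hT : T ⊆ Gd)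
    (hind : ∀ u w, G.Adj u w → pc u ∈ T → pc w ∈ T → pc u = pc w) :
    (dc G : ℤ) = dc (quot G (rho pc tg T)) + ∑ a ∈ T, lam G pc tg a := by
  rw [dc_split G pc T hind, dc_split (quot G (rho pc tg T)) pc T]
  · push_cast
    rw [Finset.sum_congr rfl fun a ha => switch_tot hdec hT hind ha]
    have : #{p : Fin n × Fin n | G.Adj p.1 p.2 ∧ pc p.1 ∉ T ∧ pc p.2 ∉ T} =
        #{p : Fin n × Fin n | (quot G (rho pc tg T)).Adj p.1 p.2 ∧ pc p.1 ∉ T ∧ pc p.2 ∉ T} := by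
      congr 1
      ext p
      simp only [mem_filter, mem_univ, true_and]
      constructor
      · rintro ⟨h, h1, h2⟩; exact ⟨(switch_adj_out hdec hT h1 h2).2 h, h1, h2⟩
      · rintro ⟨h, h1, h2⟩; exact ⟨(switch_adj_out hdec hT h1 h2).1 h, h1, h2⟩
    rw [this]
    unfold lam
    rw [Finset.sum_sub_distrib]
    ring
  · intro u w h hu hw
    rw [switch_adj_in hdec hT hind hu] at h
    exact absurd hw h.2.1

end Switch

/-! ### Bounded neighbourhoods in the reduced graph -/

/-- Vertices reachable from `v` by at most `k` steps, each leaving a vertex of degree at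
most `D`. -/
noncomputable def ball {n : ℕ} (G : SimpleGraph (Fin n)) (D : ℕ) : ℕ → Fin n → Finset (Fin n)
  | 0, v => {v}
  | k + 1, v => ball G D k v ∪ {u ∈ ball G D k v | (nb G u).card ≤ D}.biUnion (nb G)

theorem ball_card {n : ℕ} (G : SimpleGraph (Fin n)) (D k : ℕ) (v : Fin n) :
    (ball G D k v).card ≤ (1 + D) ^ k := by
  induction k with
  | zero => simp [ball]
  | succ k ih =>
    unfold ball
    refine (Finset.card_union_le _ _).trans ?_
    have := Finset.card_biUnion_le_card_mul {u ∈ ball G D k v | (nb G u).card ≤ D} (nb G) D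
      (fun u hu => (Finset.mem_filter.1 hu).2)
    have h2 := Finset.card_filter_le (ball G D k v) (fun u => (nb G u).card ≤ D)
    calc _ ≤ (ball G D k v).card + (ball G D k v).card * D :=
          Nat.add_le_add_left (this.trans (Nat.mul_le_mul_right _ h2)) _
      _ = (ball G D k v).card * (1 + D) := by ring
      _ ≤ (1 + D) ^ k * (1 + D) := Nat.mul_le_mul_right _ ih
      _ = _ := by ring

theorem ball_mono {n : ℕ} (G : SimpleGraph (Fin n)) (D : ℕ) (v : Fin n) {k k' : ℕ} (h : k ≤ k') :
    ball G D k v ⊆ ball G D k' v := by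
  induction h with
  | refl => exact Finset.Subset.refl _
  | step _ ih => exact ih.trans (by rw [ball]; exact Finset.subset_union_left)

theorem ball_step {n : ℕ} {G : SimpleGraph (Fin n)} {D k : ℕ} {v u w : Fin n}
    (hu : u ∈ ball G D k v) (hd : (nb G u).card ≤ D) (huw : G.Adj u w) :
    w ∈ ball G D (k + 1) v := by
  rw [ball]
  refine Finset.mem_union_right _ (Finset.mem_biUnion.2 ⟨u, ?_, mem_nb.2 huw⟩)
  exact Finset.mem_filter.2 ⟨hu, hd⟩

/-- A connected set of low-degree vertices and its neighbourhood lie in a small ball. -/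
theorem ball_conn {n : ℕ} {G : SimpleGraph (Fin n)} {D : ℕ} {v : Fin n} {S : Finset (Fin n)}
    (hS : Conn G (S : Set (Fin n))) (hd : ∀ u ∈ S, (nb G u).card ≤ D) (hv : v ∈ S) :
    S ⊆ ball G D S.card v := by
  have key : ∀ k, S ⊆ ball G D k v ∨ k + 1 ≤ (S ∩ ball G D k v).card := by
    intro k
    induction k with
    | zero =>
      right
      exact Finset.card_pos.2 ⟨v, by simp [ball, hv]⟩
    | succ k ih =>
      rcases ih with h | h
      · exact Or.inl (h.trans (ball_mono G D v (Nat.le_succ k)))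
      · by_cases hsub : S ⊆ ball G D k v
        · exact Or.inl (hsub.trans (ball_mono G D v (Nat.le_succ k)))
        right
        obtain ⟨z, hz, hz'⟩ := Finset.not_subset.1 hsub
        have hv0 : v ∈ ball G D k v := ball_mono G D v (Nat.zero_le k) (by simp [ball])
        obtain ⟨x, hx, y, hy, hxA, hyA, hxy⟩ := hS.exists_cross (A := (ball G D k v : Set (Fin n)))
          (by simpa using hv) (by simpa using hz) (by simpa using hv0) (by simpa using hz')
        simp only [Finset.mem_coe] at hx hy hxA hyA
        have hy' := ball_step hxA (hd x hx) hxy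
        have hlt : (S ∩ ball G D k v).card < (S ∩ ball G D (k + 1) v).card := by
          refine Finset.card_lt_card ⟨Finset.inter_subset_inter_left
            (ball_mono G D v (Nat.le_succ k)), fun hss => hyA ?_⟩
          exact (Finset.mem_inter.1 (hss (Finset.mem_inter.2 ⟨hy, hy'⟩))).2
        omega
  rcases key S.card with h | h
  · exact h
  · have := Finset.card_le_card (Finset.inter_subset_left (s₁ := S) (s₂ := ball G D S.card v))
    omega

/-! ### Locality of reductions -/

/-- The graphs `G` and `G0` agree on all pairs not contained in `W`. -/
def Loc {V : Type*} (G G0 : SimpleGraph V) (W : Set V) : Prop :=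
  ∀ u w, ¬ (u ∈ W ∧ w ∈ W) → (G.Adj u w ↔ G0.Adj u w)

section Switch

variable {n : ℕ} {G : SimpleGraph (Fin n)} {pc : Fin n → Fin n} {Gd : Finset (Fin n)}
  {tg : Fin n → Option (Fin n)} {K D : ℕ} {T : Finset (Fin n)}

theorem onb_card_le (hdec : IsDec G pc Gd tg K D) {a : Fin n} (ha : a ∈ Gd) :
    (onb G pc a).card ≤ K * D := by
  have : onb G pc a ⊆ (univ.filter fun u => pc u = a).biUnion (nb G) := by
    intro w hw
    simp only [onb, mem_filter, mem_univ, true_and] at hw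
    obtain ⟨-, u, hu, huw⟩ := hw
    exact mem_biUnion.2 ⟨u, by simpa using hu, mem_nb.2 huw⟩
  refine (card_le_card this).trans ?_
  refine (card_biUnion_le_card_mul _ _ D fun u hu => hdec.deg u ?_).trans
    (Nat.mul_le_mul_right _ (hdec.size a ha))
  rw [(mem_filter.1 hu).2]; exact ha

/-- The neighbourhood of a reduced piece is found in the reduced graph within a bounded ball. -/
theorem switch_anchor (hdec : IsDec G pc Gd tg K D) (hT : T ⊆ Gd)
    (hind : ∀ u w, G.Adj u w → pc u ∈ T → pc w ∈ T → pc u = pc w) {a : Fin n} (ha : a ∈ T) :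
    ∃ v, (∀ u, tg a = some u → u ∈ ball (quot G (rho pc tg T)) (K * D) (K + 1) v) ∧
      ∀ u w, pc u = a → G.Adj u w → pc w ≠ a →
        w ∈ ball (quot G (rho pc tg T)) (K * D) (K + 1) v := by
  set G0 := quot G (rho pc tg T) with hG0
  cases hta : tg a with
  | none =>
    obtain ⟨S, ⟨v, hv⟩, hc, hcard, hdeg, hS, hSn, hdom⟩ := hdec.twin a (hT ha) hta
    have hadj : ∀ u ∈ S, ∀ w, G0.Adj u w ↔ G.Adj u w := by
      intro u hu w
      have huT : pc u ∉ T := fun h => hS u hu (hT h)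
      by_cases hw : pc w ∈ T
      · constructor
        · intro h
          obtain ⟨-, -, z, hz, hzu⟩ := (switch_adj_in hdec hT hind hw).1 h.symm
          exact absurd (hT (hz ▸ hw)) (hSn u hu z hzu.symm)
        · intro h
          exact absurd (hT hw) (hSn u hu w h)
      · exact switch_adj_out hdec hT huT hw
    have hnb : ∀ u ∈ S, nb G0 u = nb G u := by
      intro u hu; ext w; rw [mem_nb, mem_nb, hadj u hu w]
    have hK : 1 ≤ K := (card_pos.2 ⟨v, hv⟩).trans_le hcard
    have hdeg' : ∀ u ∈ S, (nb G0 u).card ≤ K * D := by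
      intro u hu
      rw [hnb u hu]
      exact (hdeg u hu).trans (Nat.le_mul_of_pos_left _ hK)
    have hc' : Conn G0 (S : Set (Fin n)) := hc.mono fun u hu w _ h => (hadj u hu w).2 h
    have hsub := (ball_conn hc' hdeg' hv).trans (ball_mono G0 (K * D) v hcard)
    refine ⟨v, by simp, fun u w hu huw hw => ?_⟩
    obtain ⟨u', hu', h⟩ := hdom u w hu huw hw
    exact ball_step (hsub hu') (hdeg' u' hu') ((hadj u' hu' w).2 h)
  | some v =>
    have hv : pc v = a := hdec.tg_mem a (hT ha) v hta
    have hadj : ∀ w, G0.Adj v w ↔ w ∈ onb G pc a := by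
      intro w
      rw [hG0, switch_adj_in hdec hT hind (by rw [hv]; exact ha)]
      simp only [onb, mem_filter, mem_univ, true_and]
      rw [hv]
      constructor
      · rintro ⟨-, h2, h3⟩
        exact ⟨fun h => h2 (h ▸ ha), h3⟩
      · rintro ⟨h1, u, hu, huw⟩
        refine ⟨hta, fun h => h1 ?_, u, hu, huw⟩
        rw [← hind u w huw (by rw [hu]; exact ha) h, hu]
    have hnb : nb G0 v = onb G pc a := by
      ext w; rw [mem_nb, hadj]
    refine ⟨v, ?_, fun u w hu huw hw => ?_⟩
    · rintro u hu
      rw [Option.some.injEq] at hu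
      subst hu
      exact ball_mono G0 (K * D) v (Nat.zero_le _) (by simp [ball])
    · refine ball_mono G0 (K * D) v (show 0 + 1 ≤ K + 1 by omega) ?_
      refine ball_step (u := v) (by simp [ball]) (by rw [hnb]; exact onb_card_le hdec (hT ha)) ?_
      rw [hadj]
      simp only [onb, mem_filter, mem_univ, true_and]
      exact ⟨hw, u, hu, huw⟩

theorem switch_loc (hdec : IsDec G pc Gd tg K D) (hT : T ⊆ Gd)
    (hind : ∀ u w, G.Adj u w → pc u ∈ T → pc w ∈ T → pc u = pc w) :
    ∃ v : Fin n → Fin n, Loc G (quot G (rho pc tg T))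
      (freed pc tg T ∪ T.biUnion fun a => ball (quot G (rho pc tg T)) (K * D) (K + 1) (v a) :
        Finset (Fin n)) := by
  have hex : ∀ a, ∃ v, a ∈ T →
      (∀ u, tg a = some u → u ∈ ball (quot G (rho pc tg T)) (K * D) (K + 1) v) ∧
      ∀ u w, pc u = a → G.Adj u w → pc w ≠ a →
        w ∈ ball (quot G (rho pc tg T)) (K * D) (K + 1) v := by
    intro a
    by_cases ha : a ∈ T
    · obtain ⟨v, hv⟩ := switch_anchor hdec hT hind ha
      exact ⟨v, fun _ => hv⟩
    · exact ⟨a, fun h => absurd h ha⟩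
  choose v hv using hex
  refine ⟨v, ?_⟩
  set W := freed pc tg T ∪ T.biUnion fun a => ball (quot G (rho pc tg T)) (K * D) (K + 1) (v a)
    with hW
  have h1 : ∀ u, pc u ∈ T → u ∈ W := by
    intro u hu
    by_cases h : tg (pc u) = some u
    · exact mem_union_right _ (mem_biUnion.2 ⟨_, hu, (hv _ hu).1 u h⟩)
    · exact mem_union_left _ (by simp [freed, hu, h])
  have h2 : ∀ u w, pc u ∈ T → G.Adj u w → w ∈ W := by
    intro u w hu h
    by_cases hw : pc w = pc u
    · exact h1 w (by rw [hw]; exact hu)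
    · exact mem_union_right _ (mem_biUnion.2 ⟨_, hu, (hv _ hu).2 u w rfl h hw⟩)
  have key : ∀ u w, pc u ∈ T → w ∉ W →
      (G.Adj u w ↔ (quot G (rho pc tg T)).Adj u w) := by
    intro u w hu hw
    constructor
    · intro h; exact absurd (h2 u w hu h) hw
    · intro h
      obtain ⟨-, -, z, hz, hzw⟩ := (switch_adj_in hdec hT hind hu).1 h
      exact absurd (h2 z w (by rw [hz]; exact hu) hzw) hw
  intro u w hn
  simp only [mem_coe] at hn
  by_cases hu : pc u ∈ T
  · exact key u w hu fun hw => hn ⟨h1 u hu, hw⟩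
  by_cases hw : pc w ∈ T
  · rw [G.adj_comm u w, SimpleGraph.adj_comm _ u w]
    exact key w u hw fun hu => hn ⟨hu, h1 w hw⟩
  · exact (switch_adj_out hdec hT hu hw).symm

end Switch

/-! ### Existence of decompositions into reducible pieces -/

section Dec

variable {n : ℕ} {G : SimpleGraph (Fin n)} {pc : Fin n → Fin n} {X : Finset (Fin n)}

/-- Every dart not inside the complement of the pieces in `A` touches one of them. -/
theorem tot_sum_ge (hG : IsPlanar G) (pc : Fin n → Fin n) (A Y : Finset (Fin n))
    (hY : ∀ u, pc u ∉ A → u ∈ Y) : dc G ≤ ∑ a ∈ A, tot G pc a + 16 * Y.card := by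
  have h1 : dc (restr G (Y : Set (Fin n))) ≤ 16 * Y.card :=
    planar_dc_le (planar_mono (restr_le _ _) hG) Y fun u v h => by simpa using h.2.1
  refine le_trans ?_ (Nat.add_le_add_left h1 _)
  rw [dc_eq_card, dc_eq_card]
  refine (card_le_card (t := (A.biUnion fun a => univ.filter fun p : Fin n × Fin n =>
    G.Adj p.1 p.2 ∧ (pc p.1 = a ∨ pc p.2 = a)) ∪
    univ.filter fun p : Fin n × Fin n => (restr G (Y : Set (Fin n))).Adj p.1 p.2) ?_).trans
    ((card_union_le _ _).trans (Nat.add_le_add_right card_biUnion_le _))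
  intro p hp
  simp only [mem_filter, mem_univ, true_and, mem_union, mem_biUnion] at hp ⊢
  by_cases h1 : pc p.1 ∈ A
  · exact Or.inl ⟨_, h1, hp, Or.inl rfl⟩
  by_cases h2 : pc p.2 ∈ A
  · exact Or.inl ⟨_, h2, hp, Or.inr rfl⟩
  exact Or.inr ⟨hp, by simpa using hY _ h1, by simpa using hY _ h2⟩

theorem tot_sum_le (pc : Fin n → Fin n) (A : Finset (Fin n)) (hA : ∀ u, pc u ∈ A → u ∉ X) :
    ∑ a ∈ A, tot G pc a ≤ dc G + cr (restr G ((X : Set (Fin n))ᶜ)) pc := by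
  have h1 : ∀ a ∈ A, tot G pc a ≤
      #{p : Fin n × Fin n | (G.Adj p.1 p.2 ∧ pc p.1 ∈ A) ∧ pc p.1 = a} +
      #{p : Fin n × Fin n | (G.Adj p.1 p.2 ∧ pc p.2 ∈ A ∧ pc p.1 ≠ pc p.2) ∧ pc p.2 = a} := by
    intro a ha
    refine (card_le_card ?_).trans (card_union_le _ _)
    intro p hp
    simp only [mem_filter, mem_univ, true_and, mem_union] at hp ⊢
    obtain ⟨h, h1⟩ := hp
    by_cases h2 : pc p.1 = a
    · exact Or.inl ⟨⟨h, h2 ▸ ha⟩, h2⟩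
    · have h3 := h1.resolve_left h2
      exact Or.inr ⟨⟨h, h3 ▸ ha, by rw [h3]; exact h2⟩, h3⟩
  refine (sum_le_sum h1).trans ?_
  rw [sum_add_distrib]
  have e1 : ∑ a ∈ A, #{p : Fin n × Fin n | (G.Adj p.1 p.2 ∧ pc p.1 ∈ A) ∧ pc p.1 = a} =
      #{p : Fin n × Fin n | G.Adj p.1 p.2 ∧ pc p.1 ∈ A} := by
    rw [card_eq_sum_card_fiberwise (f := fun p => pc p.1) (t := A)
      (fun p hp => by simp at hp; exact hp.2)]
    simp only [filter_filter]
  have e2 : ∑ a ∈ A, #{p : Fin n × Fin n | (G.Adj p.1 p.2 ∧ pc p.2 ∈ A ∧ pc p.1 ≠ pc p.2) ∧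
      pc p.2 = a} = #{p : Fin n × Fin n | G.Adj p.1 p.2 ∧ pc p.2 ∈ A ∧ pc p.1 ≠ pc p.2} := by
    rw [card_eq_sum_card_fiberwise (f := fun p => pc p.2) (t := A)
      (fun p hp => by simp at hp; exact hp.2.1)]
    simp only [filter_filter]
  rw [e1, e2, dc_eq_card]
  unfold cr
  have e3 : #{p : Fin n × Fin n | G.Adj p.1 p.2 ∧ pc p.2 ∈ A ∧ pc p.1 ≠ pc p.2} ≤
      #{p : Fin n × Fin n | G.Adj p.1 p.2 ∧ pc p.1 ∉ A} +
      #{p : Fin n × Fin n | (restr G ((X : Set (Fin n))ᶜ)).Adj p.1 p.2 ∧ pc p.1 ≠ pc p.2} := by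
    refine (card_le_card ?_).trans (card_union_le _ _)
    intro p hp
    simp only [mem_filter, mem_univ, true_and, mem_union] at hp ⊢
    obtain ⟨h, h1, h2⟩ := hp
    by_cases h3 : pc p.1 ∈ A
    · exact Or.inr ⟨⟨h, by simpa using hA _ h3, by simpa using hA _ h1⟩, h2⟩
    · exact Or.inl ⟨h, h3⟩
  have e4 : #{p : Fin n × Fin n | G.Adj p.1 p.2 ∧ pc p.1 ∈ A} +
      #{p : Fin n × Fin n | G.Adj p.1 p.2 ∧ pc p.1 ∉ A} = #{p : Fin n × Fin n | G.Adj p.1 p.2} := by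
    rw [← card_filter_add_card_filter_not
      (s := univ.filter fun p : Fin n × Fin n => G.Adj p.1 p.2) (fun p => pc p.1 ∈ A),
      filter_filter, filter_filter]
  omega

/-- Contracting the pieces in `A` bounds the number of their neighbours in `X`, and hence, up to the
crossing darts, the number of all their neighbours outside. -/
theorem onb_sum_le (hG : IsPlanar G) (A : Finset (Fin n)) (hA : ∀ u, pc u ∈ A → u ∉ X)
    (hconn : ∀ a ∈ A, Conn G {u | pc u = a}) (v : ∀ a ∈ A, Fin n) (hv : ∀ a ha, pc (v a ha) = a) :
    ∑ a ∈ A, (onb G pc a).card ≤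
      16 * (X.card + A.card) + cr (restr G ((X : Set (Fin n))ᶜ)) pc := by
  have h1 : ∀ a ∈ A, (onb G pc a).card ≤ (pnb G pc X a).card +
      #{p : Fin n × Fin n | ((restr G ((X : Set (Fin n))ᶜ)).Adj p.1 p.2 ∧ pc p.1 ≠ pc p.2 ∧
        pc p.1 ∈ A) ∧ pc p.1 = a} := by
    intro a ha
    refine (card_le_card (t := pnb G pc X a ∪ (univ.filter fun p : Fin n × Fin n =>
      ((restr G ((X : Set (Fin n))ᶜ)).Adj p.1 p.2 ∧ pc p.1 ≠ pc p.2 ∧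
        pc p.1 ∈ A) ∧ pc p.1 = a).image Prod.snd) ?_).trans
      ((card_union_le _ _).trans (Nat.add_le_add_left card_image_le _))
    intro w hw
    simp only [onb, mem_filter, mem_univ, true_and] at hw
    obtain ⟨h1, u, hu, huw⟩ := hw
    by_cases hwX : w ∈ X
    · exact mem_union_left _ (by simp only [pnb, mem_filter]; exact ⟨hwX, u, hu, huw⟩)
    · refine mem_union_right _ (mem_image.2 ⟨(u, w), ?_, rfl⟩)
      simp only [mem_filter, mem_univ, true_and]
      exact ⟨⟨⟨huw, by simpa using hA u (hu ▸ ha), by simpa using hwX⟩, by rw [hu]; exact h1.symm,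
        hu ▸ ha⟩, hu⟩
  refine (sum_le_sum h1).trans ?_
  rw [sum_add_distrib]
  refine Nat.add_le_add ?_ ?_
  · let tg : Fin n → Option (Fin n) := fun a => if h : a ∈ A then some (v a h) else none
    let ρ : Fin n → Option (Fin n) := fun u => if u ∈ X then some u else tg (pc u)
    have htg : ∀ a u, tg a = some u → a ∈ A ∧ pc u = a := by
      intro a u h
      by_cases ha : a ∈ A
      · simp only [tg, ha, dif_pos, Option.some.injEq] at h
        exact ⟨ha, by rw [← h, hv]⟩
      · simp [tg, ha] at h
    have hQ : IsPlanar (quot G ρ) := by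
      refine quot_planar ρ (fun u => ?_) hG
      by_cases hu : u ∈ X
      · have : {w | ρ w = some u} = {u} := by
          ext w
          simp only [Set.mem_ofPred_eq, Set.mem_singleton_iff, ρ]
          split_ifs with hw
          · simp
          · constructor
            · intro h
              obtain ⟨h1, h2⟩ := htg _ _ h
              exact absurd hu (hA u (h2 ▸ h1))
            · rintro rfl; exact absurd hu hw
        rw [this]; exact conn_singleton _ _
      · by_cases hu2 : tg (pc u) = some u
        · have : {w | ρ w = some u} = {w | pc w = pc u} := by
            ext w
            simp only [Set.mem_ofPred_eq, ρ]
            split_ifs with hw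
            · constructor
              · intro h; rw [Option.some.injEq] at h; exact absurd (h ▸ hw) hu
              · intro h
                exact absurd hw (hA w (h ▸ (htg _ _ hu2).1))
            · constructor
              · intro h; exact (htg _ _ h).2.symm
              · intro h; rw [h]; exact hu2
          rw [this]; exact hconn _ (htg _ _ hu2).1
        · have : {w | ρ w = some u} = ∅ := by
            refine Set.eq_empty_of_forall_notMem fun w hw => ?_
            simp only [Set.mem_ofPred_eq, ρ] at hw
            split_ifs at hw with h
            · rw [Option.some.injEq] at hw; exact hu (hw ▸ h)
            · rw [(htg _ _ hw).2] at hu2; exact hu2 hw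
          rw [this]; exact conn_empty _
    let vs : Finset (Fin n) := A.attach.image fun a => v a.1 a.2
    have hvs : vs.card = A.card := by
      rw [card_image_of_injective, card_attach]
      intro a b h
      have := congrArg pc h
      simp only [hv] at this
      exact Subtype.ext this
    have hdc : dc (quot G ρ) ≤ 16 * (X.card + A.card) := by
      refine (planar_dc_le hQ (X ∪ vs) ?_).trans
        (Nat.mul_le_mul_left _ ((card_union_le _ _).trans (by rw [hvs])))
      rintro u w ⟨-, x, y, hx, -, -⟩
      simp only [ρ] at hx
      split_ifs at hx with h
      · rw [Option.some.injEq] at hx; exact mem_union_left _ (hx ▸ h)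
      · have ha := (htg _ _ hx).1
        simp only [tg, ha, dif_pos, Option.some.injEq] at hx
        exact mem_union_right _ (mem_image.2 ⟨⟨_, ha⟩, mem_attach _ _, hx⟩)
    refine le_trans ?_ hdc
    calc ∑ a ∈ A, (pnb G pc X a).card = ∑ a ∈ A.attach, (pnb G pc X a.1).card :=
          (sum_attach A fun a => (pnb G pc X a).card).symm
      _ ≤ ∑ a ∈ A.attach, (nb (quot G ρ) (v a.1 a.2)).card := by
          refine sum_le_sum fun a _ => card_le_card fun x hx => ?_
          simp only [pnb, mem_filter] at hx
          obtain ⟨hxX, u, hu, hux⟩ := hx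
          have hvX : v a.1 a.2 ∉ X := hA _ (by rw [hv]; exact a.2)
          have huX : u ∉ X := hA _ (by rw [hu]; exact a.2)
          rw [mem_nb]
          refine ⟨fun h => hvX (h ▸ hxX), u, x, ?_, by simp [ρ, hxX], hux⟩
          simp only [ρ, huX, if_false, tg]
          rw [hu]
          simp
      _ = ∑ u ∈ vs, (nb (quot G ρ) u).card := by
          rw [sum_image]
          intro a _ b _ h
          have := congrArg pc h
          simp only [hv] at this
          exact Subtype.ext this
      _ ≤ dc (quot G ρ) := sum_le_sum_of_subset (subset_univ _)
  · have e1 : ∑ a ∈ A, #{p : Fin n × Fin n | ((restr G ((X : Set (Fin n))ᶜ)).Adj p.1 p.2 ∧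
        pc p.1 ≠ pc p.2 ∧ pc p.1 ∈ A) ∧ pc p.1 = a} =
        #{p : Fin n × Fin n | (restr G ((X : Set (Fin n))ᶜ)).Adj p.1 p.2 ∧
        pc p.1 ≠ pc p.2 ∧ pc p.1 ∈ A} := by
      rw [card_eq_sum_card_fiberwise (f := fun p => pc p.1) (t := A)
        (fun p hp => by simp at hp; exact hp.2.2)]
      simp only [filter_filter]
    rw [e1]
    refine card_le_card fun p hp => ?_
    simp only [mem_filter, mem_univ, true_and] at hp ⊢
    exact ⟨hp.1, hp.2.1⟩

end Dec

set_option maxHeartbeats 800000 in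
/-- From a partition of the low-degree vertices into connected pieces one obtains reducible
pieces: those with at least `K0` vertices are contracted; the smaller ones attached only to the
set `X` of high-degree vertices are deleted, except for one of each attachment set. -/
theorem dec_core {n : ℕ} {G : SimpleGraph (Fin n)} (hG : IsPlanar G) {D K K0 : ℕ} (hK0 : 2 ≤ K0)
    (hK : K0 ≤ K) (X : Finset (Fin n)) (hX : ∀ u, u ∉ X → (nb G u).card ≤ D) (pc : Fin n → Fin n)
    (hconn : ∀ a, Conn (restr G ((X : Set (Fin n))ᶜ)) {u | pc u = a})
    (hsize : ∀ a, #{u | pc u = a} ≤ K) :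
    ∃ (Gd : Finset (Fin n)) (tg : Fin n → Option (Fin n)) (y bg : ℕ), IsDec G pc Gd tg K D ∧
      y ≤ X.card + K0 * cr (restr G ((X : Set (Fin n))ᶜ)) pc +
        K0 * ((2 ^ 16 + 16) * X.card + 1) ∧
      n ≤ ∑ a ∈ Gd, sz pc tg a + y + bg ∧ ∑ a ∈ Gd, sz pc tg a ≤ n ∧ bg * K0 ≤ n ∧
      (dc G : ℤ) - 16 * y - 2 * (16 * (X.card + bg) + cr (restr G ((X : Set (Fin n))ᶜ)) pc) ≤
        ∑ a ∈ Gd, lam G pc tg a ∧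
      ∑ a ∈ Gd, lam G pc tg a ≤ dc G + cr (restr G ((X : Set (Fin n))ᶜ)) pc := by
  set L := restr G ((X : Set (Fin n))ᶜ) with hL
  have hconnG : ∀ a, Conn G {u | pc u = a} := fun a => (hconn a).mono fun _ _ _ _ h => h.1
  have hsing : ∀ x ∈ X, ∀ u, pc u = pc x → u = x := by
    intro x hx u hu
    by_contra hne
    obtain ⟨z, -, hz⟩ := (hconn (pc x)).exists_adj (u := x) (w := u) rfl hu (Ne.symm hne)
    exact hz.2.1 (by simpa using hx)
  let light : Fin n → Prop := fun a => (∃ u, pc u = a) ∧ ∀ u, pc u = a → u ∉ X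
  have hlight : ∀ u, u ∉ X → light (pc u) := by
    intro u hu
    refine ⟨⟨u, rfl⟩, fun x hx hxX => hu ?_⟩
    rw [hsing x hxX u hx.symm]; exact hxX
  let dirty : Fin n → Prop := fun a => ∃ u w, pc u = a ∧ L.Adj u w ∧ pc w ≠ a
  let Big : Finset (Fin n) := {a | light a ∧ K0 ≤ #{u | pc u = a}}
  let Cl : Finset (Fin n) := {a | light a ∧ #{u | pc u = a} < K0 ∧ ¬ dirty a}
  have hBig : ∀ a, a ∈ Big ↔ light a ∧ K0 ≤ #{u | pc u = a} := by simp [Big]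
  have hCl : ∀ a, a ∈ Cl ↔ light a ∧ #{u | pc u = a} < K0 ∧ ¬ dirty a := by simp [Cl]
  obtain ⟨Rp', hRp', hbij⟩ := Set.exists_subset_bijOn (Cl : Set (Fin n)) (pnb G pc X)
  obtain ⟨Rp, rfl⟩ : ∃ Rp : Finset (Fin n), (Rp : Set (Fin n)) = Rp' :=
    ⟨Rp'.toFinset, by simp⟩
  have hRp : ∀ a ∈ Rp, a ∈ Cl := fun a ha => by simpa using hRp' (by simpa using ha)
  have hrep : ∀ a ∈ Cl, ∃ a' ∈ Rp, pnb G pc X a' = pnb G pc X a := by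
    intro a ha
    obtain ⟨a', ha', h⟩ := hbij.surjOn (Set.mem_image_of_mem _ (by simpa using ha))
    exact ⟨a', by simpa using ha', h⟩
  have hclean : ∀ a ∈ Cl, ∀ u w, pc u = a → G.Adj u w → pc w ≠ a → w ∈ X := by
    intro a ha u w hu huw hw
    obtain ⟨h1, -, h3⟩ := (hCl a).1 ha
    by_contra hwX
    exact h3 ⟨u, w, hu, ⟨huw, by simpa using h1.2 u hu, by simpa using hwX⟩, hw⟩
  have hRcard : Rp.card ≤ (2 ^ 16 + 16) * X.card + 1 :=
    twin_lemma hG pc X Rp (fun a _ => hconnG a)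
      (fun u hu => ((hCl _).1 (hRp _ hu)).1.2 u rfl) hbij.injOn
  have hvex : ∀ a, a ∈ Big → ∃ u, pc u = a := fun a ha => ((hBig a).1 ha).1.1
  choose v hv using hvex
  let tg : Fin n → Option (Fin n) := fun a => if h : a ∈ Big then some (v a h) else none
  let Gd := Big ∪ (Cl \ Rp)
  have hGdl : ∀ a ∈ Gd, light a := by
    intro a ha
    rcases mem_union.1 ha with h | h
    · exact ((hBig a).1 h).1
    · exact ((hCl a).1 (mem_sdiff.1 h).1).1
  have hGdX : ∀ u, pc u ∈ Gd → u ∉ X := fun u hu => (hGdl _ hu).2 u rfl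
  have htg : ∀ a u, tg a = some u → ∃ h : a ∈ Big, u = v a h := by
    intro a u h
    by_cases ha : a ∈ Big
    · simp only [tg, ha, dif_pos, Option.some.injEq] at h
      exact ⟨ha, h.symm⟩
    · simp [tg, ha] at h
  have htgn : ∀ a, tg a = none ↔ a ∉ Big := by
    intro a
    by_cases ha : a ∈ Big <;> simp [tg, ha]
  let dt : Finset (Fin n) := {a | dirty a ∧ #{u | pc u = a} < K0}
  let Y : Finset (Fin n) := X ∪ (dt ∪ Rp).biUnion fun a => {u | pc u = a}
  have hY : ∀ u, pc u ∉ Gd → u ∈ Y := by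
    intro u hu
    by_cases huX : u ∈ X
    · exact mem_union_left _ huX
    refine mem_union_right _ (mem_biUnion.2 ⟨pc u, ?_, by simp⟩)
    have hl := hlight u huX
    have hb : ¬ K0 ≤ #{w | pc w = pc u} := fun h =>
      hu (mem_union_left _ ((hBig _).2 ⟨hl, h⟩))
    push Not at hb
    by_cases hd : dirty (pc u)
    · exact mem_union_left _ (by simp only [dt, mem_filter, mem_univ, true_and]; exact ⟨hd, hb⟩)
    · refine mem_union_right _ (by_contra fun hr => hu (mem_union_right _ (mem_sdiff.2 ⟨?_, hr⟩)))
      exact (hCl _).2 ⟨hl, hb, hd⟩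
  have hdt : dt.card ≤ cr L pc := by
    refine (card_le_card (t := (univ.filter fun p : Fin n × Fin n =>
      L.Adj p.1 p.2 ∧ pc p.1 ≠ pc p.2).image fun p => pc p.1) ?_).trans card_image_le
    intro a ha
    simp only [dt, mem_filter, mem_univ, true_and] at ha
    obtain ⟨⟨u, w, hu, huw, hw⟩, -⟩ := ha
    refine mem_image.2 ⟨(u, w), ?_, hu⟩
    simp only [mem_filter, mem_univ, true_and]
    exact ⟨huw, by rw [hu]; exact hw.symm⟩
  have hYcard : Y.card ≤ X.card + K0 * cr L pc + K0 * ((2 ^ 16 + 16) * X.card + 1) := by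
    have h1 : ((dt ∪ Rp).biUnion fun a => ({u | pc u = a} : Finset (Fin n))).card ≤
        (dt ∪ Rp).card * K0 := by
      refine card_biUnion_le_card_mul _ _ _ fun a ha => ?_
      rcases mem_union.1 ha with h | h
      · exact (mem_filter.1 h).2.2.le
      · exact ((hCl a).1 (hRp a h)).2.1.le
    have h2 := card_union_le dt Rp
    have h3 := card_union_le X ((dt ∪ Rp).biUnion fun a => ({u | pc u = a} : Finset (Fin n)))
    have h4 : (dt ∪ Rp).card * K0 ≤ (cr L pc + ((2 ^ 16 + 16) * X.card + 1)) * K0 :=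
      Nat.mul_le_mul_right _ (by omega)
    calc Y.card ≤ _ := h3
      _ ≤ X.card + (cr L pc + ((2 ^ 16 + 16) * X.card + 1)) * K0 := by omega
      _ = _ := by ring
  have hlamsum : ∑ a ∈ Gd, lam G pc tg a =
      (∑ a ∈ Gd, tot G pc a : ℕ) - 2 * (∑ a ∈ Big, (onb G pc a).card : ℕ) := by
    unfold lam
    rw [sum_sub_distrib]
    push_cast
    congr 1
    rw [mul_sum]
    simp only [htgn]
    rw [← sum_subset (subset_union_left : Big ⊆ Gd)]
    · refine sum_congr rfl fun a ha => ?_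
      rw [if_neg (by simpa using ha)]
    · intro a _ ha
      rw [if_pos ha]
  refine ⟨Gd, tg, Y.card, Big.card, ⟨?_, ?_, ?_, ?_, ?_, ?_⟩, hYcard, ?_, ?_, ?_, ?_, ?_⟩
  · exact fun a _ => hconnG a
  · exact fun a _ => hsize a
  · exact fun u hu => hX u (hGdX u hu)
  · intro a _ u h
    obtain ⟨ha, rfl⟩ := htg a u h
    exact hv a ha
  · intro a ha
    by_cases hb : a ∈ Big
    · have := ((hBig a).1 hb).2
      obtain ⟨u, hu, hne⟩ := Finset.exists_mem_ne (s := {u | pc u = a}) (by omega) (v a hb)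
      refine ⟨u, by simpa using hu, ?_⟩
      simp only [tg, hb, dif_pos, ne_eq, Option.some.injEq]
      exact hne.symm
    · obtain ⟨u, hu⟩ := (hGdl a ha).1
      exact ⟨u, hu, by rw [(htgn a).2 hb]; simp⟩
  · intro a ha hn
    have hb := (htgn a).1 hn
    obtain ⟨haC, haR⟩ := mem_sdiff.1 ((mem_union.1 ha).resolve_left hb)
    obtain ⟨a', ha', hpn⟩ := hrep a haC
    have ha'C := hRp a' ha'
    obtain ⟨hl, hc, -⟩ := (hCl a').1 ha'C
    have ha'G : a' ∉ Gd := by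
      intro h
      rcases mem_union.1 h with h | h
      · exact absurd ((hBig a').1 h).2 (by omega)
      · exact (mem_sdiff.1 h).2 ha'
    refine ⟨({u | pc u = a'} : Finset (Fin n)), ?_, ?_, by omega, ?_, ?_, ?_, ?_⟩
    · obtain ⟨u, hu⟩ := hl.1
      exact ⟨u, by simpa using hu⟩
    · simpa using hconnG a'
    · intro u hu
      exact hX u (hl.2 u (by simpa using hu))
    · intro u hu
      rw [show pc u = a' by simpa using hu]; exact ha'G
    · intro u hu w huw
      have hu' : pc u = a' := by simpa using hu
      by_cases hw : pc w = a'
      · rw [hw]; exact ha'G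
      · intro h
        exact hGdX w h (hclean a' ha'C u w hu' huw hw)
    · intro u w hu huw hw
      have hwX := hclean a haC u w hu huw hw
      have : w ∈ pnb G pc X a := by
        simp only [pnb, mem_filter]; exact ⟨hwX, u, hu, huw⟩
      rw [← hpn] at this
      simp only [pnb, mem_filter] at this
      obtain ⟨-, u', hu', h⟩ := this
      exact ⟨u', by simpa using hu', h⟩
  · rw [← freed_card]
    let vs : Finset (Fin n) := Big.attach.image fun a => v a.1 a.2
    have hvs : vs.card ≤ Big.card := card_image_le.trans (by rw [card_attach])
    have : (univ : Finset (Fin n)) ⊆ freed pc tg Gd ∪ Y ∪ vs := by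
      intro u _
      by_cases hu : pc u ∈ Gd
      · by_cases h : tg (pc u) = some u
        · obtain ⟨hb, h'⟩ := htg _ _ h
          exact mem_union_right _ (mem_image.2 ⟨⟨_, hb⟩, mem_attach _ _, h'.symm⟩)
        · exact mem_union_left _ (mem_union_left _ (by simp [freed, hu, h]))
      · exact mem_union_left _ (mem_union_right _ (hY u hu))
    have h1 := card_le_card this
    have h2 := card_union_le (freed pc tg Gd ∪ Y) vs
    have h3 := card_union_le (freed pc tg Gd) Y
    rw [card_univ, Fintype.card_fin] at h1
    omega
  · rw [← freed_card]
    simpa using card_le_univ (freed pc tg Gd)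
  · have : ∑ a ∈ Big, #{u | pc u = a} ≤ n := by
      rw [← card_biUnion]
      · simpa using card_le_univ (Big.biUnion fun a => ({u | pc u = a} : Finset (Fin n)))
      · intro a _ b _ hab
        rw [Function.onFun, Finset.disjoint_left]
        intro u hu hu'
        simp only [mem_filter, mem_univ, true_and] at hu hu'
        exact hab (hu ▸ hu')
    refine le_trans ?_ this
    rw [← smul_eq_mul]
    exact card_nsmul_le_sum _ _ _ fun a ha => ((hBig a).1 ha).2
  · have h1 := tot_sum_ge hG pc Gd Y hY
    have h2 := onb_sum_le (X := X) (pc := pc) hG Big (fun u hu => ((hBig _).1 hu).1.2 u rfl)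
      (fun a _ => hconnG a) v hv
    rw [hlamsum]
    zify at h1 h2 ⊢
    linarith
  · have h1 := tot_sum_le (G := G) (X := X) pc Gd hGdX
    rw [hlamsum]
    zify at h1 ⊢
    have : (0 : ℤ) ≤ ∑ a ∈ Big, ((onb G pc a).card : ℤ) := sum_nonneg fun _ _ => Int.natCast_nonneg _
    linarith

/-- Every large planar graph decomposes, up to a proportion `ξ`, into reducible pieces. -/
theorem exists_dec (ξ : ℝ) (hξ : 0 < ξ) : ∃ K D N : ℕ, ∀ n ≥ N, ∀ G : SimpleGraph (Fin n),
    IsPlanar G → ∃ (pc : Fin n → Fin n) (Gd : Finset (Fin n)) (tg : Fin n → Option (Fin n)),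
      IsDec G pc Gd tg K D ∧ (1 - 2 * ξ) * n ≤ (∑ a ∈ Gd, sz pc tg a : ℕ) ∧
      ((∑ a ∈ Gd, sz pc tg a : ℕ) : ℝ) ≤ n ∧
      (dc G : ℝ) - 82 * ξ * n ≤ (∑ a ∈ Gd, lam G pc tg a : ℤ) ∧
      ((∑ a ∈ Gd, lam G pc tg a : ℤ) : ℝ) ≤ dc G + ξ * n := by
  obtain ⟨K1, hK1⟩ := exists_nat_gt (1 / ξ)
  set K0 := K1 + 2 with hK0
  have hK0ξ : 1 ≤ K0 * ξ := by
    have : 1 < K1 * ξ := by rwa [div_lt_iff₀ hξ] at hK1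
    rw [hK0]; push_cast; nlinarith
  set c : ℝ := 1 + K0 + K0 * (2 ^ 16 + 16) with hc
  have hc1 : 1 ≤ c := by rw [hc]; have : (0:ℝ) ≤ K0 := by positivity
                         nlinarith
  obtain ⟨q, hq⟩ := exists_nat_gt (2 * c / ξ)
  have hqξ : 2 * c ≤ q * ξ := by rw [div_lt_iff₀ hξ] at hq; exact hq.le
  have hq0 : (0 : ℝ) < q := lt_trans (by positivity) hq
  have hq0' : 0 < q := by exact_mod_cast hq0
  obtain ⟨R, hR⟩ := exists_pow_lt_of_lt_one (show (0 : ℝ) < 1 / (16 * q) by positivity)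
    (show (127 / 128 : ℝ) < 1 by norm_num)
  obtain ⟨K', hK'⟩ := hyperfinite (16 * q) R
  obtain ⟨N, hN⟩ := exists_nat_gt (2 * K0 / ξ)
  refine ⟨K' + K0, 16 * q, N, fun n hn G hG => ?_⟩
  have hnN : 2 * K0 ≤ n * ξ := by
    rw [div_lt_iff₀ hξ] at hN
    have : (N : ℝ) ≤ n := by exact_mod_cast hn
    nlinarith
  set X : Finset (Fin n) := {u | 16 * q < (nb G u).card} with hX
  set L := restr G ((X : Set (Fin n))ᶜ) with hL
  have hXlow : ∀ u, u ∉ X → (nb G u).card ≤ 16 * q := by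
    intro u hu; simpa [hX] using hu
  have hLd : ∀ u, (nb L u).card ≤ 16 * q := by
    intro u
    by_cases hu : u ∈ X
    · have : nb L u = ∅ := by
        refine eq_empty_of_forall_notMem fun w hw => ?_
        rw [mem_nb] at hw
        exact hw.2.1 (by simpa using hu)
      rw [this]; simp
    · exact (card_le_card (nb_mono (restr_le _ _) u)).trans (hXlow u hu)
  have hLp : IsPlanar L := planar_mono (restr_le _ _) hG
  obtain ⟨pc, hpc, hsize, hcr⟩ := hK' n L hLp hLd
  obtain ⟨Gd, tg, y, bg, hdec, h1, h2, h3, h4, h5, h6⟩ := dec_core hG (D := 16 * q)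
    (K := K' + K0) (K0 := K0) (by omega) (by omega) X hXlow pc hpc
    (fun a => (hsize a).trans (by omega))
  rw [← hL] at h1 h5 h6
  have hdcG : dc G ≤ 16 * n := by
    simpa using planar_dc_le hG univ (fun _ _ _ => mem_univ _)
  have hdcL : dc L ≤ 16 * n := by
    simpa using planar_dc_le hLp univ (fun _ _ _ => mem_univ _)
  have hXc : X.card * (16 * q) ≤ dc G := by
    rw [← smul_eq_mul]
    refine (card_nsmul_le_sum X (fun u => (nb G u).card) _ fun u hu => ?_).trans
      (sum_le_sum_of_subset (subset_univ _))
    simp only [hX, mem_filter, mem_univ, true_and] at hu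
    exact hu.le
  have hXr : (X.card : ℝ) * q ≤ n := by
    have : X.card * q ≤ n := by nlinarith
    exact_mod_cast this
  have hcrr : (cr L pc : ℝ) * q ≤ n := by
    have h : (128 : ℝ) ^ R * cr L pc ≤ 127 ^ R * (16 * n) := by
      have : 128 ^ R * cr L pc ≤ 127 ^ R * (16 * n) := hcr.trans (Nat.mul_le_mul_left _ hdcL)
      exact_mod_cast this
    have h' : (127 : ℝ) ^ R * (16 * q) < 128 ^ R := by
      rw [div_pow, div_lt_div_iff₀ (by positivity) (by positivity)] at hR
      linarith
    have h128 : (0 : ℝ) < 128 ^ R := by positivity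
    have hn0 : (0 : ℝ) ≤ n := by positivity
    refine le_of_mul_le_mul_left ?_ h128
    calc (128 : ℝ) ^ R * (cr L pc * q) = (128 ^ R * cr L pc) * q := by ring
      _ ≤ (127 ^ R * (16 * n)) * q := by gcongr
      _ = (127 ^ R * (16 * q)) * n := by ring
      _ ≤ 128 ^ R * n := by gcongr
  have hn0 : (0 : ℝ) ≤ n := by positivity
  have hqn : (n : ℝ) ≤ q * (ξ * n / (2 * c)) := by
    rw [← mul_div_assoc, le_div_iff₀ (by positivity)]
    nlinarith
  have hXξ : (X.card : ℝ) ≤ ξ * n / (2 * c) := by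
    refine le_of_mul_le_mul_left ?_ hq0
    linarith [mul_comm (X.card : ℝ) q]
  have hcrξ : (cr L pc : ℝ) ≤ ξ * n / (2 * c) := by
    refine le_of_mul_le_mul_left ?_ hq0
    linarith [mul_comm (cr L pc : ℝ) q]
  have hsmall : ξ * n / (2 * c) ≤ ξ * n := by
    refine div_le_self (by positivity) (by linarith)
  have hyξ : (y : ℝ) ≤ ξ * n := by
    have h1' : (y : ℝ) ≤ X.card + K0 * cr L pc + K0 * ((2 ^ 16 + 16) * X.card + 1) := by
      exact_mod_cast h1
    have hz : c * (ξ * n / (2 * c)) = ξ * n / 2 := by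
      have : c ≠ 0 := by positivity
      field_simp
    have h2' : (X.card : ℝ) + K0 * cr L pc + K0 * ((2 ^ 16 + 16) * X.card) ≤
        c * (ξ * n / (2 * c)) := by
      have e : c * (ξ * n / (2 * c)) = ξ * n / (2 * c) + K0 * (ξ * n / (2 * c)) +
          K0 * ((2 ^ 16 + 16) * (ξ * n / (2 * c))) := by
        generalize ξ * n / (2 * c) = z
        rw [hc]; ring
      rw [e]
      gcongr
    rw [hz] at h2'
    linarith
  have hbξ : (bg : ℝ) ≤ ξ * n := by
    have : (bg : ℝ) * K0 ≤ n := by exact_mod_cast h4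
    have hb0 : (0 : ℝ) ≤ bg := by positivity
    have hK00 : (0:ℝ) < K0 := by rw [hK0]; positivity
    refine le_of_mul_le_mul_left ?_ hK00
    nlinarith
  refine ⟨pc, Gd, tg, hdec, ?_, by exact_mod_cast h3, ?_, ?_⟩
  · have : (n : ℝ) ≤ (∑ a ∈ Gd, sz pc tg a : ℕ) + y + bg := by exact_mod_cast h2
    linarith
  · have : (dc G : ℝ) - 16 * y - 2 * (16 * (X.card + bg) + cr L pc) ≤
        (∑ a ∈ Gd, lam G pc tg a : ℤ) := by exact_mod_cast h5
    linarith
  · have : ((∑ a ∈ Gd, lam G pc tg a : ℤ) : ℝ) ≤ dc G + cr L pc := by exact_mod_cast h6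
    linarith

/-! ### Linearly many choices for each reduction -/

/-- A greedy count of the conflict-free systems of representatives of `r` large sets. -/
theorem greedy_count {α : Type*} [Fintype α] (cf : α → α → Prop) (A : Finset α) (κ Q R0 : ℕ)
    (hκ : ∀ a ∈ A, #{b | cf a b} ≤ κ) : ∀ (r : ℕ), r ≤ R0 → ∀ cls : Fin r → Finset α,
    (∀ i, cls i ⊆ A) → (∀ i, Q + R0 * κ ≤ (cls i).card) →
    Q ^ r ≤ #{g : Fin r → α | (∀ i, g i ∈ cls i) ∧ ∀ i j, i < j → ¬ cf (g j) (g i)} := by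
  intro r
  induction r with
  | zero =>
    intro _ cls _ _
    rw [pow_zero, Nat.one_le_iff_ne_zero, Finset.card_ne_zero]
    exact ⟨fun i => i.elim0, mem_filter.2 ⟨mem_univ _, fun i => i.elim0, fun i => i.elim0⟩⟩
  | succ r ih =>
    intro hr cls hA hcls
    have ih' := ih (by omega) (fun i => cls i.succ) (fun i => hA _) (fun i => hcls _)
    set S : Finset (Fin r → α) := {g : Fin r → α | (∀ i, g i ∈ cls i.succ) ∧
      ∀ i j, i < j → ¬ cf (g j) (g i)} with hS
    let Z : (Fin r → α) → Finset α := fun g => {x ∈ cls 0 | ∀ i, ¬ cf (g i) x}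
    have hZ : ∀ g ∈ S, Q ≤ (Z g).card := by
      intro g hg
      simp only [hS, mem_filter, mem_univ, true_and] at hg
      have hsub : cls 0 ⊆ Z g ∪ univ.biUnion fun i => univ.filter (cf (g i)) := by
        intro x hx
        by_cases h : ∀ i, ¬ cf (g i) x
        · exact mem_union_left _ (mem_filter.2 ⟨hx, h⟩)
        · push Not at h
          obtain ⟨i, hi⟩ := h
          exact mem_union_right _ (mem_biUnion.2 ⟨i, mem_univ _, by simpa using hi⟩)
      have h1 := card_le_card hsub
      have h2 := card_union_le (Z g) (univ.biUnion fun i => univ.filter (cf (g i)))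
      have h3 : (univ.biUnion fun i => univ.filter (cf (g i))).card ≤ r * κ := by
        have := card_biUnion_le_card_mul univ (fun i => univ.filter (cf (g i))) κ
          (fun i _ => hκ _ (hA _ (hg.1 i)))
        simpa using this
      have h4 := hcls 0
      have h5 : r * κ ≤ R0 * κ := Nat.mul_le_mul_right _ (by omega)
      omega
    calc Q ^ (r + 1) = Q ^ r * Q := pow_succ _ _
      _ ≤ S.card * Q := Nat.mul_le_mul_right _ ih'
      _ ≤ ∑ g ∈ S, (Z g).card := by
        rw [← smul_eq_mul]; exact card_nsmul_le_sum _ _ _ hZ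
      _ = (S.sigma Z).card := (card_sigma _ _).symm
      _ ≤ _ := by
        refine card_le_card_of_injOn (fun p => (Fin.cons p.2 p.1 : Fin (r + 1) → α)) ?_ ?_
        · rintro ⟨g, x⟩ hp
          simp only [hS, Z, coe_sigma, Set.mem_sigma_iff, mem_coe, mem_filter, mem_univ,
            true_and] at hp
          obtain ⟨⟨h1, h2⟩, h3, h4⟩ := hp
          simp only [coe_filter, mem_univ, true_and, Set.mem_ofPred_eq]
          constructor
          · intro i
            refine Fin.cases ?_ (fun i => ?_) i
            · simpa using h3
            · simpa using h1 i
          · intro i j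
            refine Fin.cases ?_ (fun j => ?_) j
            · intro h; exact absurd h (Fin.not_lt_zero i)
            refine Fin.cases ?_ (fun i => ?_) i
            · intro _; simpa using h4 j
            · intro h; simpa using h2 i j (by simpa using h)
        · rintro ⟨g, x⟩ _ ⟨g', x'⟩ _ h
          have := Fin.cons_inj.1 h
          simp only [Sigma.mk.injEq, heq_eq_eq]
          exact ⟨this.2, this.1⟩

/-- `Cert D k smin S0 η r G F`: there is a planar graph `G0` in which the vertices of `F` are
isolated, which has `j` edges fewer than `G`, with `j / |F|` well inside `(1, 3)`, and which differs
from `G` only inside the union of `F` and `r` bounded balls of `G0`. -/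
def Cert {n : ℕ} (D k smin S0 : ℕ) (η : ℝ) (r : ℕ) (G : SimpleGraph (Fin n))
    (F : Finset (Fin n)) : Prop :=
  ∃ (G0 : SimpleGraph (Fin n)) (v : Fin r → Fin n) (j : ℕ), IsPlanar G0 ∧
    (∀ u ∈ F, ∀ w, ¬ G0.Adj u w) ∧ smin ≤ F.card ∧ F.card ≤ S0 ∧
    edgeCount G = edgeCount G0 + j ∧ (1 + η) * F.card ≤ j ∧ (j : ℝ) ≤ (3 - η) * F.card ∧
    Loc G G0 (F ∪ univ.biUnion fun i => ball G0 D k (v i) : Finset (Fin n))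

section

variable {n : ℕ} {G : SimpleGraph (Fin n)} {pc : Fin n → Fin n} {Gd : Finset (Fin n)}
  {tg : Fin n → Option (Fin n)} {K D : ℕ}

theorem tot_le (hdec : IsDec G pc Gd tg K D) {a : Fin n} (ha : a ∈ Gd) :
    tot G pc a ≤ 2 * (K * D) := by
  set E : Finset (Fin n × Fin n) := {p | G.Adj p.1 p.2 ∧ pc p.1 = a} with hE
  have h1 : E.card ≤ K * D := by
    have : E ⊆ (univ.filter fun u => pc u = a).biUnion
        fun u => (nb G u).image fun w => (u, w) := by
      rintro ⟨u, w⟩ h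
      simp only [hE, mem_filter, mem_univ, true_and] at h
      exact mem_biUnion.2 ⟨u, by simpa using h.2, mem_image.2 ⟨w, mem_nb.2 h.1, rfl⟩⟩
    refine (card_le_card this).trans ?_
    refine (card_biUnion_le_card_mul _ _ D fun u hu => card_image_le.trans (hdec.deg u ?_)).trans
      (Nat.mul_le_mul_right _ (hdec.size a ha))
    rw [(mem_filter.1 hu).2]; exact ha
  have h2 : tot G pc a ≤ (E ∪ E.image Prod.swap).card := by
    refine card_le_card ?_
    rintro ⟨u, w⟩ h
    simp only [mem_filter, mem_univ, true_and] at h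
    rcases h with ⟨h, h' | h'⟩
    · exact mem_union_left _ (by simp only [hE, mem_filter, mem_univ, true_and]; exact ⟨h, h'⟩)
    · refine mem_union_right _ (mem_image.2 ⟨(w, u), ?_, rfl⟩)
      simp only [hE, mem_filter, mem_univ, true_and]; exact ⟨h.symm, h'⟩
  have h3 := card_union_le E (E.image Prod.swap)
  have h4 : (E.image Prod.swap).card ≤ E.card := card_image_le
  omega

theorem lam_le (hdec : IsDec G pc Gd tg K D) {a : Fin n} (ha : a ∈ Gd) :
    lam G pc tg a ≤ 2 * (K * D : ℕ) := by
  have h1 := tot_le hdec ha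
  unfold lam
  split_ifs <;> omega

theorem le_lam (hdec : IsDec G pc Gd tg K D) {a : Fin n} (ha : a ∈ Gd) :
    -(2 * (K * D : ℕ) : ℤ) ≤ lam G pc tg a := by
  have h1 := onb_card_le hdec ha
  unfold lam
  split_ifs <;> omega

theorem sz_le (hdec : IsDec G pc Gd tg K D) {a : Fin n} (ha : a ∈ Gd) : sz pc tg a ≤ K := by
  refine le_trans (card_le_card ?_) (hdec.size a ha)
  intro u hu
  simp only [mem_filter, mem_univ, true_and] at hu ⊢
  exact hu.1

theorem sz_pos (hdec : IsDec G pc Gd tg K D) {a : Fin n} (ha : a ∈ Gd) : 1 ≤ sz pc tg a := by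
  obtain ⟨u, hu, hu'⟩ := hdec.s_pos a ha
  exact card_pos.2 ⟨u, by simp only [mem_filter, mem_univ, true_and]; exact ⟨hu, hu'⟩⟩

/-- Reducing a conflict-free system of pieces of prescribed types. -/
theorem cert_count (hG : IsPlanar G) (hdec : IsDec G pc Gd tg K D) {smin S0 R0 r Q : ℕ} {η : ℝ}
    (hr : r ≤ R0) (cls : Fin r → Finset (Fin n)) (hcls : ∀ i, cls i ⊆ Gd)
    (hQ : ∀ i, Q + R0 * (1 + K * D) ≤ (cls i).card) (s : Fin r → ℕ) (lm : Fin r → ℤ)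
    (hs : ∀ i, ∀ a ∈ cls i, sz pc tg a = s i) (hlm : ∀ i, ∀ a ∈ cls i, lam G pc tg a = lm i)
    (hmin : smin ≤ ∑ i, s i) (hmax : ∑ i, s i ≤ S0)
    (hlo : 2 * (1 + η) * (∑ i, s i : ℕ) ≤ (∑ i, lm i : ℤ))
    (hhi : ((∑ i, lm i : ℤ) : ℝ) ≤ 2 * (3 - η) * (∑ i, s i : ℕ)) (hη : 0 < η) :
    Q ^ r ≤ S0 ^ r * #{F | Cert (K * D) (K + 1) smin S0 η r G F} := by
  obtain ⟨cf, hcfd⟩ : ∃ cf : Fin n → Fin n → Prop, ∀ a b, cf a b ↔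
      (a = b ∨ ∃ u w, pc u = a ∧ pc w = b ∧ G.Adj u w) := ⟨_, fun _ _ => Iff.rfl⟩
  have hcf : ∀ a ∈ Gd, #{b | cf a b} ≤ 1 + K * D := by
    intro a ha
    have : ({b | cf a b} : Finset (Fin n)) ⊆ {a} ∪ (onb G pc a).image pc := by
      intro b hb
      simp only [hcfd, mem_filter, mem_univ, true_and] at hb
      by_cases hab : a = b
      · exact mem_union_left _ (by simp [hab])
      · obtain ⟨u, w, hu, hw, h⟩ := hb.resolve_left hab
        refine mem_union_right _ (mem_image.2 ⟨w, ?_, hw⟩)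
        simp only [onb, mem_filter, mem_univ, true_and]
        exact ⟨by rw [hw]; exact Ne.symm hab, u, hu, h⟩
    refine (card_le_card this).trans ((card_union_le _ _).trans ?_)
    rw [card_singleton]
    exact Nat.add_le_add_left (card_image_le.trans (onb_card_le hdec ha)) _
  set S : Finset (Fin r → Fin n) := {g : Fin r → Fin n | (∀ i, g i ∈ cls i) ∧
    ∀ i j, i < j → ¬ cf (g j) (g i)} with hS
  have h1 : Q ^ r ≤ S.card := by
    convert greedy_count cf Gd (1 + K * D) Q R0 hcf r hr cls hcls hQ
  refine h1.trans ?_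
  have hSm : ∀ g, g ∈ S ↔ (∀ i, g i ∈ cls i) ∧ ∀ i j, i < j → ¬ cf (g j) (g i) := by simp [hS]
  let fr : (Fin r → Fin n) → Finset (Fin n) := fun g => freed pc tg (univ.image g)
  have hinj : ∀ g ∈ S, Function.Injective g := by
    intro g hg i j hij
    by_contra hne
    rcases lt_or_gt_of_ne hne with h | h
    · exact ((hSm g).1 hg).2 i j h ((hcfd _ _).2 (Or.inl hij.symm))
    · exact ((hSm g).1 hg).2 j i h ((hcfd _ _).2 (Or.inl hij))
  have hcard : ∀ g ∈ S, (fr g).card = ∑ i, s i := by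
    intro g hg
    rw [freed_card, sum_image fun i _ j _ h => hinj g hg h]
    exact sum_congr rfl fun i _ => hs i _ (((hSm g).1 hg).1 i)
  have hsub : ∀ g ∈ S, univ.image g ⊆ Gd := by
    intro g hg a ha
    obtain ⟨i, -, rfl⟩ := mem_image.1 ha
    exact hcls i (((hSm g).1 hg).1 i)
  refine (card_le_mul_card_image (f := fr) S (S0 ^ r) fun F hF => ?_).trans
    (Nat.mul_le_mul_left _ (card_le_card ?_))
  · obtain ⟨g0, hg0, rfl⟩ := mem_image.1 hF
    refine (card_le_card (t := Fintype.piFinset fun _ : Fin r => (fr g0).image pc) ?_).trans ?_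
    · intro g hg
      obtain ⟨hgS, hgF⟩ := mem_filter.1 hg
      refine Fintype.mem_piFinset.2 fun i => ?_
      obtain ⟨u, hu, hu'⟩ := hdec.s_pos (g i) (hcls i (((hSm g).1 hgS).1 i))
      refine mem_image.2 ⟨u, ?_, hu⟩
      rw [← hgF]
      simp only [fr, freed, mem_filter, mem_univ, true_and]
      exact ⟨mem_image.2 ⟨i, mem_univ _, hu.symm⟩, by rw [hu]; exact hu'⟩
    · rw [Fintype.card_piFinset]
      simp only [prod_const, card_univ, Fintype.card_fin]
      exact Nat.pow_le_pow_left (card_image_le.trans (by rw [hcard g0 hg0]; exact hmax)) _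
  · intro F hF
    obtain ⟨g, hg, rfl⟩ := mem_image.1 hF
    have hT := hsub g hg
    have hind : ∀ u w, G.Adj u w → pc u ∈ univ.image g → pc w ∈ univ.image g → pc u = pc w := by
      intro u w huw hu hw
      obtain ⟨i, -, hi⟩ := mem_image.1 hu
      obtain ⟨j, -, hj⟩ := mem_image.1 hw
      by_contra hne
      have hij : i ≠ j := by rintro rfl; exact hne (hi.symm.trans hj)
      rcases lt_or_gt_of_ne hij with h | h
      · exact ((hSm g).1 hg).2 i j h ((hcfd _ _).2
          (Or.inr ⟨w, u, hj.symm, hi.symm, huw.symm⟩))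
      · exact ((hSm g).1 hg).2 j i h ((hcfd _ _).2
          (Or.inr ⟨u, w, hi.symm, hj.symm, huw⟩))
    obtain ⟨v, hv⟩ := switch_loc hdec hT hind
    set G0 := quot G (rho pc tg (univ.image g)) with hG0
    have hdc := switch_dc hdec hT hind
    rw [sum_image fun i _ j _ h => hinj g hg h,
      sum_congr rfl fun i _ => hlm i _ (((hSm g).1 hg).1 i), ← hG0, dc_eq, dc_eq] at hdc
    have hpos : (0 : ℝ) ≤ (∑ i, lm i : ℤ) := le_trans (by positivity) hlo
    have hpos' : 0 ≤ ∑ i, lm i := by exact_mod_cast hpos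
    have hle : edgeCount G0 ≤ edgeCount G := by
      zify; push_cast at hdc; linarith
    obtain ⟨j, hj⟩ : ∃ j : ℕ, edgeCount G = edgeCount G0 + j :=
      ⟨edgeCount G - edgeCount G0, by omega⟩
    have hj2 : (∑ i, lm i : ℤ) = 2 * j := by
      rw [hj] at hdc; push_cast at hdc; linarith
    have hj2r : ((∑ i, lm i : ℤ) : ℝ) = 2 * j := by rw [hj2]; push_cast; ring
    simp only [mem_filter, mem_univ, true_and]
    refine ⟨G0, fun i => v (g i), j, switch_planar hdec hT hG, switch_isolated hdec hT,
      ?_, ?_, hj, ?_, ?_, ?_⟩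
    · rw [hcard g hg]; exact hmin
    · rw [hcard g hg]; exact hmax
    · rw [hcard g hg]; rw [hj2r] at hlo; linarith
    · rw [hcard g hg]; rw [hj2r] at hhi; linarith
    · have : (univ.image g).biUnion (fun a => ball G0 (K * D) (K + 1) (v a)) =
          univ.biUnion fun i => ball G0 (K * D) (K + 1) (v (g i)) := by
        rw [image_biUnion]
      rw [this] at hv
      exact hv

/-- Averaging: if a bounded weight `f` has linear sum then many labels of one type have positive
weight. -/
theorem many_of_type (A : Finset (Fin n)) (f : Fin n → ℝ) (ty : Fin n → ℕ × ℤ)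
    (Ty : Finset (ℕ × ℤ)) (hTy : ∀ a ∈ A, ty a ∈ Ty) {x Λ : ℝ} (hΛ : 0 < Λ)
    (hx : 0 < x) (hf : ∀ a ∈ A, f a ≤ Λ) (hsum : x ≤ ∑ a ∈ A, f a) :
    ∃ p ∈ Ty, x ≤ Λ * (Ty.card * (#{a ∈ A | 0 < f a ∧ ty a = p} : ℝ)) := by
  have h1 : ∑ a ∈ A, f a ≤ (#{a ∈ A | 0 < f a} : ℝ) * Λ := by
    rw [← nsmul_eq_mul, ← sum_const, sum_filter]
    refine sum_le_sum fun a ha => ?_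
    split_ifs with h
    · exact hf a ha
    · exact not_lt.1 h
  have hTyne : Ty.Nonempty := by
    rw [nonempty_iff_ne_empty]
    rintro rfl
    have : A = ∅ := eq_empty_of_forall_notMem fun a ha => by simpa using hTy a ha
    rw [this] at hsum; simp at hsum; linarith
  obtain ⟨p, hp, hmax⟩ := exists_max_image Ty
    (fun p => #{a ∈ A | 0 < f a ∧ ty a = p}) hTyne
  refine ⟨p, hp, ?_⟩
  have h2 : #{a ∈ A | 0 < f a} ≤ Ty.card * #{a ∈ A | 0 < f a ∧ ty a = p} := by
    rw [card_eq_sum_card_fiberwise (f := ty) (t := Ty)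
      (fun a ha => by simp at ha; exact hTy a ha.1)]
    rw [← smul_eq_mul]
    refine sum_le_card_nsmul _ _ _ fun p' hp' => ?_
    rw [filter_filter]
    exact hmax p' hp'
  have h2' : (#{a ∈ A | 0 < f a} : ℝ) ≤ Ty.card * (#{a ∈ A | 0 < f a ∧ ty a = p} : ℝ) := by
    exact_mod_cast h2
  nlinarith

end

/-! ### Reductions of the right density -/

/-- Two types of pieces, one losing more than `1 + η` edges per freed vertex and the other less
than `3 - η`, have a bounded combination doing both. -/
theorem mix_types {K Λ smin s1 s2 : ℕ} {l1 l2 : ℤ} {η : ℝ} (hη1 : η ≤ 1)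
    (h1 : 1 ≤ s1) (h2 : 1 ≤ s2) (h2K : s2 ≤ K) (hl1 : l1 ≤ Λ) (hl2 : -(Λ : ℤ) ≤ l2)
    (hlo : 2 * (1 + η) * s1 ≤ l1) (hhi : (l2 : ℝ) ≤ 2 * (3 - η) * s2) :
    ∃ r1 r2 : ℕ, r1 + r2 ≤ smin * (4 * K + 2 * Λ + 1) ∧ smin ≤ r1 * s1 + r2 * s2 ∧
      2 * (1 + η) * (r1 * s1 + r2 * s2 : ℕ) ≤ (r1 * l1 + r2 * l2 : ℤ) ∧
      ((r1 * l1 + r2 * l2 : ℤ) : ℝ) ≤ 2 * (3 - η) * (r1 * s1 + r2 * s2 : ℕ) := by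
  have hs : (0 : ℝ) ≤ smin := by positivity
  have hs1 : (1 : ℝ) ≤ s1 := by exact_mod_cast h1
  have hs2 : (1 : ℝ) ≤ s2 := by exact_mod_cast h2
  by_cases ha : l1 ≤ 4 * s1
  · refine ⟨smin, 0, by nlinarith, by nlinarith, ?_, ?_⟩
    · push_cast; nlinarith
    · have : (l1 : ℝ) ≤ 4 * s1 := by exact_mod_cast ha
      have h' : (l1 : ℝ) ≤ 2 * (3 - η) * s1 := by nlinarith
      push_cast; nlinarith
  by_cases hb : 4 * s2 ≤ l2
  · refine ⟨0, smin, by nlinarith, by nlinarith, ?_, ?_⟩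
    · have : (4 * s2 : ℝ) ≤ l2 := by exact_mod_cast hb
      have h' : 2 * (1 + η) * s2 ≤ (l2 : ℝ) := by nlinarith
      push_cast; nlinarith
    · push_cast; nlinarith
  push Not at ha hb
  obtain ⟨x, hx⟩ := Int.eq_ofNat_of_zero_le (show 0 ≤ 4 * (s2 : ℤ) - l2 by omega)
  obtain ⟨y, hy⟩ := Int.eq_ofNat_of_zero_le (show 0 ≤ l1 - 4 * (s1 : ℤ) by omega)
  have hx1 : 1 ≤ x := by omega
  have hl1' : l1 = 4 * s1 + y := by omega
  have hl2' : l2 = 4 * s2 - x := by omega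
  have key : ((smin * x : ℕ) * l1 + (smin * y : ℕ) * l2 : ℤ) =
      4 * (smin * x * s1 + smin * y * s2 : ℕ) := by
    rw [hl1', hl2']; push_cast; ring
  have key' : (((smin * x : ℕ) * l1 + (smin * y : ℕ) * l2 : ℤ) : ℝ) =
      4 * (smin * x * s1 + smin * y * s2 : ℕ) := by
    rw [key]; push_cast; ring
  have hnn : (0 : ℝ) ≤ (smin * x * s1 + smin * y * s2 : ℕ) := by positivity
  refine ⟨smin * x, smin * y, ?_, ?_, ?_, ?_⟩
  · rw [← mul_add]
    exact Nat.mul_le_mul_left _ (by omega)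
  · calc smin = smin * 1 * 1 := by ring
      _ ≤ smin * x * s1 := by gcongr
      _ ≤ _ := Nat.le_add_right _ _
  · rw [key']; nlinarith
  · rw [key']; nlinarith

theorem cert_count_two {n : ℕ} {G : SimpleGraph (Fin n)} {pc : Fin n → Fin n}
    {Gd : Finset (Fin n)} {tg : Fin n → Option (Fin n)} {K D : ℕ}
    (hG : IsPlanar G) (hdec : IsDec G pc Gd tg K D) {smin S0 R0 r1 r2 Q s1 s2 : ℕ} {l1 l2 : ℤ}
    {η : ℝ} (hr : r1 + r2 ≤ R0) {C1 C2 : Finset (Fin n)} (hC1 : C1 ⊆ Gd) (hC2 : C2 ⊆ Gd)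
    (hQ1 : Q + R0 * (1 + K * D) ≤ C1.card) (hQ2 : Q + R0 * (1 + K * D) ≤ C2.card)
    (h1 : ∀ a ∈ C1, sz pc tg a = s1 ∧ lam G pc tg a = l1)
    (h2 : ∀ a ∈ C2, sz pc tg a = s2 ∧ lam G pc tg a = l2)
    (hmin : smin ≤ r1 * s1 + r2 * s2) (hmax : r1 * s1 + r2 * s2 ≤ S0)
    (hlo : 2 * (1 + η) * (r1 * s1 + r2 * s2 : ℕ) ≤ (r1 * l1 + r2 * l2 : ℤ))
    (hhi : ((r1 * l1 + r2 * l2 : ℤ) : ℝ) ≤ 2 * (3 - η) * (r1 * s1 + r2 * s2 : ℕ)) (hη : 0 < η) :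
    Q ^ (r1 + r2) ≤
      S0 ^ (r1 + r2) * #{F | Cert (K * D) (K + 1) smin S0 η (r1 + r2) G F} := by
  have hsums : ∑ i, Fin.append (fun _ : Fin r1 => s1) (fun _ : Fin r2 => s2) i =
      r1 * s1 + r2 * s2 := by simp [Fin.sum_univ_add]
  have hsuml : ∑ i, Fin.append (fun _ : Fin r1 => l1) (fun _ : Fin r2 => l2) i =
      r1 * l1 + r2 * l2 := by simp [Fin.sum_univ_add]
  refine cert_count hG hdec hr (Fin.append (fun _ => C1) (fun _ => C2)) (fun i => ?_) (fun i => ?_)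
    (Fin.append (fun _ => s1) (fun _ => s2)) (Fin.append (fun _ => l1) (fun _ => l2))
    (fun i => ?_) (fun i => ?_) (by rw [hsums]; exact hmin) (by rw [hsums]; exact hmax)
    (by rw [hsums, hsuml]; exact hlo) (by rw [hsums, hsuml]; exact hhi) hη
  · refine Fin.addCases (fun i => ?_) (fun i => ?_) i
    · rw [Fin.append_left]; exact hC1
    · rw [Fin.append_right]; exact hC2
  · refine Fin.addCases (fun i => ?_) (fun i => ?_) i
    · rw [Fin.append_left]; exact hQ1
    · rw [Fin.append_right]; exact hQ2
  · refine Fin.addCases (fun i => ?_) (fun i => ?_) i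
    · rw [Fin.append_left, Fin.append_left]; exact fun a ha => (h1 a ha).1
    · rw [Fin.append_right, Fin.append_right]; exact fun a ha => (h2 a ha).1
  · refine Fin.addCases (fun i => ?_) (fun i => ?_) i
    · rw [Fin.append_left, Fin.append_left]; exact fun a ha => (h1 a ha).2
    · rw [Fin.append_right, Fin.append_right]; exact fun a ha => (h2 a ha).2

set_option maxHeartbeats 800000 in
/-- Every large planar graph with average degree well inside `(2, 6)` has, for some bounded `r`, at
least a constant times `n ^ r` reductions made of `r` pieces. -/
theorem select {b B : ℝ} (hb : 1 < b) (hB : B < 3) : ∃ η : ℝ, 0 < η ∧ ∀ smin : ℕ,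
    ∃ (β : ℝ) (R0 S0 D k N : ℕ), 0 < β ∧ ∀ n ≥ N, ∀ G : SimpleGraph (Fin n), IsPlanar G →
      b * n ≤ edgeCount G → (edgeCount G : ℝ) ≤ B * n →
      ∃ r ≤ R0, (β * n) ^ r ≤ #{F | Cert D k smin S0 η r G F} := by
  set c : ℝ := min ((b - 1) / 2) (3 - B) with hc
  have hc0 : 0 < c := lt_min (by linarith) (by linarith)
  have hcb : c ≤ (b - 1) / 2 := min_le_left _ _
  have hcB : c ≤ 3 - B := min_le_right _ _
  set η : ℝ := min (c / 4) 1 with hη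
  have hη0 : 0 < η := lt_min (by linarith) one_pos
  have hη1 : η ≤ 1 := min_le_right _ _
  have hηc : η ≤ c / 4 := min_le_left _ _
  refine ⟨η, hη0, fun smin => ?_⟩
  obtain ⟨K, D, N0, hdecex⟩ := exists_dec (c / 82) (by positivity)
  set Λ : ℕ := 2 * (K * D) with hΛ
  set Ty : Finset (ℕ × ℤ) := Finset.range (K + 1) ×ˢ Finset.Icc (-(Λ : ℤ)) Λ with hTy
  set M : ℝ := 6 * K + Λ + 1 with hM
  have hM0 : 0 < M := by positivity
  set R0 : ℕ := smin * (4 * K + 2 * Λ + 1) with hR0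
  set S0 : ℕ := R0 * K + 1 with hS0
  set c' : ℝ := c / (M * (Ty.card + 1)) with hc'
  have hc'0 : 0 < c' := by positivity
  have hS0p : (0 : ℝ) < S0 := by rw [hS0]; positivity
  clear_value c' S0 R0 M Ty Λ
  obtain ⟨N1, hN1⟩ := exists_nat_gt ((2 * (R0 * (1 + K * D) : ℕ) + 4) / c')
  refine ⟨c' / 4 / S0, R0, S0, K * D, K + 1, max N0 (max N1 1), by positivity,
    fun n hn G hG hlo hhi => ?_⟩
  have hnN0 : N0 ≤ n := le_trans (le_max_left _ _) hn
  have hnN1 : N1 ≤ n := le_trans (le_trans (le_max_left _ _) (le_max_right _ _)) hn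
  have hn1 : 1 ≤ n := le_trans (le_trans (le_max_right _ _) (le_max_right _ _)) hn
  have hn1' : (1 : ℝ) ≤ n := by exact_mod_cast hn1
  have hnc : 2 * ((R0 * (1 + K * D) : ℕ) : ℝ) + 4 ≤ c' * n := by
    rw [div_lt_iff₀ hc'0] at hN1
    have : (N1 : ℝ) ≤ n := by exact_mod_cast hnN1
    nlinarith
  obtain ⟨pc, Gd, tg, hdec, e1, e2, e3, e4⟩ := hdecex n hnN0 G hG
  have hdc : (dc G : ℝ) = 2 * edgeCount G := by rw [dc_eq]; push_cast; ring
  rw [hdc] at e3 e4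
  have hsK : ∀ a ∈ Gd, (sz pc tg a : ℝ) ≤ K := fun a ha => by exact_mod_cast sz_le hdec ha
  have hlU : ∀ a ∈ Gd, lam G pc tg a ≤ (Λ : ℤ) := fun a ha => by
    have := lam_le hdec ha; rw [hΛ]; push_cast at this ⊢; linarith
  have hlL : ∀ a ∈ Gd, -(Λ : ℤ) ≤ lam G pc tg a := fun a ha => by
    have := le_lam hdec ha; rw [hΛ]; push_cast at this ⊢; linarith
  have hty : ∀ a ∈ Gd, (sz pc tg a, lam G pc tg a) ∈ Ty := by
    intro a ha
    rw [hTy, mem_product, Finset.mem_range, Finset.mem_Icc]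
    exact ⟨Nat.lt_succ_of_le (sz_le hdec ha), hlL a ha, hlU a ha⟩
  have hn0 : (0 : ℝ) < n := by linarith
  have hclass : ∀ f : Fin n → ℝ, (∀ a ∈ Gd, f a ≤ M) → c * n ≤ ∑ a ∈ Gd, f a →
      ∃ p : ℕ × ℤ, c' * n ≤ #{a ∈ Gd | 0 < f a ∧ (sz pc tg a, lam G pc tg a) = p} := by
    intro f hf hsum
    obtain ⟨p, -, hp⟩ := many_of_type Gd f (fun a => (sz pc tg a, lam G pc tg a)) Ty hty hM0
      (by positivity) hf hsum
    refine ⟨p, ?_⟩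
    rw [hc', div_mul_eq_mul_div, div_le_iff₀ (by positivity)]
    refine hp.trans ?_
    have : (0 : ℝ) ≤ #{a ∈ Gd | 0 < f a ∧ (sz pc tg a, lam G pc tg a) = p} := by positivity
    nlinarith
  obtain ⟨⟨s1, l1⟩, hp1⟩ := hclass
    (fun a => (lam G pc tg a : ℝ) - 2 * (1 + η) * sz pc tg a) (by
      intro a ha
      have : (lam G pc tg a : ℝ) ≤ Λ := by exact_mod_cast hlU a ha
      have h0 : (0 : ℝ) ≤ sz pc tg a := by positivity
      have hK0 : (0 : ℝ) ≤ K := by positivity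
      rw [hM]; nlinarith) (by
      rw [sum_sub_distrib, ← mul_sum]
      push_cast at e2 e3
      nlinarith)
  obtain ⟨⟨s2, l2⟩, hp2⟩ := hclass
    (fun a => 2 * (3 - η) * sz pc tg a - (lam G pc tg a : ℝ)) (by
      intro a ha
      have : -(Λ : ℝ) ≤ (lam G pc tg a : ℝ) := by exact_mod_cast hlL a ha
      have h0 : (0 : ℝ) ≤ sz pc tg a := by positivity
      have := hsK a ha
      rw [hM]; nlinarith) (by
      rw [sum_sub_distrib, ← mul_sum]
      push_cast at e1 e4
      have h3 : (0 : ℝ) ≤ 2 * (3 - η) := by linarith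
      have h4 := mul_le_mul_of_nonneg_left e1 h3
      have h5 : B * n ≤ (3 - c) * n := by gcongr; linarith
      have h6 : η * n ≤ c / 4 * n := by gcongr
      have h7 : 0 ≤ η * (c * n) := by positivity
      have h8 : 0 ≤ c * n := by positivity
      have h9 : 2 * (3 - η) * ((1 - 2 * (c / 82)) * n) = 6 * n - 2 * (η * n) -
        12 / 82 * (c * n) + 4 / 82 * (η * (c * n)) := by ring
      linarith)
  set C1 : Finset (Fin n) := {a ∈ Gd | 0 < (lam G pc tg a : ℝ) - 2 * (1 + η) * sz pc tg a ∧
    (sz pc tg a, lam G pc tg a) = (s1, l1)} with hC1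
  set C2 : Finset (Fin n) := {a ∈ Gd | 0 < 2 * (3 - η) * sz pc tg a - (lam G pc tg a : ℝ) ∧
    (sz pc tg a, lam G pc tg a) = (s2, l2)} with hC2
  have hne : ∀ C : Finset (Fin n), c' * n ≤ C.card → C.Nonempty := by
    intro C hC
    rw [← card_pos]
    have : (0 : ℝ) < C.card := lt_of_lt_of_le (mul_pos hc'0 hn0) hC
    exact_mod_cast this
  have m1 : ∀ a ∈ C1, a ∈ Gd ∧ 2 * (1 + η) * s1 ≤ l1 ∧ sz pc tg a = s1 ∧ lam G pc tg a = l1 := by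
    intro a ha
    rw [hC1, mem_filter, Prod.mk.injEq] at ha
    obtain ⟨h1, h2, h3, h4⟩ := ha
    rw [h3, h4] at h2
    exact ⟨h1, by linarith, h3, h4⟩
  have m2 : ∀ a ∈ C2, a ∈ Gd ∧ (l2 : ℝ) ≤ 2 * (3 - η) * s2 ∧ sz pc tg a = s2 ∧
      lam G pc tg a = l2 := by
    intro a ha
    rw [hC2, mem_filter, Prod.mk.injEq] at ha
    obtain ⟨h1, h2, h3, h4⟩ := ha
    rw [h3, h4] at h2
    exact ⟨h1, by linarith, h3, h4⟩
  obtain ⟨a1, ha1⟩ := hne C1 hp1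
  obtain ⟨a2, ha2⟩ := hne C2 hp2
  obtain ⟨g1, t1, u1, w1⟩ := m1 a1 ha1
  obtain ⟨g2, t2, u2, w2⟩ := m2 a2 ha2
  obtain ⟨r1, r2, hr, hmin, hlo', hhi'⟩ := mix_types (smin := smin) (K := K) (Λ := Λ) hη1
    (u1 ▸ sz_pos hdec g1) (u2 ▸ sz_pos hdec g2) (u2 ▸ sz_le hdec g2)
    (w1 ▸ hlU a1 g1) (w2 ▸ hlL a2 g2) t1 t2
  rw [← hR0] at hr
  set Q : ℕ := ⌊c' * n / 2⌋₊ with hQ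
  have hQle : (Q : ℝ) ≤ c' * n / 2 := Nat.floor_le (div_nonneg (mul_nonneg hc'0.le hn0.le) two_pos.le)
  have hQge : c' * n / 2 < Q + 1 := Nat.lt_floor_add_one _
  have hQC : ∀ C : Finset (Fin n), c' * n ≤ C.card → Q + R0 * (1 + K * D) ≤ C.card := by
    intro C hC
    have : ((Q + R0 * (1 + K * D) : ℕ) : ℝ) ≤ C.card := by
      rw [Nat.cast_add]; linarith
    exact_mod_cast this
  have hcount := cert_count_two hG hdec (smin := smin) (S0 := S0) (R0 := R0) (Q := Q) (η := η) hr
    (fun a ha => (m1 a ha).1) (fun a ha => (m2 a ha).1) (hQC C1 hp1) (hQC C2 hp2)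
    (fun a ha => (m1 a ha).2.2) (fun a ha => (m2 a ha).2.2) hmin (by
      have h1 : r1 * s1 ≤ r1 * K := Nat.mul_le_mul_left _ (u1 ▸ sz_le hdec g1)
      have h2 : r2 * s2 ≤ r2 * K := Nat.mul_le_mul_left _ (u2 ▸ sz_le hdec g2)
      have h3 : (r1 + r2) * K ≤ R0 * K := Nat.mul_le_mul_right _ hr
      rw [add_mul] at h3
      omega) hlo' hhi' hη0
  refine ⟨r1 + r2, hr, ?_⟩
  have hQ4 : c' / 4 * n ≤ Q := by
    have : (4 : ℝ) ≤ c' * n := by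
      have : (0 : ℝ) ≤ ((R0 * (1 + K * D) : ℕ) : ℝ) := Nat.cast_nonneg _
      linarith
    linarith
  have hcount' : (Q : ℝ) ^ (r1 + r2) ≤
      S0 ^ (r1 + r2) * #{F | Cert (K * D) (K + 1) smin S0 η (r1 + r2) G F} := by
    exact_mod_cast hcount
  refine le_of_mul_le_mul_left ?_ (pow_pos hS0p (r1 + r2))
  refine le_trans ?_ hcount'
  rw [← mul_pow]
  refine pow_le_pow_left₀ (mul_nonneg hS0p.le
    (mul_nonneg (div_pos (div_pos hc'0 four_pos) hS0p).le hn0.le)) ?_ _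
  rw [div_mul_eq_mul_div, mul_div_cancel₀ _ hS0p.ne']
  exact hQ4

/-! ### Rebuilding on the freed vertices -/

/-- Whether `W` is a component ordered like `H` depends only on the edges meeting `W`. -/
theorem comp_congr {n s : ℕ} {H : SimpleGraph (Fin s)} {G G' : SimpleGraph (Fin n)}
    {W : Finset (Fin n)} (hag : ∀ u ∈ W, ∀ w, G.Adj u w ↔ G'.Adj u w)
    (h : IsComponent G W ∧ IsOrderCopy H G W) : IsComponent G' W ∧ IsOrderCopy H G' W := by
  obtain ⟨⟨h1, h2⟩, hW, h3⟩ := h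
  rw [conn_iff] at h1
  refine ⟨⟨conn_iff.2 ⟨h1.1, h1.2.mono fun u hu w _ huw => (hag u hu w).1 huw⟩,
    fun v hv u hvu => h2 v hv u ((hag v hv u).2 hvu)⟩, hW, fun i j => ?_⟩
  rw [h3 i j]
  exact hag _ (Subtype.prop _) _

/-- A planar graph can be placed, in an order-preserving way, on a set of isolated vertices. -/
theorem place {n s : ℕ} {G : SimpleGraph (Fin n)} (hG : IsPlanar G) {W : Finset (Fin n)}
    (hW : W.card = s) (hiso : ∀ u ∈ W, ∀ w, ¬ G.Adj u w) {K : SimpleGraph (Fin s)}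
    (hK : IsPlanar K) :
    ∃ G1 : SimpleGraph (Fin n), IsPlanar G1 ∧ edgeCount G1 = edgeCount G + edgeCount K ∧
      (∀ u ∉ W, ∀ w, G1.Adj u w ↔ G.Adj u w) ∧
      (∀ i j, G1.Adj (W.orderIsoOfFin hW i) (W.orderIsoOfFin hW j) ↔ K.Adj i j) := by
  set e : Fin s ↪ Fin n := (W.orderEmbOfFin hW).toEmbedding with he
  have hmem : ∀ i, e i ∈ W := fun i => W.orderEmbOfFin_mem hW i
  have hadj : ∀ u w, (G ⊔ K.map e).Adj u w ↔ G.Adj u w ∨ (K.map e).Adj u w := fun u w => Iff.rfl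
  have hout : ∀ u ∉ W, ∀ w, (G ⊔ K.map e).Adj u w ↔ G.Adj u w := by
    intro u hu w
    rw [hadj, or_iff_left]
    rintro hm
    rw [SimpleGraph.map_adj] at hm
    obtain ⟨a, b, -, rfl, -⟩ := hm
    exact hu (hmem a)
  have hin : ∀ u ∈ W, ∀ w, (G ⊔ K.map e).Adj u w ↔ (K.map e).Adj u w := by
    intro u hu w
    rw [hadj, or_iff_right (hiso u hu w)]
  refine ⟨G ⊔ K.map e, ?_, ?_, hout, ?_⟩
  · rcases isEmpty_or_nonempty (Fin n) with hem | ⟨⟨x⟩⟩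
    · exact planar_mono (fun u => isEmptyElim u) hG
    refine glue_planar (A := (W : Set (Fin n))) (x := x) (y := x) ?_ ?_ ?_
    · intro u hu w hw huw
      rw [hin u hu, SimpleGraph.map_adj] at huw
      obtain ⟨a, b, -, -, rfl⟩ := huw
      exact absurd (hmem b) hw
    · exact planar_mono (fun u w huw => (hin u huw.2.1 w).1 huw.1) (planar_map e hK)
    · exact planar_mono (fun u w huw => (hout u huw.2.1 w).1 huw.1) hG
  · unfold edgeCount
    rw [edgeSet_sup, Set.ncard_union_eq ?_ (Set.toFinite _) (Set.toFinite _), edgeSet_map,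
      Set.ncard_image_of_injective _ e.sym2Map.injective]
    rw [Set.disjoint_left]
    intro p
    induction p with
    | _ a b =>
      intro h1 h2
      rw [mem_edgeSet] at h1 h2
      rw [SimpleGraph.map_adj] at h2
      obtain ⟨c, d, -, rfl, -⟩ := h2
      exact hiso _ (hmem c) _ h1
  · intro i j
    rw [hin _ (Subtype.prop _)]
    exact SimpleGraph.map_adj_apply (f := e)

/-- `place` when the placed graph is connected: the new vertex set is a component. -/
theorem place_comp {n s : ℕ} {G1 : SimpleGraph (Fin n)} {W : Finset (Fin n)}
    (hW : W.card = s) {K : SimpleGraph (Fin s)} (hconn : K.Connected)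
    (hout : ∀ u ∈ W, ∀ w, G1.Adj u w → w ∈ W)
    (hin : ∀ i j, G1.Adj (W.orderIsoOfFin hW i) (W.orderIsoOfFin hW j) ↔ K.Adj i j) :
    IsComponent G1 W ∧ IsOrderCopy K G1 W := by
  refine ⟨⟨?_, hout⟩, hW, fun i j => (hin i j).symm⟩
  have φ : K ≃g G1.induce (W : Set (Fin n)) :=
    { toEquiv := (W.orderIsoOfFin hW).toEquiv
      map_rel_iff' := fun {a b} => hin a b }
  exact φ.connected_iff.1 hconn

section Build

variable {n l : ℕ} {h : Fin l → ℕ} (H : ∀ i : Fin l, SimpleGraph (Fin (h i)))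

/-- Components ordered like the members of a multiset `L` of the given graphs can be placed
inside a large enough set of isolated vertices. -/
theorem place_many (hconn : ∀ i, (H i).Connected) (hplanar : ∀ i, IsPlanar (H i))
    {G0 : SimpleGraph (Fin n)} (hG0 : IsPlanar G0) {F : Finset (Fin n)}
    (hiso : ∀ u ∈ F, ∀ w, ¬ G0.Adj u w) (L : Multiset (Fin l)) (hL : (L.map h).sum ≤ F.card) :
    ∃ (G1 : SimpleGraph (Fin n)) (U : Finset (Fin n)) (𝒟 : Finset (Finset (Fin n))),
      IsPlanar G1 ∧ edgeCount G1 = edgeCount G0 + (L.map fun i => edgeCount (H i)).sum ∧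
      U ⊆ F ∧ U.card = (L.map h).sum ∧ U = 𝒟.biUnion id ∧
      (∀ u ∉ U, ∀ w, G1.Adj u w ↔ G0.Adj u w) ∧
      (∀ W ∈ 𝒟, ∃ i ∈ L, IsComponent G1 W ∧ IsOrderCopy (H i) G1 W) ∧
      (∀ i, L.count i ≤ #{W ∈ 𝒟 | IsComponent G1 W ∧ IsOrderCopy (H i) G1 W}) := by
  induction L using Multiset.induction with
  | empty => exact ⟨G0, ∅, ∅, hG0, by simp, by simp, by simp, by simp, by simp, by simp, by simp⟩
  | cons i L ih =>
    rw [Multiset.map_cons, Multiset.sum_cons] at hL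
    obtain ⟨G1, U, 𝒟, hp, he, hUF, hUc, hU𝒟, hag, hc, hcnt⟩ := ih (by omega)
    obtain ⟨W, hWF, hW⟩ := Finset.exists_subset_card_eq (s := F \ U) (n := h i) (by
      rw [card_sdiff_of_subset hUF]; omega)
    have hWU : ∀ u ∈ W, u ∈ F ∧ u ∉ U := fun u hu => mem_sdiff.1 (hWF hu)
    have hisoW : ∀ u ∈ W, ∀ w, ¬ G1.Adj u w := fun u hu w huw =>
      hiso u (hWU u hu).1 w ((hag u (hWU u hu).2 w).1 huw)
    obtain ⟨G2, hp2, he2, hout, hin⟩ := place hp hW hisoW (hplanar i)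
    have hcW : IsComponent G2 W ∧ IsOrderCopy (H i) G2 W := by
      refine place_comp hW (hconn i) ?_ hin
      intro u hu w huw
      by_contra hw
      exact hisoW u hu w ((hout w hw u).1 huw.symm).symm
    have hD : ∀ W' ∈ 𝒟, ∀ k, IsComponent G1 W' ∧ IsOrderCopy (H k) G1 W' →
        IsComponent G2 W' ∧ IsOrderCopy (H k) G2 W' := by
      intro W' hW' k hk
      refine comp_congr (fun u hu w => (hout u ?_ w).symm) hk
      intro huW
      refine (hWU u huW).2 ?_
      rw [hU𝒟, mem_biUnion]
      exact ⟨W', hW', hu⟩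
    have hWne : W.Nonempty := by
      have := (conn_iff.1 hcW.1.1).1
      simpa using this
    have hW𝒟 : W ∉ 𝒟 := by
      intro hmem
      obtain ⟨u, hu⟩ := hWne
      refine (hWU u hu).2 ?_
      rw [hU𝒟, mem_biUnion]
      exact ⟨W, hmem, hu⟩
    have hdisj : Disjoint W U := Finset.disjoint_left.2 fun u hu => (hWU u hu).2
    refine ⟨G2, W ∪ U, insert W 𝒟, hp2, ?_, ?_, ?_, ?_, ?_, ?_, ?_⟩
    · rw [he2, he, Multiset.map_cons, Multiset.sum_cons]; ring
    · exact union_subset (fun u hu => (hWU u hu).1) hUF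
    · rw [card_union_of_disjoint hdisj, hW, hUc, Multiset.map_cons, Multiset.sum_cons]
    · rw [biUnion_insert, hU𝒟]; rfl
    · intro u hu w
      rw [mem_union, not_or] at hu
      rw [hout u hu.1, hag u hu.2]
    · intro W' hW'
      rcases mem_insert.1 hW' with rfl | hW'
      · exact ⟨i, Multiset.mem_cons_self _ _, hcW⟩
      · obtain ⟨k, hk, hk'⟩ := hc W' hW'
        exact ⟨k, Multiset.mem_cons_of_mem hk, hD W' hW' k hk'⟩
    · intro k
      have hmono : #{W' ∈ 𝒟 | IsComponent G1 W' ∧ IsOrderCopy (H k) G1 W'} ≤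
          #{W' ∈ 𝒟 | IsComponent G2 W' ∧ IsOrderCopy (H k) G2 W'} := by
        refine card_le_card fun W' hW' => ?_
        rw [mem_filter] at hW' ⊢
        exact ⟨hW'.1, hD W' hW'.1 k hW'.2⟩
      rw [filter_insert]
      by_cases hk : k = i
      · subst hk
        rw [Multiset.count_cons_self, if_pos hcW, card_insert_of_notMem]
        · have := hcnt k; omega
        · exact fun hm => hW𝒟 (mem_filter.1 hm).1
      · rw [Multiset.count_cons_of_ne hk]
        refine ((hcnt k).trans hmono).trans (card_le_card ?_)
        split_ifs
        · exact subset_insert _ _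
        · exact subset_rfl

/-- The rebuilding step: on a set `F` of isolated vertices place `t` components ordered like `H i`
for each `i ∈ I`, and one further blob with a hub `root` that is joined to `y`, using exactly `j`
edges. The set `F` can be read off from the hub, `y`, and the new components. -/
theorem build (hconn : ∀ i, (H i).Connected) (hplanar : ∀ i, IsPlanar (H i))
    (t : ℕ) (I : Finset (Fin l))
    {G0 : SimpleGraph (Fin n)} (hG0 : IsPlanar G0) {F : Finset (Fin n)}
    (hiso : ∀ u ∈ F, ∀ w, ¬ G0.Adj u w) {y : Fin n} (hy : y ∉ F) {j : ℕ}
    (h1 : t * ∑ i, h i + 4 ≤ F.card)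
    (h2 : F.card + t * ∑ i, edgeCount (H i) + 1 ≤ j)
    (h3 : j + 3 * (t * ∑ i, h i) + 8 ≤ 3 * F.card) :
    ∃ (G' : SimpleGraph (Fin n)) (root : Fin n) (𝒟 : Finset (Finset (Fin n))),
      IsPlanar G' ∧ edgeCount G' = edgeCount G0 + j ∧
      (∀ u ∉ F, ∀ w ∉ F, G'.Adj u w ↔ G0.Adj u w) ∧
      (∀ u ∈ F, ∀ w ∉ F, G'.Adj u w → w = y) ∧
      y ∈ nb G' root ∧ (nb G' root).card ≤ F.card ∧
      F = (insert root (nb G' root)).erase y ∪ 𝒟.biUnion id ∧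
      (∀ W ∈ 𝒟, ∃ i ∈ I, IsComponent G' W ∧ IsOrderCopy (H i) G' W) ∧
      (∀ i ∈ I, t ≤ numOrderComponents (H i) G') := by
  have hsum : ∀ f : Fin l → ℕ, ((t • I.val).map f).sum ≤ t * ∑ i, f i := by
    intro f
    rw [Multiset.map_nsmul, Multiset.sum_nsmul, smul_eq_mul]
    exact Nat.mul_le_mul_left _ (sum_le_univ_sum_of_nonneg fun _ => Nat.zero_le _)
  have hsh := hsum h
  have hse := hsum fun i => edgeCount (H i)
  obtain ⟨G1, U, 𝒟, hp, he, hUF, hUc, hU𝒟, hag, hc, hcnt⟩ :=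
    place_many H hconn hplanar hG0 hiso (t • I.val) (by omega)
  generalize ((t • I.val).map h).sum = k at *
  generalize ((t • I.val).map fun i => edgeCount (H i)).sum = ε at *
  have hWc : (F \ U).card = F.card - k := by rw [card_sdiff_of_subset hUF, hUc]
  obtain ⟨K, hK, heK, hhub⟩ := exists_blob (F.card - k) (j - 1 - ε) (by omega) (by omega) (by omega)
  set W := F \ U with hWdef
  have hWU : ∀ u ∈ W, u ∈ F ∧ u ∉ U := fun u hu => mem_sdiff.1 hu
  have hisoW : ∀ u ∈ W, ∀ w, ¬ G1.Adj u w := fun u hu w huw =>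
    hiso u (hWU u hu).1 w ((hag u (hWU u hu).2 w).1 huw)
  obtain ⟨G2, hp2, he2, hout, hin⟩ := place hp hWc hisoW hK
  have hW2 : ∀ u ∈ W, ∀ w, G2.Adj u w → w ∈ W := by
    intro u hu w huw
    by_contra hw
    exact hisoW u hu w ((hout w hw u).1 huw.symm).symm
  set r0 : Fin (F.card - k) := ⟨0, by omega⟩ with hr0
  set root : Fin n := ((W.orderIsoOfFin hWc r0 : W) : Fin n) with hroot
  have hrW : root ∈ W := Subtype.prop _
  have hhub' : ∀ w ∈ W, w ≠ root → G2.Adj root w := by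
    intro w hw hne
    obtain ⟨i, hi⟩ := (W.orderIsoOfFin hWc).surjective ⟨w, hw⟩
    have hiw : ((W.orderIsoOfFin hWc i : W) : Fin n) = w := by rw [hi]
    rw [← hiw, hroot, hin]
    refine hhub i fun h0 => hne ?_
    rw [← hiw, hroot]
    have : i = r0 := Fin.ext h0
    rw [this]
  have hyW : y ∉ W := fun h => hy (hWU y h).1
  have hyU : y ∉ U := fun h => hy (hUF h)
  have hry : root ≠ y := fun h => hyW (h ▸ hrW)
  have hG'adj : ∀ u w, (G2 ⊔ SimpleGraph.edge root y).Adj u w ↔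
      G2.Adj u w ∨ (u = root ∧ w = y) ∨ (u = y ∧ w = root) := by
    intro u w
    rw [sup_adj, edge_adj]
    constructor
    · rintro (h | ⟨⟨h, h'⟩ | ⟨h, h'⟩, -⟩)
      · exact Or.inl h
      · exact Or.inr (Or.inl ⟨h, h'⟩)
      · exact Or.inr (Or.inr ⟨h, h'⟩)
    · rintro (h | ⟨rfl, rfl⟩ | ⟨rfl, rfl⟩)
      · exact Or.inl h
      · exact Or.inr ⟨Or.inl ⟨rfl, rfl⟩, hry⟩
      · exact Or.inr ⟨Or.inr ⟨rfl, rfl⟩, hry.symm⟩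
  set G' := G2 ⊔ SimpleGraph.edge root y with hG'
  have hnb : nb G' root = insert y (W.erase root) := by
    ext w
    rw [mem_nb, hG'adj, mem_insert, mem_erase]
    constructor
    · rintro (h | ⟨-, rfl⟩ | ⟨h, -⟩)
      · exact Or.inr ⟨h.ne', hW2 root hrW w h⟩
      · exact Or.inl rfl
      · exact absurd h hry
    · rintro (rfl | ⟨h, h'⟩)
      · exact Or.inr (Or.inl ⟨rfl, rfl⟩)
      · exact Or.inl (hhub' w h' h)
  have hU' : ∀ u ∈ U, ∀ w, G1.Adj u w ↔ G'.Adj u w := by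
    intro u hu w
    have huW : u ∉ W := fun h => (hWU u h).2 hu
    rw [hG'adj, hout u huW, or_iff_left]
    rintro (⟨rfl, -⟩ | ⟨rfl, -⟩)
    · exact huW hrW
    · exact hyU hu
  have hD : ∀ W' ∈ 𝒟, ∀ i, IsComponent G1 W' ∧ IsOrderCopy (H i) G1 W' →
      IsComponent G' W' ∧ IsOrderCopy (H i) G' W' := by
    intro W' hW' i hi
    refine comp_congr (fun u hu w => hU' u ?_ w) hi
    rw [hU𝒟, mem_biUnion]
    exact ⟨W', hW', hu⟩
  refine ⟨G', root, 𝒟, ?_, ?_, ?_, ?_, ?_, ?_, ?_, ?_, ?_⟩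
  · refine glue_planar (A := (W : Set (Fin n))) (x := root) (y := y) ?_ ?_ ?_
    · intro u hu w hw huw
      rcases (hG'adj u w).1 huw with h | h | ⟨rfl, rfl⟩
      · exact absurd (hW2 u hu w h) hw
      · exact h
      · exact absurd hu hyW
    · refine planar_mono (fun u w huw => ?_) hp2
      rcases (hG'adj u w).1 huw.1 with h | ⟨-, rfl⟩ | ⟨rfl, -⟩
      · exact h
      · exact absurd huw.2.2 hyW
      · exact absurd huw.2.1 hyW
    · refine planar_mono (fun u w huw => ?_) hp2
      rcases (hG'adj u w).1 huw.1 with h | ⟨rfl, -⟩ | ⟨-, rfl⟩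
      · exact h
      · exact absurd hrW huw.2.1
      · exact absurd hrW huw.2.2
  · have h4 : edgeCount G' = edgeCount G2 + 1 := by
      have hset : G'.edgeSet = insert s(root, y) G2.edgeSet := by
        ext p
        induction p with
        | _ a c =>
          rw [mem_edgeSet, hG'adj, Set.mem_insert_iff, mem_edgeSet, Sym2.eq_iff, or_comm]
      unfold edgeCount
      rw [hset, Set.ncard_insert_of_notMem _ (Set.toFinite _)]
      exact fun h => hyW (hW2 root hrW y h)
    rw [h4, he2, he, heK]
    omega
  · intro u hu w hw
    have huW : u ∉ W := fun h => hu (hWU u h).1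
    have huU : u ∉ U := fun h => hu (hUF h)
    have hwW : w ∉ W := fun h => hw (hWU w h).1
    rw [hG'adj, hout u huW, hag u huU, or_iff_left]
    rintro (⟨rfl, -⟩ | ⟨-, rfl⟩)
    · exact huW hrW
    · exact hwW hrW
  · intro u hu w hw huw
    rcases (hG'adj u w).1 huw with h | h | ⟨rfl, rfl⟩
    · by_cases huW : u ∈ W
      · exact absurd (hWU w (hW2 u huW w h)).1 hw
      · have hwW : w ∉ W := fun h' => hw (hWU w h').1
        have := (hout w hwW u).1 h.symm
        exact absurd ((hag w (fun h' => hw (hUF h')) u).1 this).symm (hiso u hu w)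
    · exact h.2
    · exact absurd hu hy
  · rw [hnb]; exact mem_insert_self _ _
  · rw [hnb, card_insert_of_notMem (fun h => hyW (mem_of_mem_erase h)), card_erase_of_mem hrW]
    have := card_le_card (sdiff_subset : F \ U ⊆ F)
    omega
  · rw [← hU𝒟, hnb, Finset.insert_comm, insert_erase hrW, erase_insert hyW, hWdef,
      sdiff_union_of_subset hUF]
  · intro W' hW'
    obtain ⟨i, hi, hi'⟩ := hc W' hW'
    refine ⟨i, ?_, hD W' hW' i hi'⟩
    exact Multiset.mem_of_mem_nsmul hi
  · intro i hi
    have hcount : (t • I.val).count i = t := by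
      rw [Multiset.count_nsmul, Multiset.count_eq_one_of_mem I.nodup hi, mul_one]
    rw [← hcount]
    refine (hcnt i).trans ?_
    unfold numOrderComponents
    rw [← Set.ncard_coe_finset]
    refine Set.ncard_le_ncard ?_ (Set.toFinite _)
    intro W' hW'
    rw [mem_coe, mem_filter] at hW'
    exact hD W' hW'.1 i hW'.2

end Build

/-! ### Counting rebuilt graphs -/

/-- The components of `G` admitting an order-preserving isomorphism to `H`. -/
noncomputable def oc {h n : ℕ} (H : SimpleGraph (Fin h)) (G : SimpleGraph (Fin n)) :
    Finset (Finset (Fin n)) :=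
  {W | IsComponent G W ∧ IsOrderCopy H G W}

theorem mem_oc {h n : ℕ} {H : SimpleGraph (Fin h)} {G : SimpleGraph (Fin n)}
    {W : Finset (Fin n)} : W ∈ oc H G ↔ IsComponent G W ∧ IsOrderCopy H G W := by
  simp [oc]

theorem numOC_eq {h n : ℕ} (H : SimpleGraph (Fin h)) (G : SimpleGraph (Fin n)) :
    numOrderComponents H G = (oc H G).card := by
  unfold numOrderComponents
  rw [← Set.ncard_coe_finset]
  congr 1
  ext W
  rw [mem_coe, mem_oc]
  rfl

/-- A component contains every component it meets, as connected sets do not leave a component. -/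
theorem comp_subset {n : ℕ} {G : SimpleGraph (Fin n)} {W W' : Finset (Fin n)}
    (h : IsComponent G W) (h' : IsComponent G W') {u : Fin n} (hu : u ∈ W) (hu' : u ∈ W') :
    W' ⊆ W := by
  intro w hw
  by_contra hwW
  obtain ⟨x, -, y, -, hx, hy, hxy⟩ := (conn_iff.1 h'.1).2.exists_cross (A := (W : Set (Fin n)))
    (mem_coe.2 hu') (mem_coe.2 hw) hu hwW
  exact hy (h.2 x hx y hxy)

/-- Changing a graph inside `W` destroys at most `|W|` components of a given type. -/
theorem oc_loc {h n : ℕ} (H : SimpleGraph (Fin h)) {G G' : SimpleGraph (Fin n)}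
    {W : Finset (Fin n)} (hl : Loc G G' (W : Set (Fin n))) :
    numOrderComponents H G ≤ numOrderComponents H G' + W.card := by
  rw [numOC_eq, numOC_eq, ← card_filter_add_card_filter_not (s := oc H G) (fun A => Disjoint A W)]
  refine Nat.add_le_add (card_le_card ?_) ?_
  · intro A hA
    rw [mem_filter, mem_oc] at hA
    rw [mem_oc]
    refine comp_congr (fun u hu w => hl u w ?_) hA.1
    exact fun hh => Finset.disjoint_left.1 hA.2 hu hh.1
  · have hex : ∀ A ∈ {A ∈ oc H G | ¬ Disjoint A W}, ∃ u, u ∈ A ∧ u ∈ W := by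
      intro A hA
      exact Finset.not_disjoint_iff.1 (mem_filter.1 hA).2
    rcases ({A ∈ oc H G | ¬ Disjoint A W}).eq_empty_or_nonempty with hem | ⟨A0, hA0⟩
    · rw [hem, card_empty]; exact Nat.zero_le _
    have : Nonempty (Fin n) := ⟨(hex A0 hA0).choose⟩
    choose! f hf using hex
    refine card_le_card_of_injOn f (fun A hA => (hf A hA).2) ?_
    intro A hA A' hA' hff
    have hc := (mem_oc.1 (mem_filter.1 hA).1).1
    have hc' := (mem_oc.1 (mem_filter.1 hA').1).1
    have h1 := (hf A hA).1
    have h2 := (hf A' hA').1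
    change f A = f A' at hff
    rw [hff] at h1
    exact Subset.antisymm (comp_subset hc' hc h2 h1) (comp_subset hc hc' h1 h2)

theorem Loc.symm {V : Type*} {G G' : SimpleGraph V} {W : Set V} (h : Loc G G' W) : Loc G' G W :=
  fun u w huw => (h u w huw).symm

/-- At most `2 ^ |W|²` graphs differ from a given one only inside `W`. -/
theorem loc_card {n : ℕ} (G0 : SimpleGraph (Fin n)) (W : Finset (Fin n)) :
    #{G : SimpleGraph (Fin n) | Loc G G0 (W : Set (Fin n))} ≤ 2 ^ (W.card * W.card) := by
  rw [← card_product, ← card_powerset]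
  refine card_le_card_of_injOn (fun G => {p ∈ W ×ˢ W | G.Adj p.1 p.2}) ?_ ?_
  · intro G _
    exact mem_powerset.2 (filter_subset _ _)
  · intro G hG G' hG' heq
    have h1 : Loc G G0 (W : Set (Fin n)) := by simpa using hG
    have h2 : Loc G' G0 (W : Set (Fin n)) := by simpa using hG'
    ext u w
    by_cases huw : u ∈ W ∧ w ∈ W
    · have := Finset.ext_iff.1 heq (u, w)
      simpa [huw] using this
    · rw [h1 u w (by simpa using huw), h2 u w (by simpa using huw)]

section Count

variable {n l : ℕ} {h : Fin l → ℕ} (H : ∀ i : Fin l, SimpleGraph (Fin (h i)))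

/-- All components of `G` ordered like those `H i` that have fewer than `M` such components. -/
noncomputable def rare (M : ℕ) (G : SimpleGraph (Fin n)) : Finset (Finset (Fin n)) :=
  ({i | numOrderComponents (H i) G < M} : Finset (Fin l)).biUnion fun i => oc (H i) G

theorem rare_card (M : ℕ) (G : SimpleGraph (Fin n)) : (rare H M G).card ≤ l * M := by
  refine (card_biUnion_le_card_mul _ _ M ?_).trans (Nat.mul_le_mul_right _ ?_)
  · intro i hi
    rw [mem_filter, numOC_eq] at hi
    exact hi.2.le
  · exact (card_le_univ _).trans (by simp)

/-- Candidates for the pair `(F, y)` used in producing a given graph by `build`. -/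
noncomputable def cand (S0 M : ℕ) (G : SimpleGraph (Fin n)) : Finset (Finset (Fin n) × Fin n) :=
  ({x | (nb G x).card ≤ S0} : Finset (Fin n)).biUnion fun x =>
    (nb G x).biUnion fun y => (rare H M G).powerset.image fun 𝒟 =>
      ((insert x (nb G x)).erase y ∪ 𝒟.biUnion id, y)

theorem cand_card (S0 M : ℕ) (G : SimpleGraph (Fin n)) :
    (cand H S0 M G).card ≤ n * (S0 * 2 ^ (l * M)) := by
  refine (card_biUnion_le_card_mul _ _ (S0 * 2 ^ (l * M)) ?_).trans (Nat.mul_le_mul_right _ ?_)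
  · intro x hx
    rw [mem_filter] at hx
    refine (card_biUnion_le_card_mul _ _ (2 ^ (l * M)) ?_).trans (Nat.mul_le_mul_right _ hx.2)
    intro y _
    refine card_image_le.trans ?_
    rw [card_powerset]
    exact Nat.pow_le_pow_right two_pos (rare_card H M G)
  · exact (card_le_univ _).trans (by simp)

/-- Candidates for the original graph, given the rebuilt graph `G'` and the set `F`. -/
noncomputable def pre (D k r : ℕ) (G' : SimpleGraph (Fin n)) (F : Finset (Fin n)) :
    Finset (SimpleGraph (Fin n)) :=
  (univ : Finset (Fin r → Fin n)).biUnion fun v =>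
    {G | Loc G (restr G' (F : Set (Fin n))ᶜ)
      ((F ∪ univ.biUnion fun i => ball (restr G' (F : Set (Fin n))ᶜ) D k (v i) :
        Finset (Fin n)) : Set (Fin n))}

theorem touched_card {D k r S0 R0 : ℕ} (hr : r ≤ R0) (G0 : SimpleGraph (Fin n))
    {F : Finset (Fin n)} (hF : F.card ≤ S0) (v : Fin r → Fin n) :
    (F ∪ univ.biUnion fun i => ball G0 D k (v i)).card ≤ S0 + R0 * (1 + D) ^ k := by
  refine (card_union_le _ _).trans (Nat.add_le_add hF ?_)
  refine (card_biUnion_le_card_mul _ _ ((1 + D) ^ k) fun i _ => ball_card _ _ _ _).trans ?_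
  refine Nat.mul_le_mul_right _ ?_
  simpa using hr

theorem pre_card {D k r S0 R0 : ℕ} (hr : r ≤ R0) (G' : SimpleGraph (Fin n)) {F : Finset (Fin n)}
    (hF : F.card ≤ S0) : (pre D k r G' F).card ≤
      n ^ r * 2 ^ ((S0 + R0 * (1 + D) ^ k) * (S0 + R0 * (1 + D) ^ k)) := by
  refine (card_biUnion_le_card_mul _ _ _ fun v _ => (loc_card _ _).trans
    (Nat.pow_le_pow_right two_pos (Nat.mul_le_mul (touched_card hr _ hF v)
      (touched_card hr _ hF v)))).trans ?_
  simp

/-- A reduction of `G` can be completed to a good graph from which the reduction can be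
recovered up to few choices. -/
theorem rebuild (hconn : ∀ i, (H i).Connected) (hplanar : ∀ i, IsPlanar (H i)) {t : ℕ}
    {D k smin S0 R0 r : ℕ} {η : ℝ} (hr : r ≤ R0)
    (hs1 : t * ∑ i, h i + 4 ≤ smin)
    (hs2 : 3 * (t * ∑ i, h i) + t * ∑ i, edgeCount (H i) + 8 ≤ η * smin) (hη : 0 < η)
    {G : SimpleGraph (Fin n)} {F : Finset (Fin n)} (hcert : Cert D k smin S0 η r G F)
    {y : Fin n} (hy : y ∉ F) :
    ∃ G' : SimpleGraph (Fin n), (IsPlanar G' ∧ edgeCount G' = edgeCount G ∧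
      ∀ i, t ≤ numOrderComponents (H i) G') ∧
      (F, y) ∈ cand H S0 (t + 2 * (S0 + R0 * (1 + D) ^ k + 1)) G' ∧ G ∈ pre D k r G' F := by
  obtain ⟨G0, v, j, hp, hiso, hmin, hmax, he, hlo, hhi, hloc⟩ := hcert
  set w := S0 + R0 * (1 + D) ^ k + 1 with hw
  have hηF : η * smin ≤ η * F.card := by gcongr
  have hj1 : F.card + t * ∑ i, edgeCount (H i) + 1 ≤ j := by
    have : ((F.card + t * ∑ i, edgeCount (H i) + 1 : ℕ) : ℝ) ≤ j := by
      push_cast at hs2 ⊢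
      have : (0 : ℝ) ≤ t * ∑ i, (h i : ℝ) := by positivity
      linarith
    exact_mod_cast this
  have hj2 : j + 3 * (t * ∑ i, h i) + 8 ≤ 3 * F.card := by
    have : ((j + 3 * (t * ∑ i, h i) + 8 : ℕ) : ℝ) ≤ (3 * F.card : ℕ) := by
      push_cast at hs2 ⊢
      have : (0 : ℝ) ≤ t * ∑ i, (edgeCount (H i) : ℝ) := by positivity
      linarith
    exact_mod_cast this
  obtain ⟨G', root, 𝒟, hp', he', hag, hcr, hyr, hdeg, hF, hD, hnum⟩ :=
    build H hconn hplanar t ({i | numOrderComponents (H i) G < t + w} : Finset (Fin l)) hp hiso hy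
      (by omega) hj1 hj2
  have hG0 : restr G' (F : Set (Fin n))ᶜ = G0 := by
    ext u x
    constructor
    · rintro ⟨h1, h2, h3⟩
      exact (hag u h2 x h3).1 h1
    · intro hux
      have hu : u ∉ F := fun hu => hiso u hu x hux
      have hx : x ∉ F := fun hx => hiso x hx u hux.symm
      exact ⟨(hag u hu x hx).2 hux, hu, hx⟩
  have hlocGG' : Loc G G' ((insert y (F ∪ univ.biUnion fun i => ball G0 D k (v i)) :
      Finset (Fin n)) : Set (Fin n)) := by
    intro u x hux
    have hux' : ¬ (u ∈ ((F ∪ univ.biUnion fun i => ball G0 D k (v i) : Finset (Fin n)) :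
        Set (Fin n)) ∧ x ∈ ((F ∪ univ.biUnion fun i => ball G0 D k (v i) : Finset (Fin n)) :
        Set (Fin n))) := by
      refine fun hh => hux ?_
      rw [coe_insert]
      exact ⟨Or.inr hh.1, Or.inr hh.2⟩
    rw [hloc u x hux']
    rw [coe_insert, coe_union] at hux
    by_cases hu : u ∈ F
    · refine iff_of_false (hiso u hu x) fun hadj => ?_
      by_cases hx : x ∈ F
      · exact hux ⟨Or.inr (Or.inl hu), Or.inr (Or.inl hx)⟩
      · exact hux ⟨Or.inr (Or.inl hu), Or.inl (hcr u hu x hx hadj)⟩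
    · by_cases hx : x ∈ F
      · refine iff_of_false (fun hadj => hiso x hx u hadj.symm) fun hadj => ?_
        exact hux ⟨Or.inl (hcr x hx u hu hadj.symm), Or.inr (Or.inl hx)⟩
      · exact (hag u hu x hx).symm
  have hwc : (insert y (F ∪ univ.biUnion fun i => ball G0 D k (v i))).card ≤ w :=
    (card_insert_le _ _).trans (Nat.succ_le_succ (touched_card hr G0 hmax v))
  refine ⟨G', ⟨hp', by omega, fun i => ?_⟩, ?_, ?_⟩
  · by_cases hi : numOrderComponents (H i) G < t + w
    · exact hnum i (by simpa using hi)
    · have := oc_loc (H i) hlocGG'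
      omega
  · simp only [cand, mem_biUnion, mem_filter, mem_univ, true_and, mem_image, mem_powerset]
    refine ⟨root, hdeg.trans hmax, y, hyr, 𝒟, ?_, ?_⟩
    · intro W hW
      obtain ⟨i, hi, hi'⟩ := hD W hW
      simp only [rare, mem_biUnion, mem_filter, mem_univ, true_and]
      refine ⟨i, ?_, mem_oc.2 hi'⟩
      have h1 : numOrderComponents (H i) G < t + w := by simpa using hi
      have := oc_loc (H i) hlocGG'.symm
      omega
    · rw [← hF]
  · simp only [pre, mem_biUnion, mem_filter, mem_univ, true_and]
    refine ⟨v, ?_⟩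
    rw [hG0]
    exact hloc

/-- Double counting of `(G, F, y) ↦ G'`, over the planar graphs `G` with at least `q` reductions
made of `r` pieces. -/
theorem count_r (hconn : ∀ i, (H i).Connected) (hplanar : ∀ i, IsPlanar (H i)) {t : ℕ}
    {D k smin S0 R0 r : ℕ} {η : ℝ} (hr : r ≤ R0)
    (hs1 : t * ∑ i, h i + 4 ≤ smin)
    (hs2 : 3 * (t * ∑ i, h i) + t * ∑ i, edgeCount (H i) + 8 ≤ η * smin) (hη : 0 < η)
    (m : ℕ) (q : ℝ) :
    (#{G : SimpleGraph (Fin n) | (IsPlanar G ∧ edgeCount G = m) ∧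
        q ≤ #{F | Cert D k smin S0 η r G F}} : ℝ) * (q * (n - S0 : ℕ)) ≤
      (n * (S0 * 2 ^ (l * (t + 2 * (S0 + R0 * (1 + D) ^ k + 1)))) *
        (n ^ r * 2 ^ ((S0 + R0 * (1 + D) ^ k) * (S0 + R0 * (1 + D) ^ k))) : ℕ) *
      #{G : SimpleGraph (Fin n) | (IsPlanar G ∧ edgeCount G = m) ∧
        ∀ i, t ≤ numOrderComponents (H i) G} := by
  set P : Finset (SimpleGraph (Fin n)) := {G | (IsPlanar G ∧ edgeCount G = m) ∧
        q ≤ #{F | Cert D k smin S0 η r G F}} with hP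
  set Good : Finset (SimpleGraph (Fin n)) := {G | (IsPlanar G ∧ edgeCount G = m) ∧
        ∀ i, t ≤ numOrderComponents (H i) G} with hGood
  set Ω : Finset (Σ _ : SimpleGraph (Fin n), Σ _ : Finset (Fin n), Fin n) :=
    P.sigma fun G => ({F | Cert D k smin S0 η r G F} : Finset (Finset (Fin n))).sigma
      fun F => Fᶜ with hΩ
  have hlow : (P.card : ℝ) * (q * (n - S0 : ℕ)) ≤ Ω.card := by
    rw [hΩ, card_sigma, Nat.cast_sum, ← nsmul_eq_mul]
    refine card_nsmul_le_sum _ _ _ fun G hG => ?_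
    rw [hP, mem_filter] at hG
    refine (mul_le_mul_of_nonneg_right hG.2.2 (Nat.cast_nonneg _)).trans ?_
    rw [card_sigma, ← Nat.cast_mul, Nat.cast_le, ← smul_eq_mul]
    refine card_nsmul_le_sum _ _ _ fun F hF => ?_
    obtain ⟨_, _, _, -, -, -, hmax, -⟩ := (mem_filter.1 hF).2
    rw [card_compl, Fintype.card_fin]
    omega
  have hex : ∀ x ∈ Ω, ∃ G' : SimpleGraph (Fin n), G' ∈ Good ∧
      (x.2.1, x.2.2) ∈ cand H S0 (t + 2 * (S0 + R0 * (1 + D) ^ k + 1)) G' ∧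
      x.1 ∈ pre D k r G' x.2.1 ∧ x.2.1.card ≤ S0 := by
    rintro ⟨G, F, y⟩ hx
    rw [hΩ, mem_sigma, mem_sigma, hP, mem_filter, mem_filter, mem_compl] at hx
    obtain ⟨⟨-, ⟨-, hGm⟩, -⟩, ⟨-, hcert⟩, hy⟩ := hx
    obtain ⟨G', ⟨h1, h2, h3⟩, h4, h5⟩ :=
      rebuild H hconn hplanar (t := t) hr hs1 hs2 hη hcert hy
    obtain ⟨_, _, _, -, -, -, hmax, -⟩ := hcert
    refine ⟨G', ?_, h4, h5, hmax⟩
    rw [hGood, mem_filter]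
    exact ⟨mem_univ _, ⟨h1, h2.trans hGm⟩, h3⟩
  choose! f hf using hex
  refine hlow.trans ?_
  rw [← Nat.cast_mul, Nat.cast_le]
  refine card_le_mul_card_image_of_maps_to (f := f) (fun x hx => (hf x hx).1) _ ?_
  intro G' _
  have hsub : {x ∈ Ω | f x = G'} ⊆
      ({p ∈ cand H S0 (t + 2 * (S0 + R0 * (1 + D) ^ k + 1)) G' | p.1.card ≤ S0} :
        Finset (Finset (Fin n) × Fin n)).biUnion fun p => (pre D k r G' p.1).image fun G =>
          (⟨G, p.1, p.2⟩ : Σ _ : SimpleGraph (Fin n), Σ _ : Finset (Fin n), Fin n) := by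
    rintro ⟨G, F, y⟩ hx
    rw [mem_filter] at hx
    obtain ⟨hx, rfl⟩ := hx
    obtain ⟨-, h1, h2, h3⟩ := hf _ hx
    rw [mem_biUnion]
    exact ⟨(F, y), mem_filter.2 ⟨h1, h3⟩, mem_image.2 ⟨G, h2, rfl⟩⟩
  refine (card_le_card hsub).trans ?_
  refine (card_biUnion_le_card_mul _ _ _ fun p hp => card_image_le.trans
    (pre_card hr G' (mem_filter.1 hp).2)).trans ?_
  exact Nat.mul_le_mul_right _ ((card_filter_le _ _).trans (cand_card H _ _ _))

end Count

/-! ### The proportion of good graphs -/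

/-- The bound in terms of cardinalities: a positive proportion of the planar graphs is good. -/
theorem proportion {b B : ℝ} (hb : 1 < b) (hB : B < 3) {l : ℕ} {h : Fin l → ℕ}
    (H : ∀ i : Fin l, SimpleGraph (Fin (h i)))
    (hconn : ∀ i, (H i).Connected) (hplanar : ∀ i, IsPlanar (H i)) (t : ℕ) :
    ∃ (C : ℝ) (N : ℕ), 0 < C ∧ ∀ n ≥ N, ∀ m : ℕ, b * n ≤ m → (m : ℝ) ≤ B * n →
      (#{G : SimpleGraph (Fin n) | IsPlanar G ∧ edgeCount G = m} : ℝ) ≤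
        C * #{G : SimpleGraph (Fin n) | (IsPlanar G ∧ edgeCount G = m) ∧
          ∀ i, t ≤ numOrderComponents (H i) G} := by
  obtain ⟨η, hη, hsel⟩ := select hb hB
  obtain ⟨s0, hs0⟩ := exists_nat_gt
    ((3 * (t * ∑ i, h i : ℕ) + (t * ∑ i, edgeCount (H i) : ℕ) + 8 : ℝ) / η)
  set smin := max s0 (t * ∑ i, h i + 4) with hsmin
  have hs1 : t * ∑ i, h i + 4 ≤ smin := le_max_right _ _
  have hs2 : (3 * (t * ∑ i, h i) + t * ∑ i, edgeCount (H i) + 8 : ℝ) ≤ η * smin := by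
    rw [div_lt_iff₀ hη] at hs0
    have h1 : (s0 : ℝ) ≤ smin := by exact_mod_cast le_max_left _ _
    have h2 : η * s0 ≤ η * smin := by gcongr
    push_cast at hs0 ⊢
    linarith
  clear_value smin
  obtain ⟨β0, R0, S0, D, k, N, hβ0, hN⟩ := hsel smin
  set β := min β0 1 with hβdef
  have hβ : 0 < β := lt_min hβ0 one_pos
  have hβ1 : β ≤ 1 := min_le_right _ _
  have hββ : β ≤ β0 := min_le_left _ _
  clear_value β
  set c1 : ℕ := S0 * 2 ^ (l * (t + 2 * (S0 + R0 * (1 + D) ^ k + 1))) with hc1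
  set c2 : ℕ := 2 ^ ((S0 + R0 * (1 + D) ^ k) * (S0 + R0 * (1 + D) ^ k)) with hc2
  have hβR : 0 < β ^ R0 := pow_pos hβ _
  set Cr : ℝ := 2 * (c1 * c2 : ℕ) / β ^ R0 with hCr
  have hCr0 : 0 ≤ Cr := by positivity
  refine ⟨(R0 + 1) * Cr + 1, max N (2 * S0 + 1), by positivity, fun n hn m hlo hhi => ?_⟩
  have hnN : N ≤ n := le_trans (le_max_left _ _) hn
  have hnS : 2 * S0 + 1 ≤ n := le_trans (le_max_right _ _) hn
  have hn0 : (0 : ℝ) < n := by exact_mod_cast (by omega : 0 < n)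
  set Good : Finset (SimpleGraph (Fin n)) := {G | (IsPlanar G ∧ edgeCount G = m) ∧
          ∀ i, t ≤ numOrderComponents (H i) G} with hGood
  set P : ℕ → Finset (SimpleGraph (Fin n)) := fun r =>
    {G | (IsPlanar G ∧ edgeCount G = m) ∧ (β * n) ^ r ≤ #{F | Cert D k smin S0 η r G F}} with hP
  have hPr : ∀ r ∈ Finset.range (R0 + 1), ((P r).card : ℝ) ≤ Cr * Good.card := by
    intro r hr
    have hr' : r ≤ R0 := Nat.lt_succ_iff.1 (Finset.mem_range.1 hr)
    have hcount := count_r (n := n) H hconn hplanar (t := t) (D := D) (k := k) (S0 := S0) hr' hs1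
      (by push_cast at hs2 ⊢; exact hs2) hη m ((β * n) ^ r)
    rw [← hc1, ← hc2] at hcount
    change ((P r).card : ℝ) * _ ≤ _ * (Good.card : ℝ) at hcount
    have hhalf : (n : ℝ) ≤ 2 * (n - S0 : ℕ) := by exact_mod_cast (by omega : n ≤ 2 * (n - S0))
    have hnr : 0 < (n : ℝ) ^ r := pow_pos hn0 r
    have hβr : β ^ R0 ≤ β ^ r := pow_le_pow_of_le_one hβ.le hβ1 hr'
    have hP0 : (0 : ℝ) ≤ (P r).card := Nat.cast_nonneg _
    rw [hCr, div_mul_eq_mul_div, le_div_iff₀ hβR]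
    refine le_of_mul_le_mul_right ?_ (mul_pos hnr hn0)
    calc ((P r).card : ℝ) * β ^ R0 * (n ^ r * n)
        ≤ (P r).card * β ^ r * (n ^ r * (2 * (n - S0 : ℕ))) := by gcongr
      _ = 2 * ((P r).card * ((β * n) ^ r * (n - S0 : ℕ))) := by rw [mul_pow]; ring
      _ ≤ 2 * ((n * c1 * (n ^ r * c2) : ℕ) * Good.card) := by
          exact mul_le_mul_of_nonneg_left hcount two_pos.le
      _ = 2 * (c1 * c2 : ℕ) * Good.card * (n ^ r * n) := by push_cast; ring
  have hcover : ({G | IsPlanar G ∧ edgeCount G = m} : Finset (SimpleGraph (Fin n))) ⊆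
      (Finset.range (R0 + 1)).biUnion P := by
    intro G hG
    rw [mem_filter] at hG
    obtain ⟨-, hGp, hGm⟩ := hG
    obtain ⟨r, hr, hcert⟩ := hN n hnN G hGp (by rw [hGm]; exact hlo) (by rw [hGm]; exact hhi)
    rw [mem_biUnion]
    refine ⟨r, Finset.mem_range.2 (Nat.lt_succ_iff.2 hr), ?_⟩
    rw [hP, mem_filter]
    refine ⟨mem_univ _, ⟨hGp, hGm⟩, le_trans ?_ hcert⟩
    exact pow_le_pow_left₀ (mul_nonneg hβ.le hn0.le)
      (mul_le_mul_of_nonneg_right hββ hn0.le) _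
  have hG0 : (0 : ℝ) ≤ Good.card := Nat.cast_nonneg _
  calc (#{G : SimpleGraph (Fin n) | IsPlanar G ∧ edgeCount G = m} : ℝ)
      ≤ ((∑ r ∈ Finset.range (R0 + 1), (P r).card : ℕ) : ℝ) := by
        exact_mod_cast (card_le_card hcover).trans card_biUnion_le
    _ ≤ (Finset.range (R0 + 1)).card • (Cr * Good.card) := by
        rw [Nat.cast_sum]; exact sum_le_card_nsmul _ _ _ hPr
    _ ≤ ((R0 + 1) * Cr + 1) * Good.card := by
        rw [card_range, nsmul_eq_mul]; push_cast; linarith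

end PlanarSwitch

theorem components_lower_bound (b B : ℝ) (hb : 1 < b) (hB : B < 3) (m : ℕ → ℕ)
    (hm : ∀ᶠ n : ℕ in atTop, b * (n : ℝ) ≤ (m n : ℝ) ∧ (m n : ℝ) ≤ B * (n : ℝ))
    (l : ℕ) (h : Fin l → ℕ) (H : ∀ i : Fin l, SimpleGraph (Fin (h i)))
    (hconn : ∀ i, (H i).Connected) (hplanar : ∀ i, IsPlanar (H i))
    (t : ℕ) (ht : 0 < t) :
    ∃ ε : ℝ, 0 < ε ∧ ∃ N : ℕ, ∀ n ≥ N,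
      ε ≤ planarProb n (m n) fun G => ∀ i, t ≤ numOrderComponents (H i) G := by
  classical
  obtain ⟨C, N1, hC, hprop⟩ := PlanarSwitch.proportion hb hB H hconn hplanar t
  obtain ⟨N2, hN2⟩ := eventually_atTop.1 hm
  obtain ⟨N3, hN3⟩ := exists_nat_gt (9 / (3 - B))
  refine ⟨1 / C, by positivity, max (max N1 N2) (max N3 4), fun n hn => ?_⟩
  have hn1 : N1 ≤ n := le_trans (le_trans (le_max_left _ _) (le_max_left _ _)) hn
  have hn2 : N2 ≤ n := le_trans (le_trans (le_max_right _ _) (le_max_left _ _)) hn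
  have hn3 : N3 ≤ n := le_trans (le_trans (le_max_left _ _) (le_max_right _ _)) hn
  have hn4 : 4 ≤ n := le_trans (le_trans (le_max_right _ _) (le_max_right _ _)) hn
  obtain ⟨hlo, hhi⟩ := hN2 n hn2
  have hkey := hprop n hn1 (m n) hlo hhi
  -- the numerator and the denominator as cardinalities of finite sets of graphs
  have e1 : (planarSet n (m n)).ncard =
      (Finset.univ.filter fun G : SimpleGraph (Fin n) => IsPlanar G ∧ edgeCount G = m n).card := by
    rw [← Set.ncard_coe_finset]; congr 1; ext G; simp [planarSet]
  have e2 : {G ∈ planarSet n (m n) | ∀ i, t ≤ numOrderComponents (H i) G}.ncard =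
      (Finset.univ.filter fun G : SimpleGraph (Fin n) => (IsPlanar G ∧ edgeCount G = m n) ∧
        ∀ i, t ≤ numOrderComponents (H i) G).card := by
    rw [← Set.ncard_coe_finset]; congr 1; ext G; simp [planarSet]
  have hpos : 0 < (planarSet n (m n)).ncard := by
    rw [Set.ncard_pos (Set.toFinite _)]
    have hn1' : (n : ℝ) ≤ m n := by
      have : (0 : ℝ) ≤ n := Nat.cast_nonneg _
      nlinarith
    have hn3' : ((m n + 9 : ℕ) : ℝ) ≤ (3 * n : ℕ) := by
      rw [div_lt_iff₀ (by linarith)] at hN3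
      have : (N3 : ℝ) ≤ n := by exact_mod_cast hn3
      push_cast
      nlinarith
    have h1 : n ≤ m n := by exact_mod_cast hn1'
    have h2 : m n + 9 ≤ 3 * n := by exact_mod_cast hn3'
    obtain ⟨G, hG, hGm, -⟩ := PlanarSwitch.exists_blob n (m n) hn4 (by omega) h2
    exact ⟨G, hG, hGm⟩
  unfold planarProb
  rw [le_div_iff₀ (by exact_mod_cast hpos), div_mul_eq_mul_div, one_mul, div_le_iff₀' hC]
  rw [e1, e2]
  convert hkey using 4
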